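/- Let n be an integer with ω(n) ≥ 166000. Then σ(n)/n ≤ n/φ(n) ≤ e^γ · log(log τ(n)) + e^γ · log(log(log τ(n))) + 0.94. -/

import Mathlib

/-!
Write `n/φ(n) = exp (∑_{p ∣ n} -log (1 - 1/p))` and let `k = ω(n)`. Since `τ(n) ≥ 2 ^ k`, it is
enough to bound that sum over an arbitrary set of `k` primes in terms of `k`. The left inequality
is the elementary `σ(n) φ(n) ≤ n²` (`sum_divisors_mul_totient_le`).

Choose `l ≥ 117/8` with `k = e^l (1/l + 1/l² + 2/l³ + 6/l⁴)`, a truncated expansion of `li(e^l)`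
(`exists_log_param`), and put `x = e^l`. The heart of the proof is `sum_eulerLog_bound`: for every
set of `k` primes the sum is at most `γ + log l + 0.0096/l`. Comparison with the primes up to `x`
(`sum_eulerLog_le`) shows that the sum is at most
`∑_{p ≤ x} -log (1 - 1/p) - π(x)/x + k/x + O(k/x²)`. In this combination the boundary term
`(ψ(x) - x)/(x log x)` cancels, so no strong prime number theorem is needed, only

* an explicit lower bound for `∑_{x < p ≤ X} 1/p + π(x)/x` (`prime_sum_lower`), and
* the upper half of Mertens' third theorem for a sequence of `X → ∞` (`exists_mertens_le`), which
  comes from the simple pole of the zeta function at `1`.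

By partial summation, the lower bound involves `ψ` only through its logarithmic average
`∫₁ˣ ψ(t) t⁻² dt`, that is, through `∑_{n ≤ x} Λ(n) (x/n - 1) = x (log x - 1 - γ) + ⋯`. This sum is
bounded as Chebyshev bounded `ψ`. For a finitely supported `c` with `∑ c(d)/d = 0`, put
`W(y) = ∑_{m ≤ y} (c * 1)(m) (y/m - 1)`. If `W(y) ≥ s (y - 1)` for all `y ≥ 1`, then
`c * log = Λ * (c * 1)` and `Λ ≥ 0` give
`s ∑_{n ≤ x} Λ(n) (x/n - 1) ≤ ∑_{n ≤ x} (c * log)(n) (x/n - 1)`, whose right side is explicit. Two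
such `c` supported on `1, …, 50`, one with `s > 0` and one with `s < 0`, replace the constant
`1 + γ = 1.5772…` by `1.57537` and `1.5791` (`hinge_Lambda_upper`, `hinge_Lambda_lower`). The
inequality `W(y) ≥ s (y - 1)` is checked by kernel computation for `y < 5201` and follows from the
asymptotics of `∑_{m ≤ z} (z/m - 1)` beyond.

With these inputs the theorem reduces to an inequality in `l` alone, `final_ineq`.
-/

open Real

/-- The sum of the divisors of `n`. -/
def sigmaFn (n : ℕ) : ℕ := ∑ d ∈ n.divisors, d

/-- The number of divisors of `n`. -/
def tauFn (n : ℕ) : ℕ := n.divisors.card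


namespace TotientBound

open Finset MeasureTheory Set
open scoped ArithmeticFunction.zeta ArithmeticFunction.vonMangoldt

/-! ### The hinge transform -/

/-- The hinge transform `∑_{n ≤ x} a(n) (x/n - 1)` of an arithmetic sequence; up to the factor `x`
it is `∫₁ˣ A(t) t⁻² dt`, where `A` is the summatory function of `a`. -/
noncomputable def hinge (a : ℕ → ℝ) (x : ℝ) : ℝ :=
  ∑ n ∈ Finset.Ioc 0 ⌊x⌋₊, a n * (x / n - 1)

/-- The summatory function `∑_{n ≤ x} a(n)`. -/
noncomputable def psum (a : ℕ → ℝ) (x : ℝ) : ℝ := ∑ n ∈ Finset.Ioc 0 ⌊x⌋₊, a n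

lemma hinge_eq_max (a : ℕ → ℝ) {x : ℝ} {N : ℕ} (hx : 0 ≤ x) (hN : ⌊x⌋₊ ≤ N) :
    hinge a x = ∑ n ∈ Finset.Ioc 0 N, a n * max (x / n - 1) 0 := by
  unfold hinge
  rw [← Finset.sum_subset (Finset.Ioc_subset_Ioc_right hN)]
  · refine Finset.sum_congr rfl fun n hn => ?_
    rw [Finset.mem_Ioc] at hn
    have h1 : (n : ℝ) ≤ x := (Nat.le_floor_iff hx).1 hn.2
    have h0 : (0 : ℝ) < n := by exact_mod_cast hn.1
    rw [max_eq_left]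
    rw [sub_nonneg, le_div_iff₀ h0]; linarith
  · intro n hn hn'
    rw [Finset.mem_Ioc] at hn hn'
    have h1 : x < n := by
      rw [← Nat.floor_lt hx]; by_contra h; exact hn' ⟨hn.1, not_lt.1 h⟩
    have h0 : (0 : ℝ) < n := by exact_mod_cast hn.1
    rw [max_eq_right, mul_zero]
    rw [sub_nonpos, div_le_iff₀ h0]; linarith

lemma hinge_eq_of_floor_le_succ (a : ℕ → ℝ) {x : ℝ} {N : ℕ} (h1 : (N : ℝ) ≤ x)
    (h2 : x ≤ N + 1) :
    hinge a x = x * (∑ n ∈ Finset.Ioc 0 N, a n / n) - ∑ n ∈ Finset.Ioc 0 N, a n := by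
  have hx : 0 ≤ x := le_trans (Nat.cast_nonneg _) h1
  have h3 : ⌊x⌋₊ ≤ N + 1 := by
    have := Nat.floor_mono h2
    rwa [show (N : ℝ) + 1 = ((N + 1 : ℕ) : ℝ) by push_cast; ring, Nat.floor_natCast] at this
  rw [hinge_eq_max a hx h3, Finset.sum_Ioc_succ_top (Nat.zero_le _), Finset.mul_sum,
    ← Finset.sum_sub_distrib]
  have : max (x / ((N + 1 : ℕ) : ℝ) - 1) 0 = 0 := by
    rw [max_eq_right]
    rw [sub_nonpos, div_le_iff₀ (by positivity)]; push_cast; linarith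
  rw [this, mul_zero, add_zero]
  refine Finset.sum_congr rfl fun n hn => ?_
  rw [Finset.mem_Ioc] at hn
  have h0 : (0 : ℝ) < n := by exact_mod_cast hn.1
  have h4 : (n : ℝ) ≤ x := le_trans (by exact_mod_cast hn.2) h1
  rw [max_eq_left]
  · field_simp
  · rw [sub_nonneg, le_div_iff₀ h0]; linarith

lemma continuousOn_hinge (a : ℕ → ℝ) : ContinuousOn (hinge a) (Set.Ici 0) := by
  intro x hx
  have hx0 : (0 : ℝ) ≤ x := hx
  have hc : ContinuousWithinAt
      (fun t : ℝ => ∑ n ∈ Finset.Ioc 0 (⌊x⌋₊ + 1), a n * max (t / n - 1) 0) (Set.Ici 0) x := by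
    apply Continuous.continuousWithinAt
    fun_prop
  refine hc.congr_of_eventuallyEq ?_ (hinge_eq_max a hx0 (Nat.le_succ _))
  have : ∀ᶠ t in nhdsWithin x (Set.Ici 0), t < (⌊x⌋₊ : ℝ) + 1 :=
    mem_nhdsWithin_of_mem_nhds (Iio_mem_nhds (Nat.lt_floor_add_one x))
  filter_upwards [this, self_mem_nhdsWithin] with t ht ht0
  refine hinge_eq_max a ht0 ?_
  have : ⌊t⌋₊ < ⌊x⌋₊ + 1 := by
    rw [Nat.floor_lt ht0]; push_cast; exact ht
  exact this.le

/-- Only a right derivative: `psum a` jumps at the integers. -/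
lemma hasDerivWithinAt_hinge_div (a : ℕ → ℝ) {x : ℝ} (hx : 0 < x) :
    HasDerivWithinAt (fun t => hinge a t / t) (psum a x / x ^ 2) (Set.Ioi x) x := by
  have h1 : HasDerivAt (fun t : ℝ => (∑ n ∈ Finset.Ioc 0 ⌊x⌋₊, a n / n) - psum a x * t⁻¹)
      (psum a x / x ^ 2) x := by
    have := ((hasDerivAt_inv hx.ne').const_mul (psum a x)).const_sub
      (∑ n ∈ Finset.Ioc 0 ⌊x⌋₊, a n / n)
    exact this.congr_deriv (by ring)
  have key : ∀ t, x ≤ t → t < (⌊x⌋₊ : ℝ) + 1 → hinge a t / t =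
      (∑ n ∈ Finset.Ioc 0 ⌊x⌋₊, a n / n) - psum a x * t⁻¹ := by
    intro t ht1 ht2
    have ht : 0 < t := hx.trans_le ht1
    rw [hinge_eq_of_floor_le_succ a ((Nat.floor_le hx.le).trans ht1) ht2.le, psum]
    field_simp
  refine h1.hasDerivWithinAt.congr_of_eventuallyEq ?_ (key x le_rfl (Nat.lt_floor_add_one x))
  have : ∀ᶠ t in nhdsWithin x (Set.Ioi x), t < (⌊x⌋₊ : ℝ) + 1 :=
    mem_nhdsWithin_of_mem_nhds (Iio_mem_nhds (Nat.lt_floor_add_one x))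
  filter_upwards [this, self_mem_nhdsWithin] with t ht ht0
  exact key t (le_of_lt ht0) ht

lemma psum_mono {a : ℕ → ℝ} (ha : ∀ n, 0 ≤ a n) : Monotone (psum a) := fun _ _ h =>
  Finset.sum_le_sum_of_subset_of_nonneg
    (Finset.Ioc_subset_Ioc_right (Nat.floor_mono h)) fun n _ _ => ha n

lemma intervalIntegrable_psum_mul {a : ℕ → ℝ} (ha : ∀ n, 0 ≤ a n) {c d : ℝ} {g : ℝ → ℝ}
    (hg : ContinuousOn g (Set.uIcc c d)) :
    IntervalIntegrable (fun t => psum a t * g t) volume c d :=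
  ((psum_mono ha).intervalIntegrable).mul_continuousOn hg

lemma continuousOn_hinge_div (a : ℕ → ℝ) {c d : ℝ} (hc : 0 < c) :
    ContinuousOn (fun t => hinge a t / t) (Set.Icc c d) := by
  refine ContinuousOn.div ((continuousOn_hinge a).mono ?_) continuousOn_id ?_
  · intro t ht; exact hc.le.trans ht.1
  · intro t ht; exact (hc.trans_le ht.1).ne'

lemma integral_psum {a : ℕ → ℝ} (ha : ∀ n, 0 ≤ a n) {c d : ℝ} (hc : 0 < c) (hcd : c ≤ d) :
    ∫ t in c..d, psum a t / t ^ 2 = hinge a d / d - hinge a c / c := by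
  refine intervalIntegral.integral_eq_sub_of_hasDeriv_right_of_le hcd
    (continuousOn_hinge_div a hc)
    (fun t ht => hasDerivWithinAt_hinge_div a (hc.trans ht.1)) ?_
  simp only [div_eq_mul_inv]
  refine intervalIntegrable_psum_mul ha ?_
  rw [Set.uIcc_of_le hcd]
  refine ContinuousOn.inv₀ (by fun_prop) fun t ht => ?_
  have := hc.trans_le ht.1
  positivity

/-- Integration by parts against the right derivative `A(t)/t²` of `hinge a t / t`. -/
lemma integral_psum_mul {a : ℕ → ℝ} (ha : ∀ n, 0 ≤ a n) {c d : ℝ} (hc : 0 < c) (hcd : c ≤ d)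
    {g g' : ℝ → ℝ} (hg : ∀ t ∈ Set.Icc c d, HasDerivAt g (g' t) t)
    (hg' : ContinuousOn g' (Set.Icc c d)) :
    ∫ t in c..d, psum a t / t ^ 2 * g t =
      hinge a d / d * g d - hinge a c / c * g c - ∫ t in c..d, hinge a t / t * g' t := by
  have h := intervalIntegral.integral_mul_deriv_eq_deriv_mul_of_hasDeriv_right
    (a := c) (b := d) (u := fun t => hinge a t / t) (v := g)
    (u' := fun t => psum a t / t ^ 2) (v' := g')
    (by rw [Set.uIcc_of_le hcd]; exact continuousOn_hinge_div a hc)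
    (by rw [Set.uIcc_of_le hcd]; exact fun t ht => (hg t ht).continuousAt.continuousWithinAt)
    (by
      intro t ht; rw [min_eq_left hcd, max_eq_right hcd] at ht
      exact hasDerivWithinAt_hinge_div a (hc.trans ht.1))
    (by
      intro t ht; rw [min_eq_left hcd, max_eq_right hcd] at ht
      exact (hg t ⟨ht.1.le, ht.2.le⟩).hasDerivWithinAt)
    (by
      simp only [div_eq_mul_inv]
      refine intervalIntegrable_psum_mul ha ?_
      rw [Set.uIcc_of_le hcd]
      refine ContinuousOn.inv₀ (by fun_prop) fun t ht => ?_
      have := hc.trans_le ht.1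
      positivity)
    (by apply ContinuousOn.intervalIntegrable; rwa [Set.uIcc_of_le hcd])
  linarith

lemma sum_conv (f g : ArithmeticFunction ℝ) (w : ℕ → ℝ) (N : ℕ) :
    ∑ n ∈ Finset.Ioc 0 N, (f * g) n * w n =
      ∑ d ∈ Finset.Ioc 0 N, f d * ∑ m ∈ Finset.Ioc 0 (N / d), g m * w (d * m) := by
  have h1 : ∑ n ∈ Finset.Ioc 0 N, (f * g) n * w n =
      ∑ x ∈ Finset.Ioc 0 N ×ˢ Finset.Ioc 0 N with x.1 * x.2 ≤ N,
        f x.1 * g x.2 * w (x.1 * x.2) := by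
    trans ∑ n ∈ Finset.Ioc 0 N, ∑ x ∈ Finset.Ioc 0 N ×ˢ Finset.Ioc 0 N with x.1 * x.2 = n,
        f x.1 * g x.2 * w (x.1 * x.2)
    · refine Finset.sum_congr rfl fun n hn => ?_
      simp only [Finset.mem_Ioc] at hn
      rw [ArithmeticFunction.mul_apply, Nat.divisorsAntidiagonal_eq_prod_filter_of_le hn.1.ne' hn.2,
        Finset.sum_mul]
      refine Finset.sum_congr rfl fun x hx => ?_
      rw [(Finset.mem_filter.1 hx).2]
    · simp_rw [Finset.sum_filter]
      rw [Finset.sum_comm]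
      exact Finset.sum_congr rfl fun _ _ => (by simp_all)
  rw [h1, Finset.sum_filter, Finset.sum_product]
  refine Finset.sum_congr rfl fun n hn => ?_
  rw [← Finset.sum_filter, Finset.mul_sum]
  refine Finset.sum_congr ?_ fun m _ => by ring
  ext m
  simp only [Finset.mem_filter, Finset.mem_Ioc] at hn ⊢
  rw [Nat.le_div_iff_mul_le hn.1, mul_comm m n]
  constructor
  · rintro ⟨⟨h, _⟩, h'⟩; exact ⟨h, h'⟩
  · rintro ⟨h, h'⟩; exact ⟨⟨h, (Nat.le_mul_of_pos_left m hn.1).trans h'⟩, h'⟩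

/-- The hinge transform turns Dirichlet convolution into a sum over dilates. -/
lemma hinge_conv (f g : ArithmeticFunction ℝ) (x : ℝ) :
    hinge (fun n => (f * g) n) x =
      ∑ d ∈ Finset.Ioc 0 ⌊x⌋₊, f d * hinge (fun n => g n) (x / d) := by
  unfold hinge
  rw [sum_conv f g (fun n => x / n - 1)]
  refine Finset.sum_congr rfl fun d _ => ?_
  rw [Nat.floor_div_natCast]
  congr 1
  refine Finset.sum_congr rfl fun m _ => ?_
  push_cast
  rw [div_div]

lemma hinge_of_lt_one (a : ℕ → ℝ) {x : ℝ} (hx : x < 1) : hinge a x = 0 := by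
  unfold hinge
  rw [Nat.floor_eq_zero.2 hx]; simp

lemma hinge_mono_coeff {a b : ℕ → ℝ} {x : ℝ} (hx : 0 ≤ x) (h : ∀ n, a n ≤ b n) :
    hinge a x ≤ hinge b x := by
  rw [hinge_eq_max a hx le_rfl, hinge_eq_max b hx le_rfl]
  exact Finset.sum_le_sum fun n _ => mul_le_mul_of_nonneg_right (h n) (le_max_right _ _)

lemma hinge_nonneg {a : ℕ → ℝ} {x : ℝ} (hx : 0 ≤ x) (h : ∀ n, 0 ≤ a n) :
    0 ≤ hinge a x := by
  rw [hinge_eq_max a hx le_rfl]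
  exact Finset.sum_nonneg fun n _ => mul_nonneg (h n) (le_max_right _ _)

/-! ### The hinge sum of the logarithm -/

lemma log_succ_sub_le {x : ℝ} (hx : 0 < x) : log (x + 1) - log x ≤ 1 / x := by
  rw [← log_div (by positivity) hx.ne']
  have := log_le_sub_one_of_pos (show 0 < (x + 1) / x by positivity)
  have h : (x + 1) / x - 1 = 1 / x := by field_simp; ring
  linarith

lemma le_log_succ_sub {x : ℝ} (hx : 0 < x) : 1 / (x + 1) ≤ log (x + 1) - log x := by
  have := log_le_sub_one_of_pos (show 0 < x / (x + 1) by positivity)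
  rw [log_div hx.ne' (by positivity)] at this
  have h : x / (x + 1) - 1 = - (1 / (x + 1)) := by field_simp; ring
  linarith

lemma sum_log_lower (N : ℕ) :
    N * log (N + 1) - N ≤ ∑ n ∈ Finset.Ioc 0 N, log (n : ℝ) := by
  induction N with
  | zero => simp
  | succ N ih =>
    rw [Finset.sum_Ioc_succ_top (Nat.zero_le _)]
    have h := log_succ_sub_le (x := (N : ℝ) + 1) (by positivity)
    have h2 : ((N : ℝ) + 1) * (log (N + 1 + 1) - log (N + 1)) ≤ 1 := by
      have := mul_le_mul_of_nonneg_left h (show (0 : ℝ) ≤ N + 1 by positivity)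
      rwa [mul_one_div_cancel (by positivity)] at this
    push_cast
    nlinarith

lemma sum_log_upper {N : ℕ} (hN : 1 ≤ N) :
    ∑ n ∈ Finset.Ioc 0 N, log (n : ℝ) ≤ (N + 1) * log N - N + 1 := by
  induction N, hN using Nat.le_induction with
  | base => simp
  | succ N hN ih =>
    rw [Finset.sum_Ioc_succ_top (Nat.zero_le _)]
    have hN0 : (0 : ℝ) < N := by exact_mod_cast hN
    have h := le_log_succ_sub hN0
    have h2 : 1 ≤ ((N : ℝ) + 1) * (log (N + 1) - log N) := by
      have := mul_le_mul_of_nonneg_left h (show (0 : ℝ) ≤ N + 1 by positivity)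
      rwa [mul_one_div_cancel (by positivity)] at this
    push_cast
    nlinarith

lemma psum_log_lower {t : ℝ} (ht : 1 ≤ t) :
    t * log t - t - log t ≤ psum (fun n => log n) t := by
  have h := sum_log_lower ⌊t⌋₊
  have h1 := Nat.lt_floor_add_one t
  have h2 : log t ≤ log (⌊t⌋₊ + 1) := log_le_log (by linarith) h1.le
  have h0 := log_nonneg ht
  unfold psum
  have h3 : (0 : ℝ) ≤ ⌊t⌋₊ := Nat.cast_nonneg _
  have h4 := mul_le_mul_of_nonneg_left h2 h3
  have h5 := mul_le_mul_of_nonneg_right (show t - 1 ≤ ⌊t⌋₊ by linarith) h0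
  have h6 := Nat.floor_le (show 0 ≤ t by linarith)
  beta_reduce
  linarith

lemma psum_log_upper {t : ℝ} (ht : 1 ≤ t) :
    psum (fun n => log n) t ≤ t * log t - t + log t + 1 := by
  have hN : 1 ≤ ⌊t⌋₊ := (Nat.one_le_floor_iff t).2 ht
  have h := sum_log_upper hN
  have h1 := Nat.lt_floor_add_one t
  have h4 := Nat.floor_le (show 0 ≤ t by linarith)
  unfold psum
  have h3 : (1 : ℝ) ≤ ⌊t⌋₊ := by exact_mod_cast hN
  set N : ℝ := (⌊t⌋₊ : ℝ)
  have h5 := log_le_sub_one_of_pos (show 0 < N / t by positivity)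
  rw [log_div (by positivity) (by positivity)] at h5
  have h6 : 0 ≤ log t - log N := sub_nonneg.2 (log_le_log (by linarith) h4)
  have h7 : t * (N / t) = N := by field_simp
  have h0 := log_nonneg ht
  nlinarith

lemma integral_of_deriv {c d : ℝ} (hcd : c ≤ d) {G G' : ℝ → ℝ}
    (hG : ∀ t ∈ Set.Icc c d, HasDerivAt G (G' t) t) (hG' : ContinuousOn G' (Set.Icc c d)) :
    ∫ t in c..d, G' t = G d - G c := by
  refine intervalIntegral.integral_eq_sub_of_hasDerivAt (fun t ht => hG t ?_) ?_
  · rwa [Set.uIcc_of_le hcd] at ht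
  · apply ContinuousOn.intervalIntegrable; rwa [Set.uIcc_of_le hcd]

lemma psum_div_sq_integrable {a : ℕ → ℝ} (ha : ∀ n, 0 ≤ a n) {c d : ℝ} (hc : 0 < c)
    (hcd : c ≤ d) : IntervalIntegrable (fun t => psum a t / t ^ 2) volume c d := by
  simp only [div_eq_mul_inv]
  refine intervalIntegrable_psum_mul ha ?_
  rw [Set.uIcc_of_le hcd]
  refine ContinuousOn.inv₀ (by fun_prop) fun t ht => ?_
  have := hc.trans_le ht.1
  positivity

lemma log_natCast_nonneg' (n : ℕ) : 0 ≤ log (n : ℝ) := log_natCast_nonneg n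

/-- `U(z)/z` for `U = hinge log` is `½ log² z - log z` plus a constant up to `O(log z / z)`. -/
lemma exists_hinge_log_bound : ∃ c₀ : ℝ, ∀ z : ℝ, 1 ≤ z →
    |hinge (fun n => log n) z / z - (log z ^ 2 / 2 - log z + c₀)| ≤ (log z + 2) / z := by
  set T : ℝ → ℝ := fun z => hinge (fun n => log n) z / z with hT
  have hIntg : ∀ c d : ℝ, 1 ≤ c → c ≤ d → ContinuousOn (fun t : ℝ => log t) (Set.Icc c d) := by
    intro c d hc _ t ht
    exact (continuousAt_log (by linarith [ht.1])).continuousWithinAt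
  -- `T` minus the antiderivative of the lower bound for its derivative increases
  have hinc : ∀ c d : ℝ, 1 ≤ c → c ≤ d →
      T c - (log c ^ 2 / 2 - log c + (log c + 1) / c) ≤
      T d - (log d ^ 2 / 2 - log d + (log d + 1) / d) := by
    intro c d hc hcd
    have h1 := integral_psum log_natCast_nonneg' (show 0 < c by linarith) hcd
    have hcont : ContinuousOn (fun t : ℝ => log t / t - 1 / t - log t / t ^ 2)
        (Set.Icc c d) := by
      have := hIntg c d hc hcd
      have h0 : ∀ t ∈ Set.Icc c d, t ≠ 0 := fun t ht => by linarith [ht.1]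
      have h02 : ∀ t ∈ Set.Icc c d, t ^ 2 ≠ 0 := fun t ht => pow_ne_zero 2 (h0 t ht)
      fun_prop (disch := assumption)
    have h2 : ∫ t in c..d, (log t / t - 1 / t - log t / t ^ 2) =
        (log d ^ 2 / 2 - log d + (log d + 1) / d) - (log c ^ 2 / 2 - log c + (log c + 1) / c) := by
      refine integral_of_deriv (G := fun t => log t ^ 2 / 2 - log t + (log t + 1) / t) hcd
        (fun t ht => ?_) hcont
      have ht0 : t ≠ 0 := by linarith [ht.1]
      have hl := hasDerivAt_log ht0
      refine ((((hl.pow 2).div_const 2).sub hl).add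
        ((hl.add_const 1).div (hasDerivAt_id t) ht0)).congr_deriv ?_
      simp; field_simp; ring
    have h3 : ∫ t in c..d, (log t / t - 1 / t - log t / t ^ 2) ≤
        ∫ t in c..d, psum (fun n => log n) t / t ^ 2 := by
      refine intervalIntegral.integral_mono_on hcd ?_
        (psum_div_sq_integrable log_natCast_nonneg' (by linarith) hcd) fun t ht => ?_
      · apply ContinuousOn.intervalIntegrable; rwa [Set.uIcc_of_le hcd]
      · have ht0 : 0 < t := by linarith [ht.1]
        rw [le_div_iff₀ (by positivity)]
        refine le_trans (le_of_eq ?_) (psum_log_lower (hc.trans ht.1))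
        field_simp
    simp only [hT]; linarith
  have hdec : ∀ c d : ℝ, 1 ≤ c → c ≤ d →
      T d - (log d ^ 2 / 2 - log d - (log d + 2) / d) ≤
      T c - (log c ^ 2 / 2 - log c - (log c + 2) / c) := by
    intro c d hc hcd
    have h1 := integral_psum log_natCast_nonneg' (show 0 < c by linarith) hcd
    have hcont : ContinuousOn (fun t : ℝ => log t / t - 1 / t + (log t + 1) / t ^ 2)
        (Set.Icc c d) := by
      have := hIntg c d hc hcd
      have h0 : ∀ t ∈ Set.Icc c d, t ≠ 0 := fun t ht => by linarith [ht.1]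
      have h02 : ∀ t ∈ Set.Icc c d, t ^ 2 ≠ 0 := fun t ht => pow_ne_zero 2 (h0 t ht)
      fun_prop (disch := assumption)
    have h2 : ∫ t in c..d, (log t / t - 1 / t + (log t + 1) / t ^ 2) =
        (log d ^ 2 / 2 - log d - (log d + 2) / d) - (log c ^ 2 / 2 - log c - (log c + 2) / c) := by
      refine integral_of_deriv (G := fun t => log t ^ 2 / 2 - log t - (log t + 2) / t) hcd
        (fun t ht => ?_) hcont
      have ht0 : t ≠ 0 := by linarith [ht.1]
      have hl := hasDerivAt_log ht0
      refine ((((hl.pow 2).div_const 2).sub hl).sub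
        ((hl.add_const 2).div (hasDerivAt_id t) ht0)).congr_deriv ?_
      simp; field_simp; ring
    have h3 : ∫ t in c..d, psum (fun n => log n) t / t ^ 2 ≤
        ∫ t in c..d, (log t / t - 1 / t + (log t + 1) / t ^ 2) := by
      refine intervalIntegral.integral_mono_on hcd
        (psum_div_sq_integrable log_natCast_nonneg' (by linarith) hcd) ?_ fun t ht => ?_
      · apply ContinuousOn.intervalIntegrable; rwa [Set.uIcc_of_le hcd]
      · have ht0 : 0 < t := by linarith [ht.1]
        rw [div_le_iff₀ (by positivity)]
        refine (psum_log_upper (hc.trans ht.1)).trans (le_of_eq ?_)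
        field_simp; ring
    simp only [hT]; linarith
  -- the increasing and the decreasing functions squeeze a common limit `c₀`
  set P : ℝ → ℝ := fun z => T z - (log z ^ 2 / 2 - log z + (log z + 1) / z) with hP
  set M : ℝ → ℝ := fun z => T z - (log z ^ 2 / 2 - log z - (log z + 2) / z) with hM
  have hPM : ∀ z, 1 ≤ z → P z ≤ M z := by
    intro z hz
    have h0 := log_nonneg hz
    have h1 : 0 ≤ (log z + 1) / z := by positivity
    have h2 : 0 ≤ (log z + 2) / z := by positivity
    simp only [hP, hM]; linarith
  have hcross : ∀ y z, 1 ≤ y → 1 ≤ z → P y ≤ M z := by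
    intro y z hy hz
    rcases le_total y z with h | h
    · exact (hinc y z hy h).trans (hPM z hz)
    · exact (hPM y hy).trans (hdec z y hz h)
  have hbdd : BddAbove (P '' Set.Ici 1) := ⟨M 1, by
    rintro _ ⟨y, hy, rfl⟩; exact hcross y 1 hy le_rfl⟩
  refine ⟨sSup (P '' Set.Ici 1), fun z hz => ?_⟩
  have h1 : P z ≤ sSup (P '' Set.Ici 1) := le_csSup hbdd ⟨z, hz, rfl⟩
  have h2 : sSup (P '' Set.Ici 1) ≤ M z := csSup_le ⟨P 1, 1, le_refl (1 : ℝ), rfl⟩ (by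
    rintro _ ⟨y, hy, rfl⟩; exact hcross y z hy hz)
  have h3 : (log z + 1) / z ≤ (log z + 2) / z := by gcongr; norm_num
  simp only [hP, hM] at h1 h2
  rw [abs_le]; constructor <;> linarith

/-! ### Harmonic numbers and the hinge sum of `ζ` -/

lemma log_one_add_inv_upper {a : ℝ} (ha : 0 < a) :
    log (1 + a⁻¹) ≤ (1 / a + 1 / (a + 1)) / 2 := by
  have h := Real.hasSum_log_one_add_inv ha
  set v : ℝ := 1 / (2 * a + 1) with hv
  have hv0 : 0 < v := by positivity
  have hv1 : v < 1 := by rw [hv, div_lt_one (by positivity)]; linarith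
  have hg : HasSum (fun k : ℕ => 2 * v * (v ^ 2) ^ k) (2 * v * (1 - v ^ 2)⁻¹) :=
    (hasSum_geometric_of_lt_one (by positivity) (by nlinarith)).mul_left _
  have h2 := hasSum_le (fun k : ℕ => ?_) h hg
  · refine h2.trans (le_of_eq ?_)
    have h3 : 1 - v ^ 2 = 4 * a * (a + 1) / (2 * a + 1) ^ 2 := by
      rw [hv]; field_simp; ring
    rw [h3, hv]; field_simp; ring
  · have h3 : v ^ (2 * k + 1) = v * (v ^ 2) ^ k := by rw [pow_succ, pow_mul]; ring
    rw [h3]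
    have h4 : 1 / (2 * (k : ℝ) + 1) ≤ 1 := by
      rw [div_le_one (by positivity)]; have : (0 : ℝ) ≤ k := Nat.cast_nonneg k
      linarith
    have h5 : 0 ≤ v * (v ^ 2) ^ k := by positivity
    nlinarith

lemma log_one_add_inv_lower {a : ℝ} (ha : 0 < a) :
    (1 / a + 1 / (a + 1)) / 2 - (1 / a ^ 2 - 1 / (a + 1) ^ 2) / 12 ≤ log (1 + a⁻¹) := by
  have h := Real.hasSum_log_one_add_inv ha
  have h2 := sum_le_hasSum (Finset.range 2) (fun k _ => by positivity) h
  refine le_trans ?_ h2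
  simp only [Finset.sum_range_succ, Finset.sum_range_zero]
  norm_num
  rw [← sub_nonneg]
  have : 2 * (2 * a + 1)⁻¹ + 2 / 3 * ((2 * a + 1) ^ 3)⁻¹ + ((a ^ 2)⁻¹ - ((a + 1) ^ 2)⁻¹) / 12 -
      (a⁻¹ + (a + 1)⁻¹) / 2 =
      (2 * a * (a + 1) + 1) / (12 * a ^ 2 * (a + 1) ^ 2 * (2 * a + 1) ^ 3) := by
    field_simp; ring
  rw [this]
  positivity

/-- The partial sums of the harmonic series, written with the index set used by `hinge`. -/
noncomputable def Harm (N : ℕ) : ℝ := ∑ n ∈ Finset.Ioc 0 N, 1 / (n : ℝ)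

lemma Harm_succ (N : ℕ) : Harm (N + 1) = Harm N + 1 / ((N : ℝ) + 1) := by
  unfold Harm
  rw [Finset.sum_Ioc_succ_top (Nat.zero_le _)]; push_cast; rfl

lemma Harm_eq (N : ℕ) : Harm N = (harmonic N : ℝ) := by
  induction N with
  | zero => simp [Harm]
  | succ N ih => rw [Harm_succ, harmonic_succ, ih]; push_cast; simp

lemma tendsto_Harm : Filter.Tendsto (fun n : ℕ => Harm n - log n) Filter.atTop
    (nhds eulerMascheroniConstant) := by
  simp_rw [Harm_eq]; exact tendsto_harmonic_sub_log

lemma tendsto_inv_nat_mul (c : ℝ) :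
    Filter.Tendsto (fun n : ℕ => c / (n : ℝ)) Filter.atTop (nhds 0) :=
  tendsto_const_div_atTop_nhds_zero_nat c

lemma log_succ_eq {N : ℕ} (hN : 1 ≤ N) : log ((N : ℝ) + 1) = log N + log (1 + (N : ℝ)⁻¹) := by
  have h0 : (0 : ℝ) < N := by exact_mod_cast hN
  rw [← log_mul h0.ne' (by positivity)]; congr 1; field_simp

lemma Harm_upper {N : ℕ} (hN : 1 ≤ N) :
    Harm N ≤ log N + eulerMascheroniConstant + 1 / (2 * N) := by
  have hmono : Monotone (fun n : ℕ => Harm (n + 1) - log ((n + 1 : ℕ) : ℝ)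
      - (1 / 2) / ((n + 1 : ℕ) : ℝ)) := by
    refine monotone_nat_of_le_succ fun n => ?_
    rw [Harm_succ (n + 1)]
    have h1 := log_one_add_inv_upper (a := ((n + 1 : ℕ) : ℝ)) (by positivity)
    have h2 := log_succ_eq (N := n + 1) (by omega)
    rw [show ((n + 1 + 1 : ℕ) : ℝ) = ((n + 1 : ℕ) : ℝ) + 1 by push_cast; ring, h2]
    have h3 : (1 : ℝ) / 2 / (((n + 1 : ℕ) : ℝ) + 1) = 1 / (((n + 1 : ℕ) : ℝ) + 1) / 2 := by ring
    have h4 : (1 : ℝ) / 2 / (((n + 1 : ℕ) : ℝ)) = 1 / (((n + 1 : ℕ) : ℝ)) / 2 := by ring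
    rw [h3, h4]; linarith
  have hlim := (tendsto_Harm.sub (tendsto_inv_nat_mul (1 / 2))).comp (Filter.tendsto_add_atTop_nat 1)
  have h := hmono.ge_of_tendsto (hlim) (N - 1)
  simp only [Nat.sub_add_cancel hN, sub_zero] at h
  have : (1 : ℝ) / 2 / N = 1 / (2 * N) := by ring
  linarith

lemma Harm_lower {N : ℕ} (hN : 1 ≤ N) :
    log N + eulerMascheroniConstant + 1 / (2 * N) - 1 / (12 * (N : ℝ) ^ 2) ≤ Harm N := by
  have hmono : Antitone (fun n : ℕ => Harm (n + 1) - log ((n + 1 : ℕ) : ℝ)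
      - (1 / 2) / ((n + 1 : ℕ) : ℝ) + (1 / 12) / ((n + 1 : ℕ) : ℝ) * (1 / ((n + 1 : ℕ) : ℝ))) := by
    refine antitone_nat_of_succ_le fun n => ?_
    rw [Harm_succ (n + 1)]
    have h1 := log_one_add_inv_lower (a := ((n + 1 : ℕ) : ℝ)) (by positivity)
    have h2 := log_succ_eq (N := n + 1) (by omega)
    rw [show ((n + 1 + 1 : ℕ) : ℝ) = ((n + 1 : ℕ) : ℝ) + 1 by push_cast; ring, h2]
    set a : ℝ := ((n + 1 : ℕ) : ℝ)
    have h3 : (1 : ℝ) / 2 / (a + 1) = 1 / (a + 1) / 2 := by ring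
    have h4 : (1 : ℝ) / 2 / a = 1 / a / 2 := by ring
    have h5 : (1 : ℝ) / 12 / a * (1 / a) = 1 / a ^ 2 / 12 := by ring
    have h6 : (1 : ℝ) / 12 / (a + 1) * (1 / (a + 1)) = 1 / (a + 1) ^ 2 / 12 := by
      field_simp
    rw [h3, h4, h5, h6]; linarith
  have hlim := ((tendsto_Harm.sub (tendsto_inv_nat_mul (1 / 2))).add
    ((tendsto_inv_nat_mul (1 / 12)).mul (tendsto_inv_nat_mul 1))).comp
    (Filter.tendsto_add_atTop_nat 1)
  have h := hmono.le_of_tendsto (hlim) (N - 1)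
  simp only [Nat.sub_add_cancel hN, sub_zero, mul_zero, add_zero] at h
  have h1 : (1 : ℝ) / 2 / N = 1 / (2 * N) := by ring
  have h2 : (1 : ℝ) / 12 / N * (1 / N) = 1 / (12 * (N : ℝ) ^ 2) := by ring
  linarith

lemma hinge_zeta (z : ℝ) : hinge (fun n => (ζ : ArithmeticFunction ℝ) n) z =
    z * Harm ⌊z⌋₊ - ⌊z⌋₊ := by
  unfold hinge Harm
  rw [Finset.mul_sum]
  have : ((⌊z⌋₊ : ℕ) : ℝ) = ∑ n ∈ Finset.Ioc 0 ⌊z⌋₊, (1 : ℝ) := by simp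
  conv_rhs => rw [this, ← Finset.sum_sub_distrib]
  refine Finset.sum_congr rfl fun n hn => ?_
  have : n ≠ 0 := by have := (Finset.mem_Ioc.1 hn).1; omega
  simp [ArithmeticFunction.natCoe_apply, ArithmeticFunction.zeta_apply, this]
  ring

lemma one_add_mul_log_upper {u : ℝ} (hu : 0 ≤ u) : (1 + u) * log (1 + u) ≤ u + u ^ 2 / 2 := by
  have hmono : MonotoneOn (fun u : ℝ => u + u ^ 2 / 2 - (1 + u) * log (1 + u)) (Set.Ici 0) := by
    refine monotoneOn_of_deriv_nonneg (convex_Ici 0) ?_ ?_ ?_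
    · intro t ht
      have : (1 : ℝ) + t ≠ 0 := by have : (0 : ℝ) ≤ t := ht; positivity
      apply ContinuousAt.continuousWithinAt
      fun_prop (disch := assumption)
    · intro t ht
      rw [interior_Ici] at ht
      have : (1 : ℝ) + t ≠ 0 := by have : (0 : ℝ) < t := ht; positivity
      apply DifferentiableAt.differentiableWithinAt
      fun_prop (disch := assumption)
    · intro t ht
      rw [interior_Ici] at ht
      have ht0 : (0 : ℝ) < t := ht
      have h1 : (1 : ℝ) + t ≠ 0 := by positivity
      have hd : HasDerivAt (fun u : ℝ => u + u ^ 2 / 2 - (1 + u) * log (1 + u))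
          (t - log (1 + t)) t := by
        have ha : HasDerivAt (fun u : ℝ => 1 + u) 1 t := (hasDerivAt_id t).const_add 1
        refine (((hasDerivAt_id t).add (((hasDerivAt_id t).pow 2).div_const 2)).sub
          (ha.mul (ha.log h1))).congr_deriv ?_
        simp; field_simp; ring
      rw [hd.deriv]
      have := log_le_sub_one_of_pos (show 0 < 1 + t by positivity)
      linarith
  have := hmono (show (0 : ℝ) ∈ Set.Ici 0 by simp) (show u ∈ Set.Ici 0 from hu) hu
  simp at this; linarith

lemma le_one_add_mul_log {u : ℝ} (hu : 0 ≤ u) :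
    u + u ^ 2 / 2 - u ^ 3 / 6 ≤ (1 + u) * log (1 + u) := by
  have hlog : ∀ t : ℝ, 0 ≤ t → t - t ^ 2 / 2 ≤ log (1 + t) := by
    intro t ht
    have h1 := Real.le_log_one_add_of_nonneg ht
    refine le_trans ?_ h1
    rw [le_div_iff₀ (by positivity)]
    nlinarith [pow_nonneg ht 3]
  have hmono : MonotoneOn (fun u : ℝ => (1 + u) * log (1 + u) - (u + u ^ 2 / 2 - u ^ 3 / 6))
      (Set.Ici 0) := by
    refine monotoneOn_of_deriv_nonneg (convex_Ici 0) ?_ ?_ ?_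
    · intro t ht
      have : (1 : ℝ) + t ≠ 0 := by have : (0 : ℝ) ≤ t := ht; positivity
      apply ContinuousAt.continuousWithinAt
      fun_prop (disch := assumption)
    · intro t ht
      rw [interior_Ici] at ht
      have : (1 : ℝ) + t ≠ 0 := by have : (0 : ℝ) < t := ht; positivity
      apply DifferentiableAt.differentiableWithinAt
      fun_prop (disch := assumption)
    · intro t ht
      rw [interior_Ici] at ht
      have ht0 : (0 : ℝ) < t := ht
      have h1 : (1 : ℝ) + t ≠ 0 := by positivity
      have hd : HasDerivAt (fun u : ℝ => (1 + u) * log (1 + u) - (u + u ^ 2 / 2 - u ^ 3 / 6))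
          (log (1 + t) - (t - t ^ 2 / 2)) t := by
        have ha : HasDerivAt (fun u : ℝ => 1 + u) 1 t := (hasDerivAt_id t).const_add 1
        refine ((ha.mul (ha.log h1)).sub (((hasDerivAt_id t).add
          (((hasDerivAt_id t).pow 2).div_const 2)).sub
            (((hasDerivAt_id t).pow 3).div_const 6))).congr_deriv ?_
        simp; field_simp; ring
      rw [hd.deriv]
      have := hlog t ht0.le
      linarith
  have := hmono (show (0 : ℝ) ∈ Set.Ici 0 by simp) (show u ∈ Set.Ici 0 from hu) hu
  simp at this; linarith

/-- `h(z) = z (log z + γ - 1) + 1/2 + O(1/z)` for `h = hinge 1`. -/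
lemma hinge_zeta_bound {z : ℝ} (hz : 20 ≤ z) :
    |hinge (fun n => (ζ : ArithmeticFunction ℝ) n) z -
      (z * (log z + eulerMascheroniConstant - 1) + 1 / 2)| ≤ 1 / (6 * z) := by
  rw [hinge_zeta]
  have hz0 : 0 ≤ z := by linarith
  have hN : 20 ≤ ⌊z⌋₊ := Nat.le_floor (by exact_mod_cast hz)
  have h1 := Nat.floor_le hz0
  have h2 := Nat.lt_floor_add_one z
  have hu := Harm_upper (N := ⌊z⌋₊) (by omega)
  have hl := Harm_lower (N := ⌊z⌋₊) (by omega)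
  have hN' : (20 : ℝ) ≤ ⌊z⌋₊ := by exact_mod_cast hN
  set H := Harm ⌊z⌋₊
  set N : ℝ := (⌊z⌋₊ : ℝ)
  set f : ℝ := z - N with hf
  have hN0 : 0 < N := by linarith
  have hf0 : 0 ≤ f := by linarith
  have hf1 : f ≤ 1 := by linarith
  have hzN : z = N + f := by linarith
  have hlog : log z = log N + log (1 + f / N) := by
    rw [← log_mul hN0.ne' (by positivity)]; congr 1; field_simp; linarith
  have ha := one_add_mul_log_upper (show 0 ≤ f / N by positivity)
  have hb := le_one_add_mul_log (show 0 ≤ f / N by positivity)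
  have hz1 : z = N * (1 + f / N) := by field_simp; linarith
  set Lg := log (1 + f / N)
  have e1 : z * Lg = N * ((1 + f / N) * Lg) := by rw [← mul_assoc, ← hz1]
  have ha' : z * Lg ≤ f + f ^ 2 / (2 * N) := by
    rw [e1]; refine (mul_le_mul_of_nonneg_left ha hN0.le).trans (le_of_eq ?_); field_simp
  have hb' : f + f ^ 2 / (2 * N) - f ^ 3 / (6 * N ^ 2) ≤ z * Lg := by
    rw [e1]; refine le_trans (le_of_eq ?_) (mul_le_mul_of_nonneg_left hb hN0.le); field_simp
  have hu' := mul_le_mul_of_nonneg_left hu hz0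
  have hl' := mul_le_mul_of_nonneg_left hl hz0
  have e2 : z * (1 / (2 * N)) = 1 / 2 + f / (2 * N) := by rw [hzN]; field_simp
  have e3 : z * (1 / (12 * N ^ 2)) = 1 / (12 * N) + f / (12 * N ^ 2) := by rw [hzN]; field_simp
  rw [hlog]
  have hzb : 1 / (6 * (N + 1)) ≤ 1 / (6 * z) := by gcongr
  have hc1 : f / (2 * N) - f ^ 2 / (2 * N) + f ^ 3 / (6 * N ^ 2) ≤ 1 / (6 * (N + 1)) := by
    have : f / (2 * N) - f ^ 2 / (2 * N) + f ^ 3 / (6 * N ^ 2) ≤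
        1 / (8 * N) + 1 / (6 * N ^ 2) := by
      have i1 : f / (2 * N) - f ^ 2 / (2 * N) ≤ 1 / (8 * N) := by
        rw [← sub_div, div_le_div_iff₀ (by positivity) (by positivity)]
        nlinarith [sq_nonneg (f - 1 / 2)]
      have i2 : f ^ 3 / (6 * N ^ 2) ≤ 1 / (6 * N ^ 2) := by
        gcongr; exact pow_le_one₀ hf0 hf1
      linarith
    refine this.trans ?_
    rw [div_add_div _ _ (by positivity) (by positivity), div_le_div_iff₀ (by positivity)
      (by positivity)]
    nlinarith [pow_pos hN0 2, pow_pos hN0 3]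
  have hc2 : -(1 / (6 * (N + 1))) ≤
      f / (2 * N) - f ^ 2 / (2 * N) - (1 / (12 * N) + f / (12 * N ^ 2)) := by
    have i1 : 0 ≤ f / (2 * N) - f ^ 2 / (2 * N) := by
      rw [← sub_div]; apply div_nonneg _ (by positivity); nlinarith
    have i2 : f / (12 * N ^ 2) ≤ 1 / (12 * N ^ 2) := by gcongr
    have i3 : 1 / (12 * N) + 1 / (12 * N ^ 2) ≤ 1 / (6 * (N + 1)) := by
      rw [div_add_div _ _ (by positivity) (by positivity), div_le_div_iff₀ (by positivity)
        (by positivity)]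
      nlinarith [pow_pos hN0 2, pow_pos hN0 3]
    linarith
  have e4 : z * (log N + Lg + eulerMascheroniConstant - 1) =
      z * log N + z * Lg + z * eulerMascheroniConstant - z := by ring
  rw [mul_add, mul_add, e2] at hu'
  rw [mul_sub, mul_add, mul_add, e2, e3] at hl'
  rw [e4, abs_le]
  constructor <;> linarith

lemma gamma_lt : eulerMascheroniConstant ≤ 0.5773 := by
  have h := Harm_lower (N := 10) (by norm_num)
  have h2 : Harm 10 = 7381 / 2520 := by
    rw [Harm_eq]; norm_num [harmonic, Finset.sum_range_succ]
  have h3 : (2.302585 : ℝ) ≤ log 10 := by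
    rw [show (10 : ℝ) = 2 * 5 by norm_num, log_mul (by norm_num) (by norm_num)]
    have := log_two_gt_d9; have := log_five_gt_d9
    norm_num at *; linarith
  rw [h2] at h
  push_cast at h
  norm_num at h h3 ⊢
  linarith

/-! ### The certificates -/

/-- The weights `10¹⁰ x_d`, `d = 1, …, 50`, of the majorising certificate: `∑ x_d = 0`, and with
`c(d) = d x_d` the hinge transform of `c * 1` is at least `s (y - 1)`, where `s = -∑ x_d log d` is
slightly less than `1`. They approximate `μ(d)/d` for small `d` and come from a linear program. -/
def certU : List ℤ :=
  [10000004000, -5000004000, -3333334667, 1000, -2000000799, 1666667999, -1428571999, -2, 0,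
   1000000804, -909091276, -336, -266727487, 430552981, -22355023, 219229477, -337213327, -4,
   -272037127, -22939693, 167759988, 123110146, 6095350, 16862334, -56802308, 126902094,
   -45874602, 201791715, -344827711, 11177374, -58092835, 44511349, 283839492, -350275682,
   311215026, -317191618, 99430487, 113323444, 17154901, -69094597, -27439221, 10697707,
   -128157613, 181642251, -115376921, 221678174, -212766021, -81507678, 3, 146034451]

/-- The weights `10¹⁰ x_d`, `d = 1, …, 50`, of the minorising certificate: here `s = -∑ x_d log d` is
slightly less than `-1`, and the weights approximate `-μ(d)/d` for small `d`. -/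
def certL : List ℤ :=
  [-9999996000, 4999996000, 3333332000, 1000, 1999999200, -1666665333, 1428570857, 0, 0,
   -901299619, 711691382, 98699248, 769230462, -714285143, -521877721, 493455936, -72620015,
   -111899858, 42609418, 561170452, -468494250, -140772058, 62777162, 154239691, -71045857,
   -41747421, -157557623, 168516483, -20639640, 162622707, -58939771, -32575257, 31581903,
   36310127, -285714178, 293893809, -271417313, 276147299, -172873173, -297037356, 203017649,
   292929622, -123433850, 98539745, -55286683, -11741943, 19646713, -90229243, 17340592,
   31829848]

/-- `∑_{d ∣ m} d x_d`, for the weights `x_d` listed in `X` starting at the index `d`. It is written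
with the recursor so that the kernel evaluates it quickly. -/
noncomputable def dsum (m : ℕ) (X : List ℤ) : ℕ → ℤ :=
  List.rec (motive := fun _ => ℕ → ℤ) (fun _ => 0)
    (fun x _ ih d => bif Nat.beq (m % d) 0 then d * x + ih (d + 1) else ih (d + 1)) X

/-- Runs the recursion `A(m+1) = A(m) + b_{m+1}/(m+1)`, `N(m+2) = N(m+1) + A(m+1)` for `k` steps
in fixed-point arithmetic rounded down, checks `N(m+2) ≥ s (m+1)` on the way, and compares the
final state with `(A₁, N₁)`. -/
noncomputable def chk (X : List ℤ) (s A₁ N₁ : ℤ) (k : ℕ) : ℕ → ℤ → ℤ → Bool :=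
  Nat.rec (motive := fun _ => ℕ → ℤ → ℤ → Bool)
    (fun _ A N => decide (A = A₁) && decide (N = N₁))
    (fun _ ih m A N => (fun A' : ℤ => (fun N' : ℤ =>
      bif decide (s * ((m + 1 : ℕ) : ℤ) * 10000000000000000 ≤ N') then ih (m + 1) A' N'
      else false) (N + A'))
      (A + dsum (m + 1) X 1 * 1000000 / ((m + 1 : ℕ) : ℤ))) k

/-- The arithmetic function `d ↦ d X_d`, where `X_d` is the `d`-th entry of `X`. The list is indexed
from `0` and the value is `0` beyond its length. -/
noncomputable def coef (X : List ℤ) : ArithmeticFunction ℝ :=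
  ⟨fun d => (d : ℝ) * (X.getD (d - 1) 0 : ℤ), by simp⟩

lemma coef_apply (X : List ℤ) (d : ℕ) : coef X d = (d : ℝ) * (X.getD (d - 1) 0 : ℤ) := rfl

lemma coef_eq_zero (X : List ℤ) {d : ℕ} (h : X.length < d) : coef X d = 0 := by
  rw [coef_apply, List.getD_eq_default _ _ (by omega)]; simp

lemma dsum_eq (m : ℕ) (X : List ℤ) : ∀ d : ℕ, (dsum m X d : ℝ) =
    ∑ i ∈ Finset.range X.length,
      if (d + i) ∣ m then ((d + i : ℕ) : ℝ) * (X.getD i 0 : ℤ) else 0 := by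
  induction X with
  | nil => intro d; simp [dsum]
  | cons x xs ih =>
    intro d
    have h : dsum m (x :: xs) d =
      bif Nat.beq (m % d) 0 then d * x + dsum m xs (d + 1) else dsum m xs (d + 1) := rfl
    rw [h, List.length_cons, Finset.sum_range_succ']
    have ih' := ih (d + 1)
    have e : ∀ i, d + 1 + i = d + (i + 1) := fun i => by ring
    simp only [e] at ih'
    simp only [List.getD_cons_succ, add_zero, List.getD_cons_zero]
    rw [← ih']
    by_cases hd : d ∣ m
    · have : Nat.beq (m % d) 0 = true := by
        rw [Nat.beq_eq]; exact Nat.mod_eq_zero_of_dvd hd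
      rw [this, cond_true, if_pos hd]; push_cast; ring
    · have : Nat.beq (m % d) 0 = false := by
        rw [Bool.eq_false_iff, ne_eq, Nat.beq_eq]; exact fun h => hd (Nat.dvd_of_mod_eq_zero h)
      rw [this, cond_false, if_neg hd, add_zero]

lemma coef_mul_zeta (X : List ℤ) (m : ℕ) :
    (coef X * ζ) (m + 1) = (dsum (m + 1) X 1 : ℝ) := by
  rw [ArithmeticFunction.coe_mul_zeta_apply, dsum_eq, Nat.divisors, Finset.sum_filter,
    Finset.sum_Ico_eq_sum_range]
  have h1 : ∀ M, X.length ≤ M → ∑ i ∈ Finset.range X.length,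
      (if (1 + i) ∣ (m + 1) then ((1 + i : ℕ) : ℝ) * (X.getD i 0 : ℤ) else 0) =
      ∑ i ∈ Finset.range M, (if (1 + i) ∣ (m + 1) then coef X (1 + i) else 0) := by
    intro M hM
    rw [← Finset.sum_subset (Finset.range_mono hM)]
    · refine Finset.sum_congr rfl fun i _ => ?_
      rw [coef_apply, Nat.add_sub_cancel_left]
    · intro i _ hi
      rw [Finset.mem_range, not_lt] at hi
      rw [coef_eq_zero X (by omega), ite_self]
  have h2 : ∀ M, m + 1 ≤ M → ∑ i ∈ Finset.range (m + 1 + 1 - 1),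
      (if (1 + i) ∣ (m + 1) then coef X (1 + i) else 0) =
      ∑ i ∈ Finset.range M, (if (1 + i) ∣ (m + 1) then coef X (1 + i) else 0) := by
    intro M hM
    refine Finset.sum_subset (Finset.range_mono (by omega)) fun i _ hi => ?_
    rw [Finset.mem_range, not_lt] at hi
    rw [if_neg]
    intro hd; have := Nat.le_of_dvd (by omega) hd; omega
  rw [h1 (max X.length (m + 1)) (le_max_left _ _), h2 (max X.length (m + 1)) (le_max_right _ _)]

/-- `∑_{n ≤ m} a(n)/n`. -/
noncomputable def asum (a : ℕ → ℝ) (m : ℕ) : ℝ := ∑ n ∈ Finset.Ioc 0 m, a n / n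

lemma asum_succ (a : ℕ → ℝ) (m : ℕ) :
    asum a (m + 1) = asum a m + a (m + 1) / ((m + 1 : ℕ) : ℝ) := by
  unfold asum; rw [Finset.sum_Ioc_succ_top (Nat.zero_le _)]

lemma hinge_step (a : ℕ → ℝ) (m : ℕ) :
    hinge a ((m : ℝ) + 2) = hinge a ((m : ℝ) + 1) + asum a (m + 1) := by
  have h1 := hinge_eq_of_floor_le_succ a (x := (m : ℝ) + 2) (N := m + 1)
    (by push_cast; linarith) (by push_cast; linarith)
  have h2 := hinge_eq_of_floor_le_succ a (x := (m : ℝ) + 1) (N := m + 1)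
    (by push_cast; linarith) (by push_cast; linarith)
  rw [h1, h2, asum]; ring

/-- If `A` and `N` are fixed-point lower bounds for `∑_{n ≤ m} b_n/n` and for the hinge transform of
`b = coef X * ζ` at `m + 1`, a successful run of `chk` yields such lower bounds at `m + k` and the
minorant `s (y - 1)` at the integers `y = m + 2, …, m + k + 1`. -/
lemma chk_sound (X : List ℤ) (s A₁ N₁ : ℤ) (k : ℕ) : ∀ (m : ℕ) (A N : ℤ),
    chk X s A₁ N₁ k m A N = true →
    (A : ℝ) ≤ 10 ^ 6 * asum (fun n => (coef X * ζ) n) m →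
    (N : ℝ) ≤ 10 ^ 6 * hinge (fun n => (coef X * ζ) n) ((m : ℝ) + 1) →
    (A₁ : ℝ) ≤ 10 ^ 6 * asum (fun n => (coef X * ζ) n) (m + k) ∧
    (N₁ : ℝ) ≤ 10 ^ 6 * hinge (fun n => (coef X * ζ) n) (((m + k : ℕ) : ℝ) + 1) ∧
    ∀ j : ℕ, m ≤ j → j < m + k →
      (s : ℝ) * ((j : ℝ) + 1) * 10 ^ 10 ≤ hinge (fun n => (coef X * ζ) n) ((j : ℝ) + 2) := by
  induction k with
  | zero =>
    intro m A N h hA hN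
    have h' : (decide (A = A₁) && decide (N = N₁)) = true := h
    simp only [Bool.and_eq_true, decide_eq_true_eq] at h'
    obtain ⟨rfl, rfl⟩ := h'
    exact ⟨hA, by simpa using hN, fun j h1 h2 => by omega⟩
  | succ k ih =>
    intro m A N h hA hN
    set A' : ℤ := A + dsum (m + 1) X 1 * 1000000 / ((m + 1 : ℕ) : ℤ) with hA'
    have h' : (bif decide (s * ((m + 1 : ℕ) : ℤ) * 10000000000000000 ≤ N + A') then
      chk X s A₁ N₁ k (m + 1) A' (N + A') else false) = true := h
    by_cases hc : s * ((m + 1 : ℕ) : ℤ) * 10000000000000000 ≤ N + A'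
    swap
    · rw [decide_eq_false hc, cond_false] at h'; exact absurd h' (by simp)
    rw [decide_eq_true hc, cond_true] at h'
    have hA2 : (A' : ℝ) ≤ 10 ^ 6 * asum (fun n => (coef X * ζ) n) (m + 1) := by
      rw [asum_succ, coef_mul_zeta, hA']
      push_cast
      have : ((dsum (m + 1) X 1 * 1000000 / ((m + 1 : ℕ) : ℤ) : ℤ) : ℝ) ≤
          (dsum (m + 1) X 1 : ℝ) * 1000000 / ((m : ℝ) + 1) := by
        rw [le_div_iff₀ (by positivity)]
        have := Int.ediv_mul_le (dsum (m + 1) X 1 * 1000000)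
          (show ((m + 1 : ℕ) : ℤ) ≠ 0 by positivity)
        exact_mod_cast this
      push_cast at this
      have e : (10 : ℝ) ^ 6 * ((dsum (m + 1) X 1 : ℝ) / ((m : ℝ) + 1)) =
        (dsum (m + 1) X 1 : ℝ) * 1000000 / ((m : ℝ) + 1) := by ring
      rw [mul_add, e]; linarith
    have hN2 : ((N + A' : ℤ) : ℝ) ≤
        10 ^ 6 * hinge (fun n => (coef X * ζ) n) (((m + 1 : ℕ) : ℝ) + 1) := by
      have e : ((m + 1 : ℕ) : ℝ) + 1 = (m : ℝ) + 2 := by push_cast; ring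
      rw [e, hinge_step]; push_cast; linarith
    obtain ⟨i1, i2, i3⟩ := ih (m + 1) A' (N + A') h' hA2 hN2
    have e : m + 1 + k = m + (k + 1) := by ring
    rw [e] at i1 i2 i3
    refine ⟨i1, i2, fun j h1 h2 => ?_⟩
    rcases Nat.eq_or_lt_of_le h1 with h3 | h3
    · subst h3
      have e : ((m + 1 : ℕ) : ℝ) + 1 = (m : ℝ) + 2 := by push_cast; ring
      rw [e] at hN2
      have hc' : (s : ℝ) * ((m + 1 : ℕ) : ℝ) * 10000000000000000 ≤ ((N + A' : ℤ) : ℝ) := by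
        exact_mod_cast hc
      push_cast at hc' hN2
      linarith
    · exact i3 j h3 h2

lemma chk_start (X : List ℤ) :
    ((0 : ℤ) : ℝ) ≤ 10 ^ 6 * asum (fun n => (coef X * ζ) n) 0 ∧
    ((0 : ℤ) : ℝ) ≤ 10 ^ 6 * hinge (fun n => (coef X * ζ) n) (((0 : ℕ) : ℝ) + 1) := by
  constructor
  · simp [asum]
  · rw [hinge_eq_of_floor_le_succ _ (N := 0) (by simp) (by simp)]; simp

/-- Between consecutive integers the hinge transform is linear. -/
lemma hinge_ge_of_nat (a : ℕ → ℝ) (s : ℝ) (M : ℕ)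
    (h : ∀ j : ℕ, j < M → s * ((j : ℝ) + 1) ≤ hinge a ((j : ℝ) + 2)) {y : ℝ} (hy : 1 ≤ y)
    (hy2 : y < M + 1) : s * (y - 1) ≤ hinge a y := by
  have hN : 1 ≤ ⌊y⌋₊ := (Nat.one_le_floor_iff y).2 hy
  obtain ⟨N, hNe⟩ := Nat.exists_eq_add_of_le' hN
  have h1 := Nat.floor_le (show 0 ≤ y by linarith)
  have h2 := Nat.lt_floor_add_one y
  rw [hNe] at h1 h2
  push_cast at h1 h2
  have hNM : N < M := by
    have : (N : ℝ) < M := by linarith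
    exact_mod_cast this
  have e0 := hinge_eq_of_floor_le_succ a (x := y) (N := N + 1) (by push_cast; linarith)
    (by push_cast; linarith)
  have e1 := hinge_eq_of_floor_le_succ a (x := (N : ℝ) + 1) (N := N + 1) (by push_cast; linarith)
    (by push_cast; linarith)
  have e2 := hinge_eq_of_floor_le_succ a (x := (N : ℝ) + 2) (N := N + 1) (by push_cast; linarith)
    (by push_cast; linarith)
  have b2 : s * ((N : ℝ) + 1) ≤ hinge a ((N : ℝ) + 2) := h N hNM
  have b1 : s * (N : ℝ) ≤ hinge a ((N : ℝ) + 1) := by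
    rcases Nat.eq_zero_or_pos N with h0 | h0
    · subst h0
      rw [hinge_eq_of_floor_le_succ _ (N := 0) (by simp) (by simp)]; simp
    · obtain ⟨K, rfl⟩ := Nat.exists_eq_add_of_le' h0
      have := h K (by omega)
      push_cast
      rw [show (K : ℝ) + 1 + 1 = K + 2 by ring]; exact this
  set P := ∑ n ∈ Finset.Ioc 0 (N + 1), a n / n
  set Q := ∑ n ∈ Finset.Ioc 0 (N + 1), a n
  rw [e0]; rw [e1] at b1; rw [e2] at b2
  have t1 : 0 ≤ y - (N + 1) := by linarith
  have t2 : 0 ≤ (N : ℝ) + 2 - y := by linarith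
  nlinarith [mul_le_mul_of_nonneg_left b1 t2, mul_le_mul_of_nonneg_left b2 t1]

/-- The majorising certificate satisfies the minorant inequality at the integers up to `5201`. The run
is split into blocks of `400` steps, each starting from the final state of the previous one. -/
lemma chain_certU : ∀ j : ℕ, j < 5200 →
    (1 : ℤ) * ((j : ℝ) + 1) * 10 ^ 10 ≤ hinge (fun n => (coef certU * ζ) n) ((j : ℝ) + 2) := by
  obtain ⟨a0, n0⟩ := chk_start certU
  obtain ⟨a1, n1, h1⟩ := chk_sound certU (1)
    (10012890507613693) (4000171374962127818) 400 0 (0) (0)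
    (by decide +kernel) a0 n0
  obtain ⟨a2, n2, h2⟩ := chk_sound certU (1)
    (10007309249630259) (8000171994944991439) 400 400 (10012890507613693) (4000171374962127818)
    (by decide +kernel) a1 n1
  obtain ⟨a3, n3, h3⟩ := chk_sound certU (1)
    (10000670128891898) (12000157071283510935) 400 800 (10007309249630259) (8000171994944991439)
    (by decide +kernel) a2 n2
  obtain ⟨a4, n4, h4⟩ := chk_sound certU (1)
    (9988802000582096) (16000197396867543873) 400 1200 (10000670128891898) (12000157071283510935)
    (by decide +kernel) a3 n3
  obtain ⟨a5, n5, h5⟩ := chk_sound certU (1)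
    (10011826929929112) (20000186787191097062) 400 1600 (9988802000582096) (16000197396867543873)
    (by decide +kernel) a4 n4
  obtain ⟨a6, n6, h6⟩ := chk_sound certU (1)
    (10001867144671160) (24000188421792838151) 400 2000 (10011826929929112) (20000186787191097062)
    (by decide +kernel) a5 n5
  obtain ⟨a7, n7, h7⟩ := chk_sound certU (1)
    (9998370513718887) (28000138211078482743) 400 2400 (10001867144671160) (24000188421792838151)
    (by decide +kernel) a6 n6
  obtain ⟨a8, n8, h8⟩ := chk_sound certU (1)
    (9998204170335546) (32000188009079535310) 400 2800 (9998370513718887) (28000138211078482743)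
    (by decide +kernel) a7 n7
  obtain ⟨a9, n9, h9⟩ := chk_sound certU (1)
    (9998710519965167) (36000182790897658887) 400 3200 (9998204170335546) (32000188009079535310)
    (by decide +kernel) a8 n8
  obtain ⟨a10, n10, h10⟩ := chk_sound certU (1)
    (9997575508257422) (40000161424411769814) 400 3600 (9998710519965167) (36000182790897658887)
    (by decide +kernel) a9 n9
  obtain ⟨a11, n11, h11⟩ := chk_sound certU (1)
    (10002199066423222) (44000151182119209931) 400 4000 (9997575508257422) (40000161424411769814)
    (by decide +kernel) a10 n10
  obtain ⟨a12, n12, h12⟩ := chk_sound certU (1)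
    (10000484382104716) (48000156843900236984) 400 4400 (10002199066423222) (44000151182119209931)
    (by decide +kernel) a11 n11
  obtain ⟨a13, n13, h13⟩ := chk_sound certU (1)
    (10003646554533075) (52000154738087988436) 400 4800 (10000484382104716) (48000156843900236984)
    (by decide +kernel) a12 n12
  intro j hj
  rcases Nat.lt_or_ge j 400 with g | g
  · exact h1 j (by omega) (by omega)
  rcases Nat.lt_or_ge j 800 with g | g
  · exact h2 j (by omega) (by omega)
  rcases Nat.lt_or_ge j 1200 with g | g
  · exact h3 j (by omega) (by omega)
  rcases Nat.lt_or_ge j 1600 with g | g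
  · exact h4 j (by omega) (by omega)
  rcases Nat.lt_or_ge j 2000 with g | g
  · exact h5 j (by omega) (by omega)
  rcases Nat.lt_or_ge j 2400 with g | g
  · exact h6 j (by omega) (by omega)
  rcases Nat.lt_or_ge j 2800 with g | g
  · exact h7 j (by omega) (by omega)
  rcases Nat.lt_or_ge j 3200 with g | g
  · exact h8 j (by omega) (by omega)
  rcases Nat.lt_or_ge j 3600 with g | g
  · exact h9 j (by omega) (by omega)
  rcases Nat.lt_or_ge j 4000 with g | g
  · exact h10 j (by omega) (by omega)
  rcases Nat.lt_or_ge j 4400 with g | g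
  · exact h11 j (by omega) (by omega)
  rcases Nat.lt_or_ge j 4800 with g | g
  · exact h12 j (by omega) (by omega)
  exact h13 j (by omega) (by omega)

/-- The analogue of `chain_certU` for the minorising certificate, with slope `-1`. -/
lemma chain_certL : ∀ j : ℕ, j < 5200 →
    (-1 : ℤ) * ((j : ℝ) + 1) * 10 ^ 10 ≤ hinge (fun n => (coef certL * ζ) n) ((j : ℝ) + 2) := by
  obtain ⟨a0, n0⟩ := chk_start certL
  obtain ⟨a1, n1, h1⟩ := chk_sound certL (-1)
    (-9967343043992820) (-3999702611312088997) 400 0 (0) (0)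
    (by decide +kernel) a0 n0
  obtain ⟨a2, n2, h2⟩ := chk_sound certL (-1)
    (-9983910136177431) (-7999832866663997112) 400 400 (-9967343043992820) (-3999702611312088997)
    (by decide +kernel) a1 n1
  obtain ⟨a3, n3, h3⟩ := chk_sound certL (-1)
    (-9990532700243601) (-11999749436251282413) 400 800 (-9983910136177431) (-7999832866663997112)
    (by decide +kernel) a2 n2
  obtain ⟨a4, n4, h4⟩ := chk_sound certL (-1)
    (-9988405571891708) (-15999815067606115180) 400 1200 (-9990532700243601) (-11999749436251282413)
    (by decide +kernel) a3 n3
  obtain ⟨a5, n5, h5⟩ := chk_sound certL (-1)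
    (-10011941983083629) (-19999779447509525133) 400 1600 (-9988405571891708) (-15999815067606115180)
    (by decide +kernel) a4 n4
  obtain ⟨a6, n6, h6⟩ := chk_sound certL (-1)
    (-9997034369125880) (-23999804479175061398) 400 2000 (-10011941983083629) (-19999779447509525133)
    (by decide +kernel) a5 n5
  obtain ⟨a7, n7, h7⟩ := chk_sound certL (-1)
    (-9999808496083673) (-27999795294188755747) 400 2400 (-9997034369125880) (-23999804479175061398)
    (by decide +kernel) a6 n6
  obtain ⟨a8, n8, h8⟩ := chk_sound certL (-1)
    (-9998741895036035) (-31999843679618226284) 400 2800 (-9999808496083673) (-27999795294188755747)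
    (by decide +kernel) a7 n7
  obtain ⟨a9, n9, h9⟩ := chk_sound certL (-1)
    (-10002185134131220) (-35999829838280810200) 400 3200 (-9998741895036035) (-31999843679618226284)
    (by decide +kernel) a8 n8
  obtain ⟨a10, n10, h10⟩ := chk_sound certL (-1)
    (-9998873184023791) (-39999820901591818858) 400 3600 (-10002185134131220) (-35999829838280810200)
    (by decide +kernel) a9 n9
  obtain ⟨a11, n11, h11⟩ := chk_sound certL (-1)
    (-9996989439950301) (-43999827427243176189) 400 4000 (-9998873184023791) (-39999820901591818858)
    (by decide +kernel) a10 n10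
  obtain ⟨a12, n12, h12⟩ := chk_sound certL (-1)
    (-9996217058654094) (-47999827804081423564) 400 4400 (-9996989439950301) (-43999827427243176189)
    (by decide +kernel) a11 n11
  obtain ⟨a13, n13, h13⟩ := chk_sound certL (-1)
    (-9999539560064834) (-51999850933866461178) 400 4800 (-9996217058654094) (-47999827804081423564)
    (by decide +kernel) a12 n12
  intro j hj
  rcases Nat.lt_or_ge j 400 with g | g
  · exact h1 j (by omega) (by omega)
  rcases Nat.lt_or_ge j 800 with g | g
  · exact h2 j (by omega) (by omega)
  rcases Nat.lt_or_ge j 1200 with g | g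
  · exact h3 j (by omega) (by omega)
  rcases Nat.lt_or_ge j 1600 with g | g
  · exact h4 j (by omega) (by omega)
  rcases Nat.lt_or_ge j 2000 with g | g
  · exact h5 j (by omega) (by omega)
  rcases Nat.lt_or_ge j 2400 with g | g
  · exact h6 j (by omega) (by omega)
  rcases Nat.lt_or_ge j 2800 with g | g
  · exact h7 j (by omega) (by omega)
  rcases Nat.lt_or_ge j 3200 with g | g
  · exact h8 j (by omega) (by omega)
  rcases Nat.lt_or_ge j 3600 with g | g
  · exact h9 j (by omega) (by omega)
  rcases Nat.lt_or_ge j 4000 with g | g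
  · exact h10 j (by omega) (by omega)
  rcases Nat.lt_or_ge j 4400 with g | g
  · exact h11 j (by omega) (by omega)
  rcases Nat.lt_or_ge j 4800 with g | g
  · exact h12 j (by omega) (by omega)
  exact h13 j (by omega) (by omega)

/-! ### Logarithms of small integers -/

/-- Two terms of the series of `log (1 + 1/a)` in powers of `1/(2a + 1)`, the tail being bounded by a
geometric series. -/
lemma log_ratio_bounds {a : ℝ} (ha : 0 < a) :
    2 / (2 * a + 1) + 2 / (3 * (2 * a + 1) ^ 3) ≤ log (a + 1) - log a ∧
    log (a + 1) - log a ≤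
      2 / (2 * a + 1) + 2 / (3 * (2 * a + 1) ^ 3 * (1 - (1 / (2 * a + 1)) ^ 2)) := by
  have he : log (a + 1) - log a = log (1 + a⁻¹) := by
    rw [← log_div (by positivity) ha.ne']; congr 1; field_simp
  have h := Real.hasSum_log_one_add_inv ha
  rw [he]
  constructor
  · have h2 := sum_le_hasSum (Finset.range 2) (fun k _ => by positivity) h
    refine le_trans (le_of_eq ?_) h2
    simp only [Finset.sum_range_succ, Finset.sum_range_zero]
    norm_num
    field_simp
  · rw [← hasSum_nat_add_iff' 1] at h
    set v : ℝ := 1 / (2 * a + 1) with hv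
    have hv0 : 0 < v := by positivity
    have hv1 : v < 1 := by rw [hv, div_lt_one (by positivity)]; linarith
    have hg : HasSum (fun k : ℕ => 2 / 3 * v ^ 3 * (v ^ 2) ^ k)
        (2 / 3 * v ^ 3 * (1 - v ^ 2)⁻¹) :=
      (hasSum_geometric_of_lt_one (by positivity) (by nlinarith)).mul_left _
    have h2 := hasSum_le (fun k : ℕ => ?_) h hg
    · simp only [Finset.sum_range_one] at h2
      norm_num at h2
      have h3 : 2 / (3 * (2 * a + 1) ^ 3 * (1 - v ^ 2)) = 2 / 3 * v ^ 3 * (1 - v ^ 2)⁻¹ := by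
        have : 1 - v ^ 2 ≠ 0 := by nlinarith
        rw [show v ^ 3 = 1 / (2 * a + 1) ^ 3 by rw [hv]; field_simp]
        field_simp
      have h4 : 2 / (2 * a + 1) = 2 * v := by rw [hv]; ring
      rw [h3, h4]; linarith
    · have h3 : v ^ (2 * (k + 1) + 1) = v ^ 3 * (v ^ 2) ^ k := by
        rw [← pow_mul, ← pow_add]; congr 1; ring
      rw [h3]
      have h4 : 1 / (2 * ((k + 1 : ℕ) : ℝ) + 1) ≤ 1 / 3 := by
        apply one_div_le_one_div_of_le (by norm_num)
        have : (0 : ℝ) ≤ k := Nat.cast_nonneg k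
        push_cast; linarith
      have h5 : 0 ≤ v ^ 3 * (v ^ 2) ^ k := by positivity
      nlinarith

lemma logb_2 : |log 2 - 6931471806 / 10 ^ 10| ≤ 8 / 10 ^ 10 := by
  rw [abs_le]; constructor <;> linarith [log_two_gt_d9, log_two_lt_d9]

lemma logb_3 : |log 3 - 10986122887 / 10 ^ 10| ≤ 8 / 10 ^ 10 := by
  rw [abs_le]; constructor <;> linarith [log_three_gt_d9, log_three_lt_d9]

lemma logb_5 : |log 5 - 16094379124 / 10 ^ 10| ≤ 8 / 10 ^ 10 := by
  rw [abs_le]; constructor <;> linarith [log_five_gt_d9, log_five_lt_d9]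

lemma logb_7 : |log 7 - 19459101491 / 10 ^ 10| ≤ 19 / 10 ^ 10 := by
  have h := log_ratio_bounds (show (0 : ℝ) < 49 by norm_num)
  rw [show (49 : ℝ) + 1 = 50 by norm_num] at h
  have e1 : log 49 = 2 * log 7 := by
    rw [show (49 : ℝ) = 7 ^ 2 by norm_num]
    rw [log_pow]
    norm_num
  rw [e1] at h
  have e2 : log 50 = log 2 + 2 * log 5 := by
    rw [show (50 : ℝ) = 2 * 5 ^ 2 by norm_num]
    rw [log_mul (by norm_num) (by norm_num), log_pow]
    norm_num
  rw [e2] at h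
  obtain ⟨h1, h2⟩ := h
  norm_num at h1 h2
  have b2 := abs_le.1 logb_2
  have b5 := abs_le.1 logb_5
  rw [abs_le]; constructor <;> linarith [b2.1, b2.2, b5.1, b5.2]

lemma logb_11 : |log 11 - 23978952728 / 10 ^ 10| ≤ 54 / 10 ^ 10 := by
  have h := log_ratio_bounds (show (0 : ℝ) < 99 by norm_num)
  rw [show (99 : ℝ) + 1 = 100 by norm_num] at h
  have e1 : log 99 = 2 * log 3 + log 11 := by
    rw [show (99 : ℝ) = 3 ^ 2 * 11 by norm_num]
    rw [log_mul (by norm_num) (by norm_num), log_pow]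
    norm_num
  rw [e1] at h
  have e2 : log 100 = 2 * log 2 + 2 * log 5 := by
    rw [show (100 : ℝ) = 2 ^ 2 * 5 ^ 2 by norm_num]
    rw [log_mul (by norm_num) (by norm_num), log_pow, log_pow]
    norm_num
  rw [e2] at h
  obtain ⟨h1, h2⟩ := h
  norm_num at h1 h2
  have b2 := abs_le.1 logb_2
  have b3 := abs_le.1 logb_3
  have b5 := abs_le.1 logb_5
  rw [abs_le]; constructor <;> linarith [b2.1, b2.2, b3.1, b3.2, b5.1, b5.2]

lemma logb_13 : |log 13 - 25649493575 / 10 ^ 10| ≤ 57 / 10 ^ 10 := by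
  have h := log_ratio_bounds (show (0 : ℝ) < 90 by norm_num)
  rw [show (90 : ℝ) + 1 = 91 by norm_num] at h
  have e1 : log 90 = log 2 + 2 * log 3 + log 5 := by
    rw [show (90 : ℝ) = 2 * 3 ^ 2 * 5 by norm_num]
    rw [log_mul (by norm_num) (by norm_num), log_mul (by norm_num) (by norm_num), log_pow]
    norm_num
  rw [e1] at h
  have e2 : log 91 = log 7 + log 13 := by
    rw [show (91 : ℝ) = 7 * 13 by norm_num]
    rw [log_mul (by norm_num) (by norm_num)]
  rw [e2] at h
  obtain ⟨h1, h2⟩ := h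
  norm_num at h1 h2
  have b2 := abs_le.1 logb_2
  have b3 := abs_le.1 logb_3
  have b5 := abs_le.1 logb_5
  have b7 := abs_le.1 logb_7
  rw [abs_le]; constructor <;> linarith [b2.1, b2.2, b3.1, b3.2, b5.1, b5.2, b7.1, b7.2]

lemma logb_17 : |log 17 - 28332133441 / 10 ^ 10| ≤ 38 / 10 ^ 10 := by
  have h := log_ratio_bounds (show (0 : ℝ) < 50 by norm_num)
  rw [show (50 : ℝ) + 1 = 51 by norm_num] at h
  have e1 : log 50 = log 2 + 2 * log 5 := by
    rw [show (50 : ℝ) = 2 * 5 ^ 2 by norm_num]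
    rw [log_mul (by norm_num) (by norm_num), log_pow]
    norm_num
  rw [e1] at h
  have e2 : log 51 = log 3 + log 17 := by
    rw [show (51 : ℝ) = 3 * 17 by norm_num]
    rw [log_mul (by norm_num) (by norm_num)]
  rw [e2] at h
  obtain ⟨h1, h2⟩ := h
  norm_num at h1 h2
  have b2 := abs_le.1 logb_2
  have b3 := abs_le.1 logb_3
  have b5 := abs_le.1 logb_5
  rw [abs_le]; constructor <;> linarith [b2.1, b2.2, b3.1, b3.2, b5.1, b5.2]

lemma logb_19 : |log 19 - 29444389792 / 10 ^ 10| ≤ 62 / 10 ^ 10 := by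
  have h := log_ratio_bounds (show (0 : ℝ) < 95 by norm_num)
  rw [show (95 : ℝ) + 1 = 96 by norm_num] at h
  have e1 : log 95 = log 5 + log 19 := by
    rw [show (95 : ℝ) = 5 * 19 by norm_num]
    rw [log_mul (by norm_num) (by norm_num)]
  rw [e1] at h
  have e2 : log 96 = 5 * log 2 + log 3 := by
    rw [show (96 : ℝ) = 2 ^ 5 * 3 by norm_num]
    rw [log_mul (by norm_num) (by norm_num), log_pow]
    norm_num
  rw [e2] at h
  obtain ⟨h1, h2⟩ := h
  norm_num at h1 h2
  have b2 := abs_le.1 logb_2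
  have b3 := abs_le.1 logb_3
  have b5 := abs_le.1 logb_5
  rw [abs_le]; constructor <;> linarith [b2.1, b2.2, b3.1, b3.2, b5.1, b5.2]

lemma logb_23 : |log 23 - 31354942159 / 10 ^ 10| ≤ 98 / 10 ^ 10 := by
  have h := log_ratio_bounds (show (0 : ℝ) < 91 by norm_num)
  rw [show (91 : ℝ) + 1 = 92 by norm_num] at h
  have e1 : log 91 = log 7 + log 13 := by
    rw [show (91 : ℝ) = 7 * 13 by norm_num]
    rw [log_mul (by norm_num) (by norm_num)]
  rw [e1] at h
  have e2 : log 92 = 2 * log 2 + log 23 := by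
    rw [show (92 : ℝ) = 2 ^ 2 * 23 by norm_num]
    rw [log_mul (by norm_num) (by norm_num), log_pow]
    norm_num
  rw [e2] at h
  obtain ⟨h1, h2⟩ := h
  norm_num at h1 h2
  have b2 := abs_le.1 logb_2
  have b7 := abs_le.1 logb_7
  have b13 := abs_le.1 logb_13
  rw [abs_le]; constructor <;> linarith [b2.1, b2.2, b7.1, b7.2, b13.1, b13.2]

lemma logb_29 : |log 29 - 33672958300 / 10 ^ 10| ≤ 92 / 10 ^ 10 := by
  have h := log_ratio_bounds (show (0 : ℝ) < 87 by norm_num)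
  rw [show (87 : ℝ) + 1 = 88 by norm_num] at h
  have e1 : log 87 = log 3 + log 29 := by
    rw [show (87 : ℝ) = 3 * 29 by norm_num]
    rw [log_mul (by norm_num) (by norm_num)]
  rw [e1] at h
  have e2 : log 88 = 3 * log 2 + log 11 := by
    rw [show (88 : ℝ) = 2 ^ 3 * 11 by norm_num]
    rw [log_mul (by norm_num) (by norm_num), log_pow]
    norm_num
  rw [e2] at h
  obtain ⟨h1, h2⟩ := h
  norm_num at h1 h2
  have b2 := abs_le.1 logb_2
  have b3 := abs_le.1 logb_3
  have b11 := abs_le.1 logb_11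
  rw [abs_le]; constructor <;> linarith [b2.1, b2.2, b3.1, b3.2, b11.1, b11.2]

lemma logb_31 : |log 31 - 34339872045 / 10 ^ 10| ≤ 49 / 10 ^ 10 := by
  have h := log_ratio_bounds (show (0 : ℝ) < 62 by norm_num)
  rw [show (62 : ℝ) + 1 = 63 by norm_num] at h
  have e1 : log 62 = log 2 + log 31 := by
    rw [show (62 : ℝ) = 2 * 31 by norm_num]
    rw [log_mul (by norm_num) (by norm_num)]
  rw [e1] at h
  have e2 : log 63 = 2 * log 3 + log 7 := by
    rw [show (63 : ℝ) = 3 ^ 2 * 7 by norm_num]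
    rw [log_mul (by norm_num) (by norm_num), log_pow]
    norm_num
  rw [e2] at h
  obtain ⟨h1, h2⟩ := h
  norm_num at h1 h2
  have b2 := abs_le.1 logb_2
  have b3 := abs_le.1 logb_3
  have b7 := abs_le.1 logb_7
  rw [abs_le]; constructor <;> linarith [b2.1, b2.2, b3.1, b3.2, b7.1, b7.2]

lemma logb_37 : |log 37 - 36109179126 / 10 ^ 10| ≤ 38 / 10 ^ 10 := by
  have h := log_ratio_bounds (show (0 : ℝ) < 74 by norm_num)
  rw [show (74 : ℝ) + 1 = 75 by norm_num] at h
  have e1 : log 74 = log 2 + log 37 := by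
    rw [show (74 : ℝ) = 2 * 37 by norm_num]
    rw [log_mul (by norm_num) (by norm_num)]
  rw [e1] at h
  have e2 : log 75 = log 3 + 2 * log 5 := by
    rw [show (75 : ℝ) = 3 * 5 ^ 2 by norm_num]
    rw [log_mul (by norm_num) (by norm_num), log_pow]
    norm_num
  rw [e2] at h
  obtain ⟨h1, h2⟩ := h
  norm_num at h1 h2
  have b2 := abs_le.1 logb_2
  have b3 := abs_le.1 logb_3
  have b5 := abs_le.1 logb_5
  rw [abs_le]; constructor <;> linarith [b2.1, b2.2, b3.1, b3.2, b5.1, b5.2]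

lemma logb_41 : |log 41 - 37135720667 / 10 ^ 10| ≤ 46 / 10 ^ 10 := by
  have h := log_ratio_bounds (show (0 : ℝ) < 81 by norm_num)
  rw [show (81 : ℝ) + 1 = 82 by norm_num] at h
  have e1 : log 81 = 4 * log 3 := by
    rw [show (81 : ℝ) = 3 ^ 4 by norm_num]
    rw [log_pow]
    norm_num
  rw [e1] at h
  have e2 : log 82 = log 2 + log 41 := by
    rw [show (82 : ℝ) = 2 * 41 by norm_num]
    rw [log_mul (by norm_num) (by norm_num)]
  rw [e2] at h
  obtain ⟨h1, h2⟩ := h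
  norm_num at h1 h2
  have b2 := abs_le.1 logb_2
  have b3 := abs_le.1 logb_3
  rw [abs_le]; constructor <;> linarith [b2.1, b2.2, b3.1, b3.2]

lemma logb_43 : |log 43 - 37612001157 / 10 ^ 10| ≤ 60 / 10 ^ 10 := by
  have h := log_ratio_bounds (show (0 : ℝ) < 85 by norm_num)
  rw [show (85 : ℝ) + 1 = 86 by norm_num] at h
  have e1 : log 85 = log 5 + log 17 := by
    rw [show (85 : ℝ) = 5 * 17 by norm_num]
    rw [log_mul (by norm_num) (by norm_num)]
  rw [e1] at h
  have e2 : log 86 = log 2 + log 43 := by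
    rw [show (86 : ℝ) = 2 * 43 by norm_num]
    rw [log_mul (by norm_num) (by norm_num)]
  rw [e2] at h
  obtain ⟨h1, h2⟩ := h
  norm_num at h1 h2
  have b2 := abs_le.1 logb_2
  have b5 := abs_le.1 logb_5
  have b17 := abs_le.1 logb_17
  rw [abs_le]; constructor <;> linarith [b2.1, b2.2, b5.1, b5.2, b17.1, b17.2]

lemma logb_47 : |log 47 - 38501476017 / 10 ^ 10| ≤ 84 / 10 ^ 10 := by
  have h := log_ratio_bounds (show (0 : ℝ) < 94 by norm_num)
  rw [show (94 : ℝ) + 1 = 95 by norm_num] at h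
  have e1 : log 94 = log 2 + log 47 := by
    rw [show (94 : ℝ) = 2 * 47 by norm_num]
    rw [log_mul (by norm_num) (by norm_num)]
  rw [e1] at h
  have e2 : log 95 = log 5 + log 19 := by
    rw [show (95 : ℝ) = 5 * 19 by norm_num]
    rw [log_mul (by norm_num) (by norm_num)]
  rw [e2] at h
  obtain ⟨h1, h2⟩ := h
  norm_num at h1 h2
  have b2 := abs_le.1 logb_2
  have b5 := abs_le.1 logb_5
  have b19 := abs_le.1 logb_19
  rw [abs_le]; constructor <;> linarith [b2.1, b2.2, b5.1, b5.2, b19.1, b19.2]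

/-- `10¹⁰ log d` for `d = 1, …, 50`, rounded to integers. -/
def logTab : List ℤ :=
  [0, 6931471806, 10986122887, 13862943611, 16094379124, 17917594692, 19459101491, 20794415417,
   21972245773, 23025850930, 23978952728, 24849066498, 25649493575, 26390573296, 27080502011,
   27725887222, 28332133441, 28903717579, 29444389792, 29957322736, 30445224377, 30910424534,
   31354942159, 31780538303, 32188758249, 32580965380, 32958368660, 33322045102, 33672958300,
   34011973817, 34339872045, 34657359028, 34965075615, 35263605246, 35553480615, 35835189385,
   36109179126, 36375861597, 36635616461, 36888794541, 37135720667, 37376696183, 37612001157,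
   37841896339, 38066624898, 38286413965, 38501476017, 38712010109, 38918202981, 39120230054]

lemma logb_4 : |log 4 - 13862943611 / 10 ^ 10| ≤ 500 / 10 ^ 10 := by
  have e : log 4 = 2 * log 2 := by
    rw [show (4 : ℝ) = 2 ^ 2 by norm_num]
    rw [log_pow]
    norm_num
  have b2 := abs_le.1 logb_2
  rw [e, abs_le]; constructor <;> linarith [b2.1, b2.2]

lemma logb_6 : |log 6 - 17917594692 / 10 ^ 10| ≤ 500 / 10 ^ 10 := by
  have e : log 6 = log 2 + log 3 := by
    rw [show (6 : ℝ) = 2 * 3 by norm_num]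
    rw [log_mul (by norm_num) (by norm_num)]
  have b2 := abs_le.1 logb_2
  have b3 := abs_le.1 logb_3
  rw [e, abs_le]; constructor <;> linarith [b2.1, b2.2, b3.1, b3.2]

lemma logb_8 : |log 8 - 20794415417 / 10 ^ 10| ≤ 500 / 10 ^ 10 := by
  have e : log 8 = 3 * log 2 := by
    rw [show (8 : ℝ) = 2 ^ 3 by norm_num]
    rw [log_pow]
    norm_num
  have b2 := abs_le.1 logb_2
  rw [e, abs_le]; constructor <;> linarith [b2.1, b2.2]

lemma logb_9 : |log 9 - 21972245773 / 10 ^ 10| ≤ 500 / 10 ^ 10 := by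
  have e : log 9 = 2 * log 3 := by
    rw [show (9 : ℝ) = 3 ^ 2 by norm_num]
    rw [log_pow]
    norm_num
  have b3 := abs_le.1 logb_3
  rw [e, abs_le]; constructor <;> linarith [b3.1, b3.2]

lemma logb_10 : |log 10 - 23025850930 / 10 ^ 10| ≤ 500 / 10 ^ 10 := by
  have e : log 10 = log 2 + log 5 := by
    rw [show (10 : ℝ) = 2 * 5 by norm_num]
    rw [log_mul (by norm_num) (by norm_num)]
  have b2 := abs_le.1 logb_2
  have b5 := abs_le.1 logb_5
  rw [e, abs_le]; constructor <;> linarith [b2.1, b2.2, b5.1, b5.2]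

lemma logb_12 : |log 12 - 24849066498 / 10 ^ 10| ≤ 500 / 10 ^ 10 := by
  have e : log 12 = 2 * log 2 + log 3 := by
    rw [show (12 : ℝ) = 2 ^ 2 * 3 by norm_num]
    rw [log_mul (by norm_num) (by norm_num), log_pow]
    norm_num
  have b2 := abs_le.1 logb_2
  have b3 := abs_le.1 logb_3
  rw [e, abs_le]; constructor <;> linarith [b2.1, b2.2, b3.1, b3.2]

lemma logb_14 : |log 14 - 26390573296 / 10 ^ 10| ≤ 500 / 10 ^ 10 := by
  have e : log 14 = log 2 + log 7 := by
    rw [show (14 : ℝ) = 2 * 7 by norm_num]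
    rw [log_mul (by norm_num) (by norm_num)]
  have b2 := abs_le.1 logb_2
  have b7 := abs_le.1 logb_7
  rw [e, abs_le]; constructor <;> linarith [b2.1, b2.2, b7.1, b7.2]

lemma logb_15 : |log 15 - 27080502011 / 10 ^ 10| ≤ 500 / 10 ^ 10 := by
  have e : log 15 = log 3 + log 5 := by
    rw [show (15 : ℝ) = 3 * 5 by norm_num]
    rw [log_mul (by norm_num) (by norm_num)]
  have b3 := abs_le.1 logb_3
  have b5 := abs_le.1 logb_5
  rw [e, abs_le]; constructor <;> linarith [b3.1, b3.2, b5.1, b5.2]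

lemma logb_16 : |log 16 - 27725887222 / 10 ^ 10| ≤ 500 / 10 ^ 10 := by
  have e : log 16 = 4 * log 2 := by
    rw [show (16 : ℝ) = 2 ^ 4 by norm_num]
    rw [log_pow]
    norm_num
  have b2 := abs_le.1 logb_2
  rw [e, abs_le]; constructor <;> linarith [b2.1, b2.2]

lemma logb_18 : |log 18 - 28903717579 / 10 ^ 10| ≤ 500 / 10 ^ 10 := by
  have e : log 18 = log 2 + 2 * log 3 := by
    rw [show (18 : ℝ) = 2 * 3 ^ 2 by norm_num]
    rw [log_mul (by norm_num) (by norm_num), log_pow]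
    norm_num
  have b2 := abs_le.1 logb_2
  have b3 := abs_le.1 logb_3
  rw [e, abs_le]; constructor <;> linarith [b2.1, b2.2, b3.1, b3.2]

lemma logb_20 : |log 20 - 29957322736 / 10 ^ 10| ≤ 500 / 10 ^ 10 := by
  have e : log 20 = 2 * log 2 + log 5 := by
    rw [show (20 : ℝ) = 2 ^ 2 * 5 by norm_num]
    rw [log_mul (by norm_num) (by norm_num), log_pow]
    norm_num
  have b2 := abs_le.1 logb_2
  have b5 := abs_le.1 logb_5
  rw [e, abs_le]; constructor <;> linarith [b2.1, b2.2, b5.1, b5.2]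

lemma logb_21 : |log 21 - 30445224377 / 10 ^ 10| ≤ 500 / 10 ^ 10 := by
  have e : log 21 = log 3 + log 7 := by
    rw [show (21 : ℝ) = 3 * 7 by norm_num]
    rw [log_mul (by norm_num) (by norm_num)]
  have b3 := abs_le.1 logb_3
  have b7 := abs_le.1 logb_7
  rw [e, abs_le]; constructor <;> linarith [b3.1, b3.2, b7.1, b7.2]

lemma logb_22 : |log 22 - 30910424534 / 10 ^ 10| ≤ 500 / 10 ^ 10 := by
  have e : log 22 = log 2 + log 11 := by
    rw [show (22 : ℝ) = 2 * 11 by norm_num]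
    rw [log_mul (by norm_num) (by norm_num)]
  have b2 := abs_le.1 logb_2
  have b11 := abs_le.1 logb_11
  rw [e, abs_le]; constructor <;> linarith [b2.1, b2.2, b11.1, b11.2]

lemma logb_24 : |log 24 - 31780538303 / 10 ^ 10| ≤ 500 / 10 ^ 10 := by
  have e : log 24 = 3 * log 2 + log 3 := by
    rw [show (24 : ℝ) = 2 ^ 3 * 3 by norm_num]
    rw [log_mul (by norm_num) (by norm_num), log_pow]
    norm_num
  have b2 := abs_le.1 logb_2
  have b3 := abs_le.1 logb_3
  rw [e, abs_le]; constructor <;> linarith [b2.1, b2.2, b3.1, b3.2]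

lemma logb_25 : |log 25 - 32188758249 / 10 ^ 10| ≤ 500 / 10 ^ 10 := by
  have e : log 25 = 2 * log 5 := by
    rw [show (25 : ℝ) = 5 ^ 2 by norm_num]
    rw [log_pow]
    norm_num
  have b5 := abs_le.1 logb_5
  rw [e, abs_le]; constructor <;> linarith [b5.1, b5.2]

lemma logb_26 : |log 26 - 32580965380 / 10 ^ 10| ≤ 500 / 10 ^ 10 := by
  have e : log 26 = log 2 + log 13 := by
    rw [show (26 : ℝ) = 2 * 13 by norm_num]
    rw [log_mul (by norm_num) (by norm_num)]
  have b2 := abs_le.1 logb_2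
  have b13 := abs_le.1 logb_13
  rw [e, abs_le]; constructor <;> linarith [b2.1, b2.2, b13.1, b13.2]

lemma logb_27 : |log 27 - 32958368660 / 10 ^ 10| ≤ 500 / 10 ^ 10 := by
  have e : log 27 = 3 * log 3 := by
    rw [show (27 : ℝ) = 3 ^ 3 by norm_num]
    rw [log_pow]
    norm_num
  have b3 := abs_le.1 logb_3
  rw [e, abs_le]; constructor <;> linarith [b3.1, b3.2]

lemma logb_28 : |log 28 - 33322045102 / 10 ^ 10| ≤ 500 / 10 ^ 10 := by
  have e : log 28 = 2 * log 2 + log 7 := by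
    rw [show (28 : ℝ) = 2 ^ 2 * 7 by norm_num]
    rw [log_mul (by norm_num) (by norm_num), log_pow]
    norm_num
  have b2 := abs_le.1 logb_2
  have b7 := abs_le.1 logb_7
  rw [e, abs_le]; constructor <;> linarith [b2.1, b2.2, b7.1, b7.2]

lemma logb_30 : |log 30 - 34011973817 / 10 ^ 10| ≤ 500 / 10 ^ 10 := by
  have e : log 30 = log 2 + log 3 + log 5 := by
    rw [show (30 : ℝ) = 2 * 3 * 5 by norm_num]
    rw [log_mul (by norm_num) (by norm_num), log_mul (by norm_num) (by norm_num)]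
  have b2 := abs_le.1 logb_2
  have b3 := abs_le.1 logb_3
  have b5 := abs_le.1 logb_5
  rw [e, abs_le]; constructor <;> linarith [b2.1, b2.2, b3.1, b3.2, b5.1, b5.2]

lemma logb_32 : |log 32 - 34657359028 / 10 ^ 10| ≤ 500 / 10 ^ 10 := by
  have e : log 32 = 5 * log 2 := by
    rw [show (32 : ℝ) = 2 ^ 5 by norm_num]
    rw [log_pow]
    norm_num
  have b2 := abs_le.1 logb_2
  rw [e, abs_le]; constructor <;> linarith [b2.1, b2.2]

lemma logb_33 : |log 33 - 34965075615 / 10 ^ 10| ≤ 500 / 10 ^ 10 := by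
  have e : log 33 = log 3 + log 11 := by
    rw [show (33 : ℝ) = 3 * 11 by norm_num]
    rw [log_mul (by norm_num) (by norm_num)]
  have b3 := abs_le.1 logb_3
  have b11 := abs_le.1 logb_11
  rw [e, abs_le]; constructor <;> linarith [b3.1, b3.2, b11.1, b11.2]

lemma logb_34 : |log 34 - 35263605246 / 10 ^ 10| ≤ 500 / 10 ^ 10 := by
  have e : log 34 = log 2 + log 17 := by
    rw [show (34 : ℝ) = 2 * 17 by norm_num]
    rw [log_mul (by norm_num) (by norm_num)]
  have b2 := abs_le.1 logb_2
  have b17 := abs_le.1 logb_17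
  rw [e, abs_le]; constructor <;> linarith [b2.1, b2.2, b17.1, b17.2]

lemma logb_35 : |log 35 - 35553480615 / 10 ^ 10| ≤ 500 / 10 ^ 10 := by
  have e : log 35 = log 5 + log 7 := by
    rw [show (35 : ℝ) = 5 * 7 by norm_num]
    rw [log_mul (by norm_num) (by norm_num)]
  have b5 := abs_le.1 logb_5
  have b7 := abs_le.1 logb_7
  rw [e, abs_le]; constructor <;> linarith [b5.1, b5.2, b7.1, b7.2]

lemma logb_36 : |log 36 - 35835189385 / 10 ^ 10| ≤ 500 / 10 ^ 10 := by
  have e : log 36 = 2 * log 2 + 2 * log 3 := by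
    rw [show (36 : ℝ) = 2 ^ 2 * 3 ^ 2 by norm_num]
    rw [log_mul (by norm_num) (by norm_num), log_pow, log_pow]
    norm_num
  have b2 := abs_le.1 logb_2
  have b3 := abs_le.1 logb_3
  rw [e, abs_le]; constructor <;> linarith [b2.1, b2.2, b3.1, b3.2]

lemma logb_38 : |log 38 - 36375861597 / 10 ^ 10| ≤ 500 / 10 ^ 10 := by
  have e : log 38 = log 2 + log 19 := by
    rw [show (38 : ℝ) = 2 * 19 by norm_num]
    rw [log_mul (by norm_num) (by norm_num)]
  have b2 := abs_le.1 logb_2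
  have b19 := abs_le.1 logb_19
  rw [e, abs_le]; constructor <;> linarith [b2.1, b2.2, b19.1, b19.2]

lemma logb_39 : |log 39 - 36635616461 / 10 ^ 10| ≤ 500 / 10 ^ 10 := by
  have e : log 39 = log 3 + log 13 := by
    rw [show (39 : ℝ) = 3 * 13 by norm_num]
    rw [log_mul (by norm_num) (by norm_num)]
  have b3 := abs_le.1 logb_3
  have b13 := abs_le.1 logb_13
  rw [e, abs_le]; constructor <;> linarith [b3.1, b3.2, b13.1, b13.2]

lemma logb_40 : |log 40 - 36888794541 / 10 ^ 10| ≤ 500 / 10 ^ 10 := by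
  have e : log 40 = 3 * log 2 + log 5 := by
    rw [show (40 : ℝ) = 2 ^ 3 * 5 by norm_num]
    rw [log_mul (by norm_num) (by norm_num), log_pow]
    norm_num
  have b2 := abs_le.1 logb_2
  have b5 := abs_le.1 logb_5
  rw [e, abs_le]; constructor <;> linarith [b2.1, b2.2, b5.1, b5.2]

lemma logb_42 : |log 42 - 37376696183 / 10 ^ 10| ≤ 500 / 10 ^ 10 := by
  have e : log 42 = log 2 + log 3 + log 7 := by
    rw [show (42 : ℝ) = 2 * 3 * 7 by norm_num]
    rw [log_mul (by norm_num) (by norm_num), log_mul (by norm_num) (by norm_num)]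
  have b2 := abs_le.1 logb_2
  have b3 := abs_le.1 logb_3
  have b7 := abs_le.1 logb_7
  rw [e, abs_le]; constructor <;> linarith [b2.1, b2.2, b3.1, b3.2, b7.1, b7.2]

lemma logb_44 : |log 44 - 37841896339 / 10 ^ 10| ≤ 500 / 10 ^ 10 := by
  have e : log 44 = 2 * log 2 + log 11 := by
    rw [show (44 : ℝ) = 2 ^ 2 * 11 by norm_num]
    rw [log_mul (by norm_num) (by norm_num), log_pow]
    norm_num
  have b2 := abs_le.1 logb_2
  have b11 := abs_le.1 logb_11
  rw [e, abs_le]; constructor <;> linarith [b2.1, b2.2, b11.1, b11.2]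

lemma logb_45 : |log 45 - 38066624898 / 10 ^ 10| ≤ 500 / 10 ^ 10 := by
  have e : log 45 = 2 * log 3 + log 5 := by
    rw [show (45 : ℝ) = 3 ^ 2 * 5 by norm_num]
    rw [log_mul (by norm_num) (by norm_num), log_pow]
    norm_num
  have b3 := abs_le.1 logb_3
  have b5 := abs_le.1 logb_5
  rw [e, abs_le]; constructor <;> linarith [b3.1, b3.2, b5.1, b5.2]

lemma logb_46 : |log 46 - 38286413965 / 10 ^ 10| ≤ 500 / 10 ^ 10 := by
  have e : log 46 = log 2 + log 23 := by
    rw [show (46 : ℝ) = 2 * 23 by norm_num]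
    rw [log_mul (by norm_num) (by norm_num)]
  have b2 := abs_le.1 logb_2
  have b23 := abs_le.1 logb_23
  rw [e, abs_le]; constructor <;> linarith [b2.1, b2.2, b23.1, b23.2]

lemma logb_48 : |log 48 - 38712010109 / 10 ^ 10| ≤ 500 / 10 ^ 10 := by
  have e : log 48 = 4 * log 2 + log 3 := by
    rw [show (48 : ℝ) = 2 ^ 4 * 3 by norm_num]
    rw [log_mul (by norm_num) (by norm_num), log_pow]
    norm_num
  have b2 := abs_le.1 logb_2
  have b3 := abs_le.1 logb_3
  rw [e, abs_le]; constructor <;> linarith [b2.1, b2.2, b3.1, b3.2]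

lemma logb_49 : |log 49 - 38918202981 / 10 ^ 10| ≤ 500 / 10 ^ 10 := by
  have e : log 49 = 2 * log 7 := by
    rw [show (49 : ℝ) = 7 ^ 2 by norm_num]
    rw [log_pow]
    norm_num
  have b7 := abs_le.1 logb_7
  rw [e, abs_le]; constructor <;> linarith [b7.1, b7.2]

lemma logb_50 : |log 50 - 39120230054 / 10 ^ 10| ≤ 500 / 10 ^ 10 := by
  have e : log 50 = log 2 + 2 * log 5 := by
    rw [show (50 : ℝ) = 2 * 5 ^ 2 by norm_num]
    rw [log_mul (by norm_num) (by norm_num), log_pow]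
    norm_num
  have b2 := abs_le.1 logb_2
  have b5 := abs_le.1 logb_5
  rw [e, abs_le]; constructor <;> linarith [b2.1, b2.2, b5.1, b5.2]

lemma logTab_spec : ∀ d : ℕ, d ∈ Finset.Ioc 0 50 →
    |log (d : ℝ) - (logTab.getD (d - 1) 0 : ℤ) / 10 ^ 10| ≤ 500 / 10 ^ 10 := by
  have aux : ∀ {d : ℕ} {v c : ℝ} {w : ℤ}, (w : ℝ) = v → |log (d : ℝ) - v / 10 ^ 10| ≤ c / 10 ^ 10 →
      c ≤ 500 → |log (d : ℝ) - (w : ℝ) / 10 ^ 10| ≤ 500 / 10 ^ 10 := by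
    intro d v c w h1 h2 h3
    rw [h1]
    exact h2.trans (by linarith)
  intro d hd
  rw [Finset.mem_Ioc] at hd
  obtain ⟨hd1, hd2⟩ := hd
  interval_cases d
  · norm_num [logTab]
  · exact aux (w := 6931471806) (by norm_num) logb_2 (by norm_num)
  · exact aux (w := 10986122887) (by norm_num) logb_3 (by norm_num)
  · exact aux (w := 13862943611) (by norm_num) logb_4 (by norm_num)
  · exact aux (w := 16094379124) (by norm_num) logb_5 (by norm_num)
  · exact aux (w := 17917594692) (by norm_num) logb_6 (by norm_num)
  · exact aux (w := 19459101491) (by norm_num) logb_7 (by norm_num)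
  · exact aux (w := 20794415417) (by norm_num) logb_8 (by norm_num)
  · exact aux (w := 21972245773) (by norm_num) logb_9 (by norm_num)
  · exact aux (w := 23025850930) (by norm_num) logb_10 (by norm_num)
  · exact aux (w := 23978952728) (by norm_num) logb_11 (by norm_num)
  · exact aux (w := 24849066498) (by norm_num) logb_12 (by norm_num)
  · exact aux (w := 25649493575) (by norm_num) logb_13 (by norm_num)
  · exact aux (w := 26390573296) (by norm_num) logb_14 (by norm_num)
  · exact aux (w := 27080502011) (by norm_num) logb_15 (by norm_num)
  · exact aux (w := 27725887222) (by norm_num) logb_16 (by norm_num)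
  · exact aux (w := 28332133441) (by norm_num) logb_17 (by norm_num)
  · exact aux (w := 28903717579) (by norm_num) logb_18 (by norm_num)
  · exact aux (w := 29444389792) (by norm_num) logb_19 (by norm_num)
  · exact aux (w := 29957322736) (by norm_num) logb_20 (by norm_num)
  · exact aux (w := 30445224377) (by norm_num) logb_21 (by norm_num)
  · exact aux (w := 30910424534) (by norm_num) logb_22 (by norm_num)
  · exact aux (w := 31354942159) (by norm_num) logb_23 (by norm_num)
  · exact aux (w := 31780538303) (by norm_num) logb_24 (by norm_num)
  · exact aux (w := 32188758249) (by norm_num) logb_25 (by norm_num)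
  · exact aux (w := 32580965380) (by norm_num) logb_26 (by norm_num)
  · exact aux (w := 32958368660) (by norm_num) logb_27 (by norm_num)
  · exact aux (w := 33322045102) (by norm_num) logb_28 (by norm_num)
  · exact aux (w := 33672958300) (by norm_num) logb_29 (by norm_num)
  · exact aux (w := 34011973817) (by norm_num) logb_30 (by norm_num)
  · exact aux (w := 34339872045) (by norm_num) logb_31 (by norm_num)
  · exact aux (w := 34657359028) (by norm_num) logb_32 (by norm_num)
  · exact aux (w := 34965075615) (by norm_num) logb_33 (by norm_num)
  · exact aux (w := 35263605246) (by norm_num) logb_34 (by norm_num)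
  · exact aux (w := 35553480615) (by norm_num) logb_35 (by norm_num)
  · exact aux (w := 35835189385) (by norm_num) logb_36 (by norm_num)
  · exact aux (w := 36109179126) (by norm_num) logb_37 (by norm_num)
  · exact aux (w := 36375861597) (by norm_num) logb_38 (by norm_num)
  · exact aux (w := 36635616461) (by norm_num) logb_39 (by norm_num)
  · exact aux (w := 36888794541) (by norm_num) logb_40 (by norm_num)
  · exact aux (w := 37135720667) (by norm_num) logb_41 (by norm_num)
  · exact aux (w := 37376696183) (by norm_num) logb_42 (by norm_num)
  · exact aux (w := 37612001157) (by norm_num) logb_43 (by norm_num)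
  · exact aux (w := 37841896339) (by norm_num) logb_44 (by norm_num)
  · exact aux (w := 38066624898) (by norm_num) logb_45 (by norm_num)
  · exact aux (w := 38286413965) (by norm_num) logb_46 (by norm_num)
  · exact aux (w := 38501476017) (by norm_num) logb_47 (by norm_num)
  · exact aux (w := 38712010109) (by norm_num) logb_48 (by norm_num)
  · exact aux (w := 38918202981) (by norm_num) logb_49 (by norm_num)
  · exact aux (w := 39120230054) (by norm_num) logb_50 (by norm_num)

/-! ### Chebyshev-type bounds from the two certificates -/

lemma hinge_coef_mul (X : List ℤ) (hlen : X.length = 50) (g : ArithmeticFunction ℝ) {y : ℝ}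
    (hy : 50 ≤ y) :
    hinge (fun n => (coef X * g) n) y =
      ∑ d ∈ Finset.Ioc (0 : ℕ) 50, (d : ℝ) * (X.getD (d - 1) 0 : ℤ) * hinge (fun n => g n) (y / d) := by
  rw [hinge_conv]
  symm
  apply Finset.sum_subset
  · intro d hd
    rw [Finset.mem_Ioc] at hd ⊢
    exact ⟨hd.1, hd.2.trans (Nat.le_floor (by exact_mod_cast hy))⟩
  · intro d hd hd2
    rw [Finset.mem_Ioc] at hd hd2
    rw [← coef_apply, coef_eq_zero X (by omega), zero_mul]

lemma cast_mem_Ioc {d : ℕ} (hd : d ∈ Finset.Ioc (0 : ℕ) 50) : (1 : ℝ) ≤ d ∧ (d : ℝ) ≤ 50 := by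
  rw [Finset.mem_Ioc] at hd
  exact ⟨by exact_mod_cast hd.1, by exact_mod_cast hd.2⟩

/-- Asymptotics of the hinge sum of `coef X * ζ`. -/
lemma hinge_coef_zeta (X : List ℤ) (hlen : X.length = 50)
    (h0 : ∑ d ∈ Finset.Ioc (0 : ℕ) 50, X.getD (d - 1) 0 = 0) {y : ℝ} (hy : 1000 ≤ y) :
    |hinge (fun n => (coef X * (ζ : ArithmeticFunction ℝ)) n) y -
      (-(y * ∑ d ∈ Finset.Ioc (0 : ℕ) 50, (X.getD (d - 1) 0 : ℤ) * log d) +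
        (∑ d ∈ Finset.Ioc (0 : ℕ) 50, (d : ℝ) * (X.getD (d - 1) 0 : ℤ)) / 2)| ≤
      (∑ d ∈ Finset.Ioc (0 : ℕ) 50, (d : ℝ) ^ 2 * |((X.getD (d - 1) 0 : ℤ) : ℝ)|) / (6 * y) := by
  have h0' : ∑ d ∈ Finset.Ioc (0 : ℕ) 50, ((X.getD (d - 1) 0 : ℤ) : ℝ) = 0 := by exact_mod_cast h0
  rw [hinge_coef_mul X hlen _ (by linarith)]
  have hmain : -(y * ∑ d ∈ Finset.Ioc (0 : ℕ) 50, (X.getD (d - 1) 0 : ℤ) * log d) +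
        (∑ d ∈ Finset.Ioc (0 : ℕ) 50, (d : ℝ) * (X.getD (d - 1) 0 : ℤ)) / 2 =
      ∑ d ∈ Finset.Ioc (0 : ℕ) 50, (d : ℝ) * (X.getD (d - 1) 0 : ℤ) *
        (y / d * (log (y / d) + eulerMascheroniConstant - 1) + 1 / 2) := by
    have : ∀ d ∈ Finset.Ioc (0 : ℕ) 50, (d : ℝ) * (X.getD (d - 1) 0 : ℤ) *
        (y / d * (log (y / d) + eulerMascheroniConstant - 1) + 1 / 2) =
        (X.getD (d - 1) 0 : ℤ) * (y * (log y + eulerMascheroniConstant - 1)) -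
        y * ((X.getD (d - 1) 0 : ℤ) * log d) + (d : ℝ) * (X.getD (d - 1) 0 : ℤ) / 2 := by
      intro d hd
      have hd1 := cast_mem_Ioc hd
      have hd0 : (d : ℝ) ≠ 0 := by linarith
      rw [log_div (by linarith) hd0]
      field_simp
      ring
    rw [Finset.sum_congr rfl this, Finset.sum_add_distrib, Finset.sum_sub_distrib,
      ← Finset.sum_mul, h0', ← Finset.mul_sum, ← Finset.sum_div]
    ring
  rw [hmain, ← Finset.sum_sub_distrib, Finset.sum_div]
  refine (Finset.abs_sum_le_sum_abs _ _).trans (Finset.sum_le_sum fun d hd => ?_)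
  have hd1 := cast_mem_Ioc hd
  have hd0 : (0 : ℝ) < d := by linarith
  have h := hinge_zeta_bound (z := y / d) (by rw [le_div_iff₀ hd0]; nlinarith)
  rw [← mul_sub, abs_mul, abs_mul, abs_of_pos hd0]
  refine (mul_le_mul_of_nonneg_left h (by positivity)).trans (le_of_eq ?_)
  field_simp

/-- Asymptotics of the hinge sum of `coef X * log`. -/
lemma hinge_coef_log (X : List ℤ) (hlen : X.length = 50)
    (h0 : ∑ d ∈ Finset.Ioc (0 : ℕ) 50, X.getD (d - 1) 0 = 0) {x : ℝ} (hx : 50 ≤ x) :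
    hinge (fun n => (coef X * ArithmeticFunction.log) n) x ≤
      x * (-(log x - 1) * ∑ d ∈ Finset.Ioc (0 : ℕ) 50, (X.getD (d - 1) 0 : ℤ) * log d +
        (∑ d ∈ Finset.Ioc (0 : ℕ) 50, (X.getD (d - 1) 0 : ℤ) * log d ^ 2) / 2) +
      (∑ d ∈ Finset.Ioc (0 : ℕ) 50, (d : ℝ) * |((X.getD (d - 1) 0 : ℤ) : ℝ)|) * (log x + 2) := by
  obtain ⟨c₀, hc⟩ := exists_hinge_log_bound
  have h0' : ∑ d ∈ Finset.Ioc (0 : ℕ) 50, ((X.getD (d - 1) 0 : ℤ) : ℝ) = 0 := by exact_mod_cast h0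
  rw [hinge_coef_mul X hlen _ (by linarith)]
  have hmain : x * (-(log x - 1) * ∑ d ∈ Finset.Ioc (0 : ℕ) 50, (X.getD (d - 1) 0 : ℤ) * log d +
        (∑ d ∈ Finset.Ioc (0 : ℕ) 50, (X.getD (d - 1) 0 : ℤ) * log d ^ 2) / 2) =
      ∑ d ∈ Finset.Ioc (0 : ℕ) 50, (d : ℝ) * (X.getD (d - 1) 0 : ℤ) *
        (x / d * (log (x / d) ^ 2 / 2 - log (x / d) + c₀)) := by
    have : ∀ d ∈ Finset.Ioc (0 : ℕ) 50, (d : ℝ) * (X.getD (d - 1) 0 : ℤ) *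
        (x / d * (log (x / d) ^ 2 / 2 - log (x / d) + c₀)) =
        (X.getD (d - 1) 0 : ℤ) * (x * (log x ^ 2 / 2 - log x + c₀)) -
        x * (log x - 1) * ((X.getD (d - 1) 0 : ℤ) * log d) +
        x / 2 * ((X.getD (d - 1) 0 : ℤ) * log d ^ 2) := by
      intro d hd
      have hd1 := cast_mem_Ioc hd
      have hd0 : (d : ℝ) ≠ 0 := by linarith
      rw [log_div (by linarith) hd0]
      field_simp
      ring
    rw [Finset.sum_congr rfl this, Finset.sum_add_distrib, Finset.sum_sub_distrib,
      ← Finset.sum_mul, h0', ← Finset.mul_sum, ← Finset.mul_sum]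
    ring
  rw [hmain, Finset.sum_mul, ← Finset.sum_add_distrib]
  refine Finset.sum_le_sum fun d hd => ?_
  have hd1 := cast_mem_Ioc hd
  have hd0 : (0 : ℝ) < d := by linarith
  have hz : 1 ≤ x / d := by rw [le_div_iff₀ hd0]; linarith
  have h := hc (x / d) hz
  have hx0 : 0 < x := by linarith
  set H := hinge (fun n => log n) (x / d) with hH
  have hHe : hinge (fun n => ArithmeticFunction.log n) (x / d) = H := rfl
  rw [hHe]
  have e1 : H = x / d * (H / (x / d)) := by field_simp
  have h2 : |H - x / d * (log (x / d) ^ 2 / 2 - log (x / d) + c₀)| ≤ log x + 2 := by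
    rw [e1, ← mul_sub, abs_mul, abs_of_pos (by positivity : 0 < x / (d : ℝ)),
      mul_div_assoc, ← e1, ] at *
    refine (mul_le_mul_of_nonneg_left h (by positivity)).trans ?_
    rw [mul_div_cancel₀ _ (by positivity)]
    have : log (x / d) ≤ log x := log_le_log (by positivity) (div_le_self hx0.le hd1.1)
    linarith
  rw [abs_le] at h2
  have h3 : (X.getD (d - 1) 0 : ℝ) * (H - x / d * (log (x / d) ^ 2 / 2 - log (x / d) + c₀)) ≤
      |(X.getD (d - 1) 0 : ℝ)| * (log x + 2) := by
    refine (le_abs_self _).trans ?_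
    rw [abs_mul]
    exact mul_le_mul_of_nonneg_left (abs_le.2 h2) (abs_nonneg _)
  nlinarith

/-- A minorant `s (y - 1)` of the hinge sum of `coef X * ζ` yields a bound for that of `Λ`. -/
lemma hinge_vonMangoldt_le (X : List ℤ) (s : ℝ)
    (hW : ∀ y : ℝ, 1 ≤ y → s * (y - 1) ≤ hinge (fun n => (coef X * (ζ : ArithmeticFunction ℝ)) n) y)
    (x : ℝ) (hx : 0 ≤ x) :
    s * hinge (fun n => Λ n) x ≤ hinge (fun n => (coef X * ArithmeticFunction.log) n) x := by
  -- the key identity `c * log = Λ * (c * 1)`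
  have e : coef X * ArithmeticFunction.log = Λ * (coef X * (ζ : ArithmeticFunction ℝ)) := by
    rw [← ArithmeticFunction.vonMangoldt_mul_zeta]; ring
  rw [e, hinge_conv, hinge, Finset.mul_sum]
  refine Finset.sum_le_sum fun d hd => ?_
  rw [Finset.mem_Ioc] at hd
  have hd0 : (0 : ℝ) < d := by exact_mod_cast hd.1
  have h := hW (x / d) (by
    rw [le_div_iff₀ hd0, one_mul]; exact (Nat.le_floor_iff hx).1 hd.2)
  have := mul_le_mul_of_nonneg_left h (ArithmeticFunction.vonMangoldt_nonneg (n := d))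
  linarith

lemma logTab_range : ∀ d ∈ Finset.Ioc (0 : ℕ) 50,
    0 ≤ logTab.getD (d - 1) 0 ∧ logTab.getD (d - 1) 0 ≤ 39200000000 := by
  decide +kernel

/-- Numerical evaluation of `∑ X_d log d`. -/
lemma sum_coef_log (X : List ℤ) (N A : ℤ)
    (hN : ∑ d ∈ Finset.Ioc (0 : ℕ) 50, X.getD (d - 1) 0 * logTab.getD (d - 1) 0 = N)
    (hA : ∑ d ∈ Finset.Ioc (0 : ℕ) 50, |X.getD (d - 1) 0| = A) :
    |∑ d ∈ Finset.Ioc (0 : ℕ) 50, ((X.getD (d - 1) 0 : ℤ) : ℝ) * log d - (N : ℝ) / 10 ^ 10| ≤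
      (A : ℝ) * (500 / 10 ^ 10) := by
  rw [← hN, ← hA]
  push_cast
  rw [Finset.sum_div, ← Finset.sum_sub_distrib, Finset.sum_mul]
  refine (Finset.abs_sum_le_sum_abs _ _).trans (Finset.sum_le_sum fun d hd => ?_)
  have h := logTab_spec d hd
  rw [mul_div_assoc, ← mul_sub, abs_mul]
  exact mul_le_mul_of_nonneg_left h (abs_nonneg _)

/-- Numerical evaluation of `∑ X_d (log d)²`. -/
lemma sum_coef_log_sq (X : List ℤ) (N A : ℤ)
    (hN : ∑ d ∈ Finset.Ioc (0 : ℕ) 50, X.getD (d - 1) 0 * logTab.getD (d - 1) 0 ^ 2 = N)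
    (hA : ∑ d ∈ Finset.Ioc (0 : ℕ) 50, |X.getD (d - 1) 0| = A) :
    |∑ d ∈ Finset.Ioc (0 : ℕ) 50, ((X.getD (d - 1) 0 : ℤ) : ℝ) * log d ^ 2 - (N : ℝ) / 10 ^ 20| ≤
      (A : ℝ) * (4000 / 10 ^ 10) := by
  rw [← hN, ← hA]
  push_cast
  rw [Finset.sum_div, ← Finset.sum_sub_distrib, Finset.sum_mul]
  refine (Finset.abs_sum_le_sum_abs _ _).trans (Finset.sum_le_sum fun d hd => ?_)
  have h := logTab_spec d hd
  obtain ⟨r1, r2⟩ := logTab_range d hd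
  have r1' : (0 : ℝ) ≤ (logTab.getD (d - 1) 0 : ℤ) := by exact_mod_cast r1
  have r2' : ((logTab.getD (d - 1) 0 : ℤ) : ℝ) ≤ 39200000000 := by exact_mod_cast r2
  rw [mul_div_assoc, ← mul_sub, abs_mul]
  refine mul_le_mul_of_nonneg_left ?_ (abs_nonneg _)
  set t : ℝ := ((logTab.getD (d - 1) 0 : ℤ) : ℝ) with ht
  have e : log (d : ℝ) ^ 2 - t ^ 2 / 10 ^ 20 =
      (log d - t / 10 ^ 10) * (log d + t / 10 ^ 10) := by ring
  rw [e, abs_mul]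
  have h2 := abs_le.1 h
  have h0 : 0 ≤ log (d : ℝ) := log_natCast_nonneg d
  rw [abs_of_nonneg (by positivity : 0 ≤ log (d : ℝ) + t / 10 ^ 10)]
  have h3 : log (d : ℝ) + t / 10 ^ 10 ≤ 8 := by linarith [h2.2]
  calc |log (d : ℝ) - t / 10 ^ 10| * (log d + t / 10 ^ 10) ≤ 500 / 10 ^ 10 * 8 := by
        gcongr
    _ = _ := by norm_num

/-- From the finite check together with the asymptotics, `s (y - 1)` minorises the hinge sum. -/
lemma coef_zeta_minorant (X : List ℤ) (hlen : X.length = 50)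
    (h0 : ∑ d ∈ Finset.Ioc (0 : ℕ) 50, X.getD (d - 1) 0 = 0) (τ : ℤ)
    (hchain : ∀ j : ℕ, j < 5200 → (τ : ℤ) * ((j : ℝ) + 1) * 10 ^ 10 ≤
      hinge (fun n => (coef X * ζ) n) ((j : ℝ) + 2)) (s B : ℝ) (lam : ℝ)
    (hs : s = -∑ d ∈ Finset.Ioc (0 : ℕ) 50, (X.getD (d - 1) 0 : ℤ) * log d)
    (hsτ : s ≤ τ * 10 ^ 10)
    (hlam : ∑ d ∈ Finset.Ioc (0 : ℕ) 50, (d : ℝ) * (X.getD (d - 1) 0 : ℤ) = lam)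
    (hB : ∑ d ∈ Finset.Ioc (0 : ℕ) 50, (d : ℝ) ^ 2 * |((X.getD (d - 1) 0 : ℤ) : ℝ)| = B)
    (hfar : B ≤ 31200 * (s + lam / 2)) (y : ℝ) (hy : 1 ≤ y) :
    s * (y - 1) ≤ hinge (fun n => (coef X * (ζ : ArithmeticFunction ℝ)) n) y := by
  rcases lt_or_ge y 5201 with h | h
  · have := hinge_ge_of_nat (fun n => (coef X * (ζ : ArithmeticFunction ℝ)) n) (τ * 10 ^ 10) 5200
      (fun j hj => by have := hchain j hj; linarith) hy (by norm_num; exact h)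
    nlinarith
  · have h1 := hinge_coef_zeta X hlen h0 (y := y) (by linarith)
    rw [hlam, hB] at h1
    have h2 := (abs_le.1 h1).1
    have hB0 : 0 ≤ B := by rw [← hB]; positivity
    have h3 : B / (6 * y) ≤ s + lam / 2 := by
      rw [div_le_iff₀ (by positivity)]
      have : 0 ≤ s + lam / 2 := by linarith
      nlinarith
    have h4 : y * ∑ d ∈ Finset.Ioc (0 : ℕ) 50, (X.getD (d - 1) 0 : ℤ) * log d = -(y * s) := by
      rw [hs]; ring
    rw [h4] at h2
    linarith

/-- A crude bound for small `x`, from `∑_{n ≤ x} Λ(n) ⌊x/n⌋ = log ⌊x⌋!`. -/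
lemma hinge_Lambda_le_log {x : ℝ} (hx : 1 ≤ x) : hinge (fun n => Λ n) x ≤ x * log x := by
  have h1 : hinge (fun n => Λ n) x ≤ ∑ n ∈ Finset.Ioc 0 ⌊x⌋₊, Λ n * ((⌊x⌋₊ / n : ℕ) : ℝ) := by
    refine Finset.sum_le_sum fun n hn => ?_
    rw [Finset.mem_Ioc] at hn
    refine mul_le_mul_of_nonneg_left ?_ ArithmeticFunction.vonMangoldt_nonneg
    rw [← Nat.floor_div_natCast]
    linarith [Nat.lt_floor_add_one (x / n)]
  rw [← ArithmeticFunction.sum_Ioc_mul_zeta_eq_sum, ArithmeticFunction.vonMangoldt_mul_zeta] at h1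
  refine h1.trans ?_
  have h2 : ∑ n ∈ Finset.Ioc 0 ⌊x⌋₊, ArithmeticFunction.log n ≤
      ∑ n ∈ Finset.Ioc 0 ⌊x⌋₊, log x := by
    refine Finset.sum_le_sum fun n hn => ?_
    rw [Finset.mem_Ioc] at hn
    rw [ArithmeticFunction.log_apply]
    exact log_le_log (by exact_mod_cast hn.1) ((Nat.le_floor_iff (by linarith)).1 hn.2)
  refine h2.trans ?_
  rw [Finset.sum_const, Nat.card_Ioc, nsmul_eq_mul]
  exact mul_le_mul_of_nonneg_right (by simpa using Nat.floor_le (by linarith : 0 ≤ x))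
    (log_nonneg hx)

lemma cast_abs_getD (X : List ℤ) (d : ℕ) :
    |((X.getD (d - 1) 0 : ℤ) : ℝ)| = ((|X.getD (d - 1) 0| : ℤ) : ℝ) := by push_cast; rfl

/-- Upper Chebyshev-type bound for `∑_{n ≤ x} Λ(n) (x / n - 1)`. -/
lemma hinge_Lambda_upper {x : ℝ} (hx : 1 ≤ x) :
    hinge (fun n => Λ n) x ≤ x * (log x - 1.57537) + 24.34 * (log x + 2) := by
  have hl0 := log_nonneg hx
  rcases lt_or_ge x 50 with h50 | h50
  · refine (hinge_Lambda_le_log hx).trans ?_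
    have : 1.57537 * x ≤ 24.34 * (log x + 2) := by
      rcases lt_or_ge x 30 with h | h
      · linarith
      · have h2 : log 8 ≤ log x := log_le_log (by norm_num) (by linarith)
        have h3 : log (8 : ℝ) = 3 * log 2 := by
          rw [show (8 : ℝ) = 2 ^ 3 by norm_num, log_pow]; norm_num
        have := log_two_gt_d9
        linarith
    linarith
  have h0 : ∑ d ∈ Finset.Ioc (0 : ℕ) 50, certU.getD (d - 1) 0 = 0 := by decide +kernel
  have hA : ∑ d ∈ Finset.Ioc (0 : ℕ) 50, |certU.getD (d - 1) 0| = 30799365094 := by decide +kernel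
  have h1 := sum_coef_log certU (-99999900002106550660) 30799365094 (by decide +kernel) hA
  have h2 := sum_coef_log_sq certU (-1150751494233929328132776861248) 30799365094
    (by decide +kernel) hA
  have hlam : ∑ d ∈ Finset.Ioc (0 : ℕ) 50, (d : ℤ) * certU.getD (d - 1) 0 = -19579676930 := by
    decide +kernel
  have hab1 : ∑ d ∈ Finset.Ioc (0 : ℕ) 50, (d : ℤ) * |certU.getD (d - 1) 0| = 243329650716 := by
    decide +kernel
  have hab2 : ∑ d ∈ Finset.Ioc (0 : ℕ) 50, (d : ℤ) ^ 2 * |certU.getD (d - 1) 0| =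
    6028310085496 := by decide +kernel
  have hlam' := congrArg (Int.cast : ℤ → ℝ) hlam
  have hab1' := congrArg (Int.cast : ℤ → ℝ) hab1
  have hab2' := congrArg (Int.cast : ℤ → ℝ) hab2
  push_cast at hlam' hab1' hab2'
  push_cast at h1 h2
  rw [abs_le] at h1 h2
  have hW := coef_zeta_minorant certU rfl h0 1 chain_certU _ _ _ rfl
    (by push_cast; linarith) hlam' hab2' (by linarith)
  have h3 := (hinge_vonMangoldt_le certU _ hW x (by linarith)).trans
    (hinge_coef_log certU rfl h0 h50)
  rw [hab1'] at h3
  set L1 := ∑ d ∈ Finset.Ioc (0 : ℕ) 50, ((certU.getD (d - 1) 0 : ℤ) : ℝ) * log d with hL1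
  set L2 := ∑ d ∈ Finset.Ioc (0 : ℕ) 50, ((certU.getD (d - 1) 0 : ℤ) : ℝ) * log d ^ 2 with hL2
  have hs : (0 : ℝ) < -L1 := by linarith
  refine le_of_mul_le_mul_left ?_ hs
  refine h3.trans ?_
  have h4 : L2 / 2 ≤ 0.57537 * L1 := by linarith
  have h5 : x * (L2 / 2) ≤ x * (0.57537 * L1) := mul_le_mul_of_nonneg_left h4 (by linarith)
  have h6 : 243329650716 * (log x + 2) ≤ (24.34 * -L1) * (log x + 2) :=
    mul_le_mul_of_nonneg_right (by linarith) (by linarith)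
  linarith

/-- Lower Chebyshev-type bound for `∑_{n ≤ x} Λ(n) (x / n - 1)`. -/
lemma hinge_Lambda_lower {x : ℝ} (h50 : 50 ≤ x) :
    x * (log x - 1.5791) - 27.04 * (log x + 2) ≤ hinge (fun n => Λ n) x := by
  have hl0 : 0 ≤ log x := log_nonneg (by linarith)
  have h0 : ∑ d ∈ Finset.Ioc (0 : ℕ) 50, certL.getD (d - 1) 0 = 0 := by decide +kernel
  have hA : ∑ d ∈ Finset.Ioc (0 : ℕ) 50, |certL.getD (d - 1) 0| = 32576298610 := by decide +kernel
  have h1 := sum_coef_log certL 100000100001481205906 32576298610 (by decide +kernel) hA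
  have h2 := sum_coef_log_sq certL 1158181628097044799510488979336 32576298610
    (by decide +kernel) hA
  have hlam : ∑ d ∈ Finset.Ioc (0 : ℕ) 50, (d : ℤ) * certL.getD (d - 1) 0 = 20419999988 := by
    decide +kernel
  have hab1 : ∑ d ∈ Finset.Ioc (0 : ℕ) 50, (d : ℤ) * |certL.getD (d - 1) 0| = 270303288452 := by
    decide +kernel
  have hab2 : ∑ d ∈ Finset.Ioc (0 : ℕ) 50, (d : ℤ) ^ 2 * |certL.getD (d - 1) 0| =
    6313487483092 := by decide +kernel
  have hlam' := congrArg (Int.cast : ℤ → ℝ) hlam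
  have hab1' := congrArg (Int.cast : ℤ → ℝ) hab1
  have hab2' := congrArg (Int.cast : ℤ → ℝ) hab2
  push_cast at hlam' hab1' hab2'
  push_cast at h1 h2
  rw [abs_le] at h1 h2
  have hW := coef_zeta_minorant certL rfl h0 (-1) chain_certL _ _ _ rfl
    (by push_cast; linarith) hlam' hab2' (by linarith)
  have h3 := (hinge_vonMangoldt_le certL _ hW x (by linarith)).trans
    (hinge_coef_log certL rfl h0 h50)
  rw [hab1'] at h3
  set L1 := ∑ d ∈ Finset.Ioc (0 : ℕ) 50, ((certL.getD (d - 1) 0 : ℤ) : ℝ) * log d with hL1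
  set L2 := ∑ d ∈ Finset.Ioc (0 : ℕ) 50, ((certL.getD (d - 1) 0 : ℤ) : ℝ) * log d ^ 2 with hL2
  have hs : (0 : ℝ) < L1 := by linarith
  refine le_of_mul_le_mul_left ?_ hs
  have h4 : L2 / 2 ≤ 0.5791 * L1 := by linarith
  have h5 : x * (L2 / 2) ≤ x * (0.5791 * L1) := mul_le_mul_of_nonneg_left h4 (by linarith)
  have h6 : 270303288452 * (log x + 2) ≤ (27.04 * L1) * (log x + 2) :=
    mul_le_mul_of_nonneg_right (by linarith) (by linarith)
  linarith

/-! ### Partial summation over primes -/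

lemma hasDerivAt_inv_mul_log {t : ℝ} (ht : 1 < t) :
    HasDerivAt (fun t : ℝ => 1 / (t * log t)) (-(1 / t ^ 2 * (1 / log t + 1 / log t ^ 2))) t := by
  have h0 : t ≠ 0 := by linarith
  have hl := (log_pos ht).ne'
  have h := ((hasDerivAt_id t).mul (hasDerivAt_log h0)).fun_inv (mul_ne_zero h0 hl)
  simp only [one_div]
  refine h.congr_deriv ?_
  simp only [id, Pi.mul_apply]
  field_simp

lemma continuousOn_of_log {c d : ℝ} (hc : 1 < c) {f : ℝ → ℝ → ℝ}
    (hf : ∀ t, 1 < t → ContinuousAt (fun t => f t (log t)) t) :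
    ContinuousOn (fun t => f t (log t)) (Set.Icc c d) := fun t ht =>
  (hf t (hc.trans_le ht.1)).continuousWithinAt

lemma continuousAt_kernel {t : ℝ} (ht : 1 < t) :
    ContinuousAt (fun t : ℝ => 1 / t ^ 2 * (1 / log t + 1 / log t ^ 2)) t := by
  have h0 : t ≠ 0 := by linarith
  have hl := (log_pos ht).ne'
  have h2 : t ^ 2 ≠ 0 := pow_ne_zero _ h0
  have h3 : log t ^ 2 ≠ 0 := pow_ne_zero _ hl
  fun_prop (disch := assumption)

lemma sum_inv_primes_eq {x X : ℝ} (hx : 2 ≤ x) (hX : x ≤ X) :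
    ∑ p ∈ Finset.Ioc ⌊x⌋₊ ⌊X⌋₊ with p.Prime, 1 / (p : ℝ) =
      Chebyshev.theta X / (X * log X) - Chebyshev.theta x / (x * log x) +
        ∫ t in x..X, Chebyshev.theta t * (1 / t ^ 2 * (1 / log t + 1 / log t ^ 2)) := by
  have hderiv : ∀ t ∈ Set.Icc x X, deriv (fun t : ℝ => 1 / (t * log t)) t =
      -(1 / t ^ 2 * (1 / log t + 1 / log t ^ 2)) := fun t ht =>
    (hasDerivAt_inv_mul_log (by linarith [ht.1])).deriv
  have hth : ∀ t : ℝ, ∑ k ∈ Finset.Icc 0 ⌊t⌋₊, (if k.Prime then log (k : ℝ) else 0) =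
      Chebyshev.theta t := by
    intro t
    rw [Chebyshev.theta_eq_sum_Icc, Finset.sum_filter]
  have h := sum_mul_eq_sub_sub_integral_mul (fun k : ℕ => if k.Prime then log (k : ℝ) else 0)
    (f := fun t : ℝ => 1 / (t * log t)) (a := x) (b := X) (by linarith) hX
    (fun t ht => (hasDerivAt_inv_mul_log (by linarith [ht.1])).differentiableAt)
    (by
      refine (ContinuousOn.integrableOn_Icc ?_)
      refine ContinuousOn.congr (f := fun t => -(1 / t ^ 2 * (1 / log t + 1 / log t ^ 2))) ?_ hderiv
      exact fun t ht => (continuousAt_kernel (by linarith [ht.1])).neg.continuousWithinAt)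
  simp only [hth] at h
  have e1 : ∑ p ∈ Finset.Ioc ⌊x⌋₊ ⌊X⌋₊ with p.Prime, 1 / (p : ℝ) =
      ∑ k ∈ Finset.Ioc ⌊x⌋₊ ⌊X⌋₊, 1 / ((k : ℝ) * log k) * (if k.Prime then log (k : ℝ) else 0) := by
    rw [Finset.sum_filter]
    refine Finset.sum_congr rfl fun p _ => ?_
    split_ifs with hp
    · have h1 : (1 : ℝ) < p := by exact_mod_cast hp.one_lt
      have := (log_pos h1).ne'
      field_simp
    · simp
  rw [e1, h, intervalIntegral.integral_of_le hX,
    ← MeasureTheory.integral_Icc_eq_integral_Ioc, ← MeasureTheory.integral_Icc_eq_integral_Ioc]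
  rw [MeasureTheory.setIntegral_congr_fun (g := fun t =>
    -(Chebyshev.theta t * (1 / t ^ 2 * (1 / log t + 1 / log t ^ 2)))) measurableSet_Icc
    (fun t ht => by simp only [hderiv t ht]; ring), MeasureTheory.integral_neg]
  ring

lemma theta_mul_integrable {c d : ℝ} (hcd : c ≤ d) {g : ℝ → ℝ} (hg : ContinuousOn g (Set.Icc c d)) :
    IntervalIntegrable (fun t => Chebyshev.theta t * g t) volume c d :=
  (Chebyshev.theta_mono.intervalIntegrable).mul_continuousOn (by rwa [Set.uIcc_of_le hcd])

lemma psi_mul_integrable {c d : ℝ} (hcd : c ≤ d) {g : ℝ → ℝ} (hg : ContinuousOn g (Set.Icc c d)) :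
    IntervalIntegrable (fun t => Chebyshev.psi t * g t) volume c d :=
  (Chebyshev.psi_mono.intervalIntegrable).mul_continuousOn (by rwa [Set.uIcc_of_le hcd])

lemma continuousAt_kernel2 {t : ℝ} (ht : 1 < t) :
    ContinuousAt (fun t : ℝ => 1 / (t * log t ^ 2)) t := by
  have h0 : t ≠ 0 := by linarith
  have hl := (log_pos ht).ne'
  have h3 : t * log t ^ 2 ≠ 0 := mul_ne_zero h0 (pow_ne_zero _ hl)
  fun_prop (disch := assumption)

lemma primeCounting_ge {x a : ℝ} (ha : 2 ≤ a) (hx : a ≤ x) :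
    Chebyshev.theta x / log x + ∫ t in a..x, Chebyshev.theta t * (1 / (t * log t ^ 2)) ≤
      (Nat.primeCounting ⌊x⌋₊ : ℝ) := by
  rw [Chebyshev.primeCounting_eq_theta_div_log_add_integral (by linarith)]
  have e : ∀ t : ℝ, Chebyshev.theta t / (t * log t ^ 2) =
      Chebyshev.theta t * (1 / (t * log t ^ 2)) := fun t => by ring
  simp only [e]
  have hc : ∀ c d : ℝ, 2 ≤ c → ContinuousOn (fun t : ℝ => 1 / (t * log t ^ 2)) (Set.Icc c d) :=
    fun c d h t ht => (continuousAt_kernel2 (by linarith [ht.1])).continuousWithinAt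
  rw [← intervalIntegral.integral_add_adjacent_intervals (theta_mul_integrable ha (hc _ _ le_rfl))
    (theta_mul_integrable hx (hc _ _ ha))]
  have : 0 ≤ ∫ t in (2 : ℝ)..a, Chebyshev.theta t * (1 / (t * log t ^ 2)) := by
    refine intervalIntegral.integral_nonneg ha fun t ht => ?_
    have h0 : 0 < t := by linarith [ht.1]
    have := Chebyshev.theta_nonneg t
    positivity
  linarith

/-- The sum `∑_{x < p ≤ X} 1/p + π(x)/x` as an integral of `θ`; the boundary terms at `x`
cancel. -/
lemma prime_sum_ge {x X a : ℝ} (ha : 2 ≤ a) (hx : a ≤ x) (hX : x ≤ X) :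
    (∫ t in x..X, Chebyshev.theta t * (1 / t ^ 2 * (1 / log t + 1 / log t ^ 2))) +
      (∫ t in a..x, Chebyshev.theta t * (1 / (t * log t ^ 2))) / x ≤
    ∑ p ∈ Finset.Ioc ⌊x⌋₊ ⌊X⌋₊ with p.Prime, 1 / (p : ℝ) + Nat.primeCounting ⌊x⌋₊ / x := by
  have h1 := sum_inv_primes_eq (by linarith : 2 ≤ x) hX
  have h2 := div_le_div_of_nonneg_right (primeCounting_ge ha hx) (by linarith : 0 ≤ x)
  rw [add_div, div_div, mul_comm (log x) x] at h2
  have h3 : 0 ≤ Chebyshev.theta X / (X * log X) :=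
    div_nonneg (Chebyshev.theta_nonneg X) (mul_nonneg (by linarith) (log_nonneg (by linarith)))
  linarith

/-! ### The contribution of `ψ` -/

lemma psi_eq_psum (t : ℝ) : Chebyshev.psi t = psum (fun n => Λ n) t := rfl

lemma integral_mono_of_deriv {c d : ℝ} (hcd : c ≤ d) {G G' f : ℝ → ℝ}
    (hG : ∀ t ∈ Set.Icc c d, HasDerivAt G (G' t) t) (hG' : ContinuousOn G' (Set.Icc c d))
    (hf : ContinuousOn f (Set.Icc c d)) (hle : ∀ t ∈ Set.Icc c d, f t ≤ G' t) :
    ∫ t in c..d, f t ≤ G d - G c := by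
  rw [← integral_of_deriv hcd hG hG']
  exact intervalIntegral.integral_mono_on hcd (by rw [← Set.uIcc_of_le hcd] at hf; exact hf.intervalIntegrable)
    (by rw [← Set.uIcc_of_le hcd] at hG'; exact hG'.intervalIntegrable) hle

lemma hasDerivAt_inv_log {t : ℝ} (ht : 1 < t) :
    HasDerivAt (fun t : ℝ => 1 / log t) (-(1 / log t ^ 2) / t) t := by
  have h0 : t ≠ 0 := by linarith
  have hl := (log_pos ht).ne'
  simp only [one_div]
  exact ((hasDerivAt_log h0).fun_inv hl).congr_deriv (by field_simp)

lemma hasDerivAt_inv_log_pow (n : ℕ) {t : ℝ} (ht : 1 < t) :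
    HasDerivAt (fun t : ℝ => 1 / log t ^ n) (-(n / log t ^ (n + 1)) / t) t := by
  have h0 : t ≠ 0 := by linarith
  have hl := (log_pos ht).ne'
  have h := (((hasDerivAt_log h0).fun_pow n)).fun_inv (pow_ne_zero n hl)
  simp only [one_div]
  refine h.congr_deriv ?_
  rcases n with _ | n
  · simp
  · simp only [Nat.add_sub_cancel]
    field_simp
    ring

lemma hasDerivAt_log_log {t : ℝ} (ht : 1 < t) :
    HasDerivAt (fun t : ℝ => log (log t)) (1 / log t / t) t := by
  have h0 : t ≠ 0 := by linarith
  have hl := (log_pos ht).ne'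
  exact ((hasDerivAt_log h0).log hl).congr_deriv (by field_simp)

/-- Here the hinge sum of `Λ` is kept at the point `x` itself and `hinge_Lambda_lower` is used on
`[x, X]`. -/
lemma psi_part1 {x X : ℝ} (hx : 50 ≤ x) (hl2 : 2 ≤ log x) (hX : x ≤ X) :
    1 + log (log X) - log (log x) + 0.4209 / log x - 1.5791 / log x ^ 2
      - hinge (fun n => Λ n) x / x * (1 / log x + 1 / log x ^ 2)
      - 27.04 * (1 / log x + 4 / log x ^ 2 + 4 / log x ^ 3) / x - 100 / log X ≤
    ∫ t in x..X, Chebyshev.psi t * (1 / t ^ 2 * (1 / log t + 1 / log t ^ 2)) := by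
  have h1 : ∀ t ∈ Set.Icc x X, 1 < t := fun t ht => by linarith [ht.1]
  have hlog : ∀ t ∈ Set.Icc x X, log x ≤ log t := fun t ht => log_le_log (by linarith) ht.1
  set c : ℝ := 1 / log x + 4 / log x ^ 2 + 4 / log x ^ 3 with hc
  set g' : ℝ → ℝ := fun t => -((1 / log t ^ 2 + 2 / log t ^ 3) / t) with hg'
  have hg'c : ContinuousOn g' (Set.Icc x X) := by
    intro t ht
    have a0 : t ≠ 0 := by linarith [h1 t ht]
    have a1 := (log_pos (h1 t ht)).ne'
    have a2 := pow_ne_zero 2 a1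
    have a3 := pow_ne_zero 3 a1
    refine ContinuousAt.continuousWithinAt ?_
    simp only [hg']
    fun_prop (disch := assumption)
  have e : ∫ t in x..X, Chebyshev.psi t * (1 / t ^ 2 * (1 / log t + 1 / log t ^ 2)) =
      ∫ t in x..X, psum (fun n => Λ n) t / t ^ 2 * (1 / log t + 1 / log t ^ 2) := by
    congr 1; funext t; rw [psi_eq_psum]; ring
  rw [e, integral_psum_mul (fun n => ArithmeticFunction.vonMangoldt_nonneg) (by linarith) hX
    (g' := g') (fun t ht => by
      refine ((hasDerivAt_inv_log (h1 t ht)).add (hasDerivAt_inv_log_pow 2 (h1 t ht))).congr_deriv ?_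
      simp only [hg']; push_cast; ring) hg'c]
  have hS : ContinuousOn (fun t => hinge (fun n => Λ n) t / t) (Set.Icc x X) :=
    continuousOn_hinge_div _ (by linarith)
  have hIntg : ∫ t in x..X, hinge (fun n => Λ n) t / t * g' t ≤
      (-(log (log X) - 0.4209 / log X + 1.5791 / log X ^ 2 + 27.04 * c / X)) -
      (-(log (log x) - 0.4209 / log x + 1.5791 / log x ^ 2 + 27.04 * c / x)) := by
    refine integral_mono_of_deriv hX
      (G := fun t => -(log (log t) - 0.4209 / log t + 1.5791 / log t ^ 2 + 27.04 * c / t))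
      (G' := fun t => -((log t - 1.5791) * (1 / log t ^ 2 + 2 / log t ^ 3) / t - 27.04 * c / t ^ 2))
      ?_ ?_ (hS.mul hg'c) ?_
    · intro t ht
      have a0 : t ≠ 0 := by linarith [h1 t ht]
      have a1 := (log_pos (h1 t ht)).ne'
      have := ((((hasDerivAt_log_log (h1 t ht)).sub
        ((hasDerivAt_inv_log (h1 t ht)).const_mul 0.4209)).add
        ((hasDerivAt_inv_log_pow 2 (h1 t ht)).const_mul 1.5791)).add
        ((hasDerivAt_inv a0).const_mul (27.04 * c))).neg
      refine (this.congr_deriv ?_).congr_of_eventuallyEq (Filter.Eventually.of_forall fun s => ?_)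
      · push_cast; field_simp; ring
      · simp only [Pi.add_apply, Pi.sub_apply, Pi.neg_apply]; ring
    · intro t ht
      have a0 : t ≠ 0 := by linarith [h1 t ht]
      have a1 := (log_pos (h1 t ht)).ne'
      have a2 := pow_ne_zero 2 a1
      have a3 := pow_ne_zero 3 a1
      have a4 := pow_ne_zero 2 a0
      refine ContinuousAt.continuousWithinAt ?_
      fun_prop (disch := assumption)
    · intro t ht
      have t0 : 0 < t := by linarith [h1 t ht]
      have b0 := hlog t ht
      have b1 : 0 < log t := by linarith
      have hlow := hinge_Lambda_lower (x := t) (by linarith [ht.1])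
      have h5 : (log t - 1.5791) - 27.04 * (log t + 2) / t ≤ hinge (fun n => Λ n) t / t := by
        rw [le_div_iff₀ t0]; refine le_trans (le_of_eq ?_) hlow; field_simp
      have h6 : (log t + 2) * (1 / log t ^ 2 + 2 / log t ^ 3) ≤ c := by
        have : (log t + 2) * (1 / log t ^ 2 + 2 / log t ^ 3) =
          1 / log t + 4 / log t ^ 2 + 4 / log t ^ 3 := by field_simp; ring
        rw [this, hc]; gcongr
      have h7 : 0 ≤ (1 / log t ^ 2 + 2 / log t ^ 3) / t := by positivity
      have h8 := mul_le_mul_of_nonneg_right h5 h7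
      have h9 : 27.04 / t ^ 2 * ((log t + 2) * (1 / log t ^ 2 + 2 / log t ^ 3)) ≤ 27.04 / t ^ 2 * c :=
        mul_le_mul_of_nonneg_left h6 (by positivity)
      have e2 : (log t - 1.5791 - 27.04 * (log t + 2) / t) * ((1 / log t ^ 2 + 2 / log t ^ 3) / t) =
        (log t - 1.5791) * (1 / log t ^ 2 + 2 / log t ^ 3) / t -
          27.04 / t ^ 2 * ((log t + 2) * (1 / log t ^ 2 + 2 / log t ^ 3)) := by
        field_simp
      simp only [hg']
      have e3 : 27.04 / t ^ 2 * c = 27.04 * c / t ^ 2 := by ring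
      linarith
  -- the boundary term at `X`
  have hX0 : 0 < X := by linarith
  have hL := hlog X ⟨hX, le_rfl⟩
  have hLX : log X ≤ X := log_le_self hX0.le
  have hlow := hinge_Lambda_lower (x := X) (by linarith)
  have h5 : (log X - 1.5791) - 27.04 * (log X + 2) / X ≤ hinge (fun n => Λ n) X / X := by
    rw [le_div_iff₀ hX0]; refine le_trans (le_of_eq ?_) hlow; field_simp
  have hb1 : 0 < log X := by linarith
  have h10 : 27.04 * (log X + 2) / X ≤ 27.04 * (log X + 2) / log X := by gcongr
  have h11 : (log X - 1.5791 - 27.04 * (log X + 2) / log X) * (1 / log X + 1 / log X ^ 2) ≤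
      hinge (fun n => Λ n) X / X * (1 / log X + 1 / log X ^ 2) :=
    mul_le_mul_of_nonneg_right (by linarith) (by positivity)
  have h12 : 1 - 100 / log X + 0.4209 / log X ≤
      (log X - 1.5791 - 27.04 * (log X + 2) / log X) * (1 / log X + 1 / log X ^ 2) := by
    rw [← sub_nonneg]
    have : (log X - 1.5791 - 27.04 * (log X + 2) / log X) * (1 / log X + 1 / log X ^ 2) -
      (1 - 100 / log X + 0.4209 / log X) = (71.96 * log X ^ 2 - 82.6991 * log X - 54.08 + (0 : ℝ)) / log X ^ 3 := by
      field_simp; ring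
    rw [this]
    have h13 : 2 ≤ log X := by linarith
    apply div_nonneg _ (by positivity)
    nlinarith
  have h14 : 0 ≤ c := by rw [hc]; positivity
  have h15 : 0 ≤ 27.04 * c / X := by positivity
  have h16 : 0 ≤ 1.5791 / log X ^ 2 := by positivity
  linarith

lemma exp_two_bounds : 7.389 ≤ exp 2 ∧ exp 2 ≤ 7.3891 := by
  have h : exp 2 = exp 1 ^ 2 := by rw [← exp_nat_mul]; norm_num
  have h1 := exp_one_gt_d9
  have h2 := exp_one_lt_d9
  rw [h]
  constructor <;> nlinarith

lemma two_le_log_of_exp_two_le {t : ℝ} (ht : exp 2 ≤ t) : 2 ≤ log t :=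
  (le_log_iff_exp_le (by linarith [exp_pos 2])).2 ht

/-- Here the hinge sum of `Λ` is kept at the point `x` itself and `hinge_Lambda_upper` is used below
`x`. -/
lemma psi_part2 {x : ℝ} (hx : exp 2 ≤ x) :
    hinge (fun n => Λ n) x / log x ^ 2
      - x * (1 / log x - 2.57537 / log x ^ 2 - 2 / log x ^ 3 - 6 / log x ^ 4)
      - 24.34 * (log (log x) + 2 / log x ^ 2) - 9.5 ≤
    ∫ t in (exp 2)..x, Chebyshev.psi t * (1 / (t * log t ^ 2)) := by
  obtain ⟨he1, he2⟩ := exp_two_bounds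
  have h1 : ∀ t ∈ Set.Icc (exp 2) x, 1 < t := fun t ht => by linarith [ht.1]
  have hlog : ∀ t ∈ Set.Icc (exp 2) x, 2 ≤ log t := fun t ht => two_le_log_of_exp_two_le ht.1
  set g' : ℝ → ℝ := fun t => 1 / log t ^ 2 - 2 / log t ^ 3 with hg'
  have hg'c : ContinuousOn g' (Set.Icc (exp 2) x) := by
    intro t ht
    have a0 : t ≠ 0 := by linarith [h1 t ht]
    have a1 := (log_pos (h1 t ht)).ne'
    have a2 := pow_ne_zero 2 a1
    have a3 := pow_ne_zero 3 a1
    refine ContinuousAt.continuousWithinAt ?_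
    simp only [hg']
    fun_prop (disch := assumption)
  have e : ∫ t in (exp 2)..x, Chebyshev.psi t * (1 / (t * log t ^ 2)) =
      ∫ t in (exp 2)..x, psum (fun n => Λ n) t / t ^ 2 * (t * (1 / log t ^ 2)) := by
    rw [intervalIntegral.integral_of_le hx, intervalIntegral.integral_of_le hx]
    refine MeasureTheory.setIntegral_congr_fun measurableSet_Ioc fun t ht => ?_
    have a0 : t ≠ 0 := by linarith [ht.1]
    simp only [psi_eq_psum]
    field_simp
  rw [e, integral_psum_mul (fun n => ArithmeticFunction.vonMangoldt_nonneg) (by linarith) hx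
    (g' := g') (fun t ht => by
      have a0 : t ≠ 0 := by linarith [h1 t ht]
      have a1 := (log_pos (h1 t ht)).ne'
      refine ((hasDerivAt_id t).mul (hasDerivAt_inv_log_pow 2 (h1 t ht))).congr_deriv ?_
      simp only [hg', id]; push_cast; field_simp; ring) hg'c]
  have hS : ContinuousOn (fun t => hinge (fun n => Λ n) t / t) (Set.Icc (exp 2) x) :=
    continuousOn_hinge_div _ (by linarith)
  set V : ℝ → ℝ := fun t => t * (1 / log t - 2.57537 * (1 / log t ^ 2) - 2 * (1 / log t ^ 3) -
    6 * (1 / log t ^ 4)) + 24.34 * (log (log t) + 2 * (1 / log t ^ 2)) with hV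
  have hIntg : ∫ t in (exp 2)..x, hinge (fun n => Λ n) t / t * g' t ≤ V x - V (exp 2) := by
    refine integral_mono_of_deriv hx (G := V)
      (G' := fun t => (1 / log t - 3.57537 / log t ^ 2 + 3.15074 / log t ^ 3 + 24 / log t ^ 5) +
        24.34 * (1 / log t - 4 / log t ^ 3) / t) ?_ ?_ (hS.mul hg'c) ?_
    · intro t ht
      have a0 : t ≠ 0 := by linarith [h1 t ht]
      have a1 := (log_pos (h1 t ht)).ne'
      have h := ((hasDerivAt_id t).mul ((((hasDerivAt_inv_log (h1 t ht)).sub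
        ((hasDerivAt_inv_log_pow 2 (h1 t ht)).const_mul 2.57537)).sub
        ((hasDerivAt_inv_log_pow 3 (h1 t ht)).const_mul 2)).sub
        ((hasDerivAt_inv_log_pow 4 (h1 t ht)).const_mul 6))).add
        (((hasDerivAt_log_log (h1 t ht)).add
          ((hasDerivAt_inv_log_pow 2 (h1 t ht)).const_mul 2)).const_mul 24.34)
      refine (h.congr_deriv ?_).congr_of_eventuallyEq (Filter.Eventually.of_forall fun s => ?_)
      · simp only [id, Pi.sub_apply]; push_cast; field_simp; ring
      · simp only [hV, Pi.add_apply, Pi.sub_apply, Pi.mul_apply, id]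
    · intro t ht
      have a0 : t ≠ 0 := by linarith [h1 t ht]
      have a1 := (log_pos (h1 t ht)).ne'
      have a2 := pow_ne_zero 2 a1
      have a3 := pow_ne_zero 3 a1
      have a4 := pow_ne_zero 5 a1
      refine ContinuousAt.continuousWithinAt ?_
      fun_prop (disch := assumption)
    · intro t ht
      have t0 : 0 < t := by linarith [h1 t ht]
      have b0 := hlog t ht
      have b1 : 0 < log t := by linarith
      have hup := hinge_Lambda_upper (x := t) (h1 t ht).le
      have h5 : hinge (fun n => Λ n) t / t ≤ (log t - 1.57537) + 24.34 * (log t + 2) / t := by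
        rw [div_le_iff₀ t0]; refine le_trans hup (le_of_eq ?_); field_simp
      have h7 : 0 ≤ g' t := by
        have : g' t = (log t - 2) / log t ^ 3 := by simp only [hg']; field_simp
        rw [this]; apply div_nonneg (by linarith) (by positivity)
      refine (mul_le_mul_of_nonneg_right h5 h7).trans ?_
      have e2 : (log t - 1.57537 + 24.34 * (log t + 2) / t) * g' t =
        (1 / log t - 3.57537 / log t ^ 2 + 3.15074 / log t ^ 3) +
        24.34 * (1 / log t - 4 / log t ^ 3) / t := by
        simp only [hg']; field_simp; ring
      rw [e2]
      have : 0 ≤ 24 / log t ^ 5 := by positivity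
      linarith
  have hVe : -5.7 ≤ V (exp 2) := by
    simp only [hV, log_exp]
    have : 0 ≤ log 2 := log_nonneg (by norm_num)
    norm_num
    nlinarith
  have hSe : hinge (fun n => Λ n) (exp 2) ≤ exp 2 * 2 := by
    simpa using hinge_Lambda_le_log (x := exp 2) (by linarith)
  have hx0 : x ≠ 0 := by linarith
  have e3 : hinge (fun n => Λ n) x / x * (x * (1 / log x ^ 2)) =
      hinge (fun n => Λ n) x / log x ^ 2 := by field_simp
  have e4 : hinge (fun n => Λ n) (exp 2) / exp 2 * (exp 2 * (1 / log (exp 2) ^ 2)) =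
      hinge (fun n => Λ n) (exp 2) / 4 := by rw [log_exp]; field_simp; norm_num
  rw [e3, e4]
  have e5 : V x = x * (1 / log x - 2.57537 / log x ^ 2 - 2 / log x ^ 3 - 6 / log x ^ 4) +
      24.34 * (log (log x) + 2 / log x ^ 2) := by simp only [hV]; ring
  rw [e5] at hIntg
  linarith

/-- The contribution of `ψ` to the lower bound for `∑_{x < p ≤ X} 1/p + π(x)/x`. The terms of
order `1/x` come from the logarithmic error terms of `hinge_Lambda_upper` and
`hinge_Lambda_lower`. -/
lemma psi_total {x X : ℝ} (hx : 50 ≤ x) (hX : x ≤ X) :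
    log (log X) - log (log x) + 0.99627 / log x + 0.99627 / log x ^ 2 + 2 / log x ^ 3
      + 6 / log x ^ 4
      - (24.34 * (log x + 2) / log x + 27.04 * (1 / log x + 4 / log x ^ 2 + 4 / log x ^ 3)
        + 24.34 * (log (log x) + 2 / log x ^ 2) + 9.5) / x - 100 / log X ≤
    (∫ t in x..X, Chebyshev.psi t * (1 / t ^ 2 * (1 / log t + 1 / log t ^ 2))) +
      (∫ t in (exp 2)..x, Chebyshev.psi t * (1 / (t * log t ^ 2))) / x := by
  have hx2 : exp 2 ≤ x := by linarith [exp_two_bounds.2]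
  have hl := two_le_log_of_exp_two_le hx2
  have h1 := psi_part1 hx hl hX
  have x0 : 0 < x := by linarith
  have l0 : 0 < log x := by linarith
  have h2 := div_le_div_of_nonneg_right (psi_part2 hx2) x0.le
  have hup := hinge_Lambda_upper (x := x) (by linarith)
  have h5 : hinge (fun n => Λ n) x / x ≤ (log x - 1.57537) + 24.34 * (log x + 2) / x := by
    rw [div_le_iff₀ x0]; refine le_trans hup (le_of_eq ?_); field_simp
  have h6 := div_le_div_of_nonneg_right h5 l0.le
  refine le_trans ?_ (add_le_add h1 h2)
  have e : ∀ H : ℝ, (H / log x ^ 2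
      - x * (1 / log x - 2.57537 / log x ^ 2 - 2 / log x ^ 3 - 6 / log x ^ 4)
      - 24.34 * (log (log x) + 2 / log x ^ 2) - 9.5) / x =
      H / x * (1 / log x ^ 2) - (1 / log x - 2.57537 / log x ^ 2 - 2 / log x ^ 3 - 6 / log x ^ 4)
      - (24.34 * (log (log x) + 2 / log x ^ 2) + 9.5) / x := by
    intro H; field_simp; ring
  rw [e]
  have e2 : (log x - 1.57537 + 24.34 * (log x + 2) / x) / log x =
      1 - 1.57537 / log x + 24.34 * (log x + 2) / log x / x := by field_simp
  rw [e2] at h6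
  have e3 : hinge (fun n => Λ n) x / x / log x = hinge (fun n => Λ n) x / x * (1 / log x) := by ring
  rw [e3] at h6
  have e4 : (24.34 * (log x + 2) / log x + 27.04 * (1 / log x + 4 / log x ^ 2 + 4 / log x ^ 3)
        + 24.34 * (log (log x) + 2 / log x ^ 2) + 9.5) / x =
     24.34 * (log x + 2) / log x / x + 27.04 * (1 / log x + 4 / log x ^ 2 + 4 / log x ^ 3) / x
        + (24.34 * (log (log x) + 2 / log x ^ 2) + 9.5) / x := by ring
  rw [e4]
  have e5 : ∀ c : ℝ, c / log x = c * (1 / log x) := fun c => by ring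
  have e6 : ∀ c : ℝ, c / log x ^ 2 = c * (1 / log x ^ 2) := fun c => by ring
  rw [e5 0.99627, e6 0.99627]
  rw [e5 1.57537] at h6
  rw [e5 0.4209, e6 1.5791, e6 2.57537]
  linarith

/-! ### The contribution of prime powers -/

lemma integral_le_of_deriv {c d : ℝ} (hcd : c ≤ d) {G G' f : ℝ → ℝ}
    (hG : ∀ t ∈ Set.Icc c d, HasDerivAt G (G' t) t) (hG' : ContinuousOn G' (Set.Icc c d))
    (hf : IntervalIntegrable f volume c d) (hle : ∀ t ∈ Set.Icc c d, f t ≤ G' t) :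
    ∫ t in c..d, f t ≤ G d - G c := by
  rw [← integral_of_deriv hcd hG hG']
  exact intervalIntegral.integral_mono_on hcd hf
    (by rw [← Set.uIcc_of_le hcd] at hG'; exact hG'.intervalIntegrable) hle

/-- `l e^{-c l}` decreases for `l ≥ 1/c`. -/
lemma mul_exp_neg_le {c l₀ l : ℝ} (h0 : 0 < l₀) (h : 1 ≤ c * l₀) (hl : l₀ ≤ l) :
    l * exp (-(c * l)) ≤ l₀ * exp (-(c * l₀)) := by
  have h1 : l / l₀ ≤ exp (c * l - c * l₀) := by
    refine le_trans ?_ (add_one_le_exp _)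
    rw [div_le_iff₀ h0]
    nlinarith [mul_nonneg (sub_nonneg.2 hl) (sub_nonneg.2 h)]
  rw [div_le_iff₀ h0] at h1
  calc l * exp (-(c * l)) ≤ exp (c * l - c * l₀) * l₀ * exp (-(c * l)) := by gcongr
    _ = l₀ * (exp (c * l - c * l₀) * exp (-(c * l))) := by ring
    _ = _ := by rw [← exp_add]; ring_nf

/-- The bound for `(ψ(x) - θ(x)) / √x` in terms of `l = log x` that follows from
`ψ(y) ≤ y log 4 + 2 √y log y`. -/
noncomputable def powD (l : ℝ) : ℝ :=
  log 4 * (1 + exp (-(1 / 6 * l)) + exp (-(3 / 10 * l))) + l * exp (-(1 / 4 * l)) +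
    2 / 3 * (l * exp (-(1 / 3 * l))) + 2 / 5 * (l * exp (-(2 / 5 * l)))

lemma powD_anti {l₀ l : ℝ} (h0 : 4 ≤ l₀) (hl : l₀ ≤ l) : powD l ≤ powD l₀ := by
  have h4 : 0 ≤ log 4 := log_nonneg (by norm_num)
  unfold powD
  have h1 := mul_exp_neg_le (c := 1 / 4) (by linarith) (by linarith) hl
  have h2 := mul_exp_neg_le (c := 1 / 3) (by linarith) (by linarith) hl
  have h3 := mul_exp_neg_le (c := 2 / 5) (by linarith) (by linarith) hl
  have h5 : exp (-(1 / 6 * l)) ≤ exp (-(1 / 6 * l₀)) := by gcongr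
  have h6 : exp (-(3 / 10 * l)) ≤ exp (-(3 / 10 * l₀)) := by gcongr
  gcongr

lemma psi_sub_theta_le_powD {t : ℝ} (ht : 1 ≤ t) :
    Chebyshev.psi t - Chebyshev.theta t ≤ √t * powD (log t) := by
  have h0 : 0 < t := by linarith
  have hl := log_nonneg ht
  have key : ∀ c : ℝ, 0 ≤ c → Chebyshev.psi (t ^ c) ≤
      exp (log t * (1 / 2)) * (log 4 * exp (log t * (c - 1 / 2)) +
        2 * c * log t * exp (log t * (c / 2 - 1 / 2))) := by
    intro c hc
    have e1 : t ^ c = exp (log t * c) := rpow_def_of_pos h0 c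
    refine (Chebyshev.psi_le (one_le_rpow ht hc)).trans (le_of_eq ?_)
    have e2 : √(t ^ c) = exp (log t * (c / 2)) := by
      rw [sqrt_eq_rpow, ← rpow_mul h0.le, rpow_def_of_pos h0]; ring_nf
    rw [e2, log_rpow h0, e1]
    have e3 : exp (log t * c) = exp (log t * (1 / 2)) * exp (log t * (c - 1 / 2)) := by
      rw [← exp_add]; ring_nf
    have e4 : exp (log t * (c / 2)) = exp (log t * (1 / 2)) * exp (log t * (c / 2 - 1 / 2)) := by
      rw [← exp_add]; ring_nf
    rw [e3, e4]; ring
  have h2 := key (2 : ℝ)⁻¹ (by norm_num)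
  have h3 := key (3 : ℝ)⁻¹ (by norm_num)
  have h5 := key (5 : ℝ)⁻¹ (by norm_num)
  refine (Chebyshev.psi_sub_theta_le_psi_add_psi_add_psi t).trans ?_
  have e : √t = exp (log t * (1 / 2)) := by
    rw [sqrt_eq_rpow, rpow_def_of_pos h0]
  rw [e]
  refine (add_le_add (add_le_add h2 h3) h5).trans (le_of_eq ?_)
  unfold powD
  have g1 : log t * ((2 : ℝ)⁻¹ - 1 / 2) = 0 := by ring
  have g2 : log t * ((2 : ℝ)⁻¹ / 2 - 1 / 2) = -(1 / 4 * log t) := by ring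
  have g3 : log t * ((3 : ℝ)⁻¹ - 1 / 2) = -(1 / 6 * log t) := by ring
  have g4 : log t * ((3 : ℝ)⁻¹ / 2 - 1 / 2) = -(1 / 3 * log t) := by ring
  have g5 : log t * ((5 : ℝ)⁻¹ - 1 / 2) = -(3 / 10 * log t) := by ring
  have g6 : log t * ((5 : ℝ)⁻¹ / 2 - 1 / 2) = -(2 / 5 * log t) := by ring
  rw [g1, g2, g3, g4, g5, g6, exp_zero]
  ring

lemma exp_neg_le_of_sum {q B : ℝ} (hq : 0 ≤ q) (N : ℕ) (hB : 0 < B)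
    (h : B⁻¹ ≤ ∑ i ∈ Finset.range N, q ^ i / i.factorial) : exp (-q) ≤ B := by
  rw [exp_neg]
  exact inv_le_of_inv_le₀ hB (h.trans (sum_le_exp_of_nonneg hq N))

lemma log_four_le : log 4 ≤ 1.386295 := by
  have : (4 : ℝ) = 2 ^ 2 := by norm_num
  rw [this, log_pow]
  have := log_two_lt_d9
  push_cast; linarith

lemma powD_eight : powD 8 ≤ 3.5 := by
  have a1 : exp (-(1 / 6 * 8 : ℝ)) ≤ 0.265 :=
    exp_neg_le_of_sum (by norm_num) 10 (by norm_num)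
      (by norm_num [Finset.sum_range_succ, Nat.factorial])
  have a2 : exp (-(3 / 10 * 8 : ℝ)) ≤ 0.092 :=
    exp_neg_le_of_sum (by norm_num) 12 (by norm_num)
      (by norm_num [Finset.sum_range_succ, Nat.factorial])
  have a3 : exp (-(1 / 4 * 8 : ℝ)) ≤ 0.1355 :=
    exp_neg_le_of_sum (by norm_num) 12 (by norm_num)
      (by norm_num [Finset.sum_range_succ, Nat.factorial])
  have a4 : exp (-(1 / 3 * 8 : ℝ)) ≤ 0.0697 :=
    exp_neg_le_of_sum (by norm_num) 12 (by norm_num)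
      (by norm_num [Finset.sum_range_succ, Nat.factorial])
  have a5 : exp (-(2 / 5 * 8 : ℝ)) ≤ 0.041 :=
    exp_neg_le_of_sum (by norm_num) 14 (by norm_num)
      (by norm_num [Finset.sum_range_succ, Nat.factorial])
  have h4 := log_four_le
  have h4' : 0 ≤ log 4 := log_nonneg (by norm_num)
  unfold powD
  have : log 4 * (1 + exp (-(1 / 6 * 8 : ℝ)) + exp (-(3 / 10 * 8 : ℝ))) ≤
    1.386295 * (1 + 0.265 + 0.092) := by gcongr
  linarith

/-- `e^{-l₀/4}` for the threshold `l₀ = 117/8`. -/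
lemma exp_neg_quarter : exp (-(1 / 4 * (117 / 8) : ℝ)) ≤ 0.025834 :=
  exp_neg_le_of_sum (by norm_num) 18 (by norm_num)
    (by norm_num [Finset.sum_range_succ, Nat.factorial])

lemma powD_threshold : powD (117 / 8) ≤ 2 := by
  have a1 : exp (-(1 / 6 * (117 / 8) : ℝ)) ≤ 0.0874 :=
    exp_neg_le_of_sum (by norm_num) 14 (by norm_num)
      (by norm_num [Finset.sum_range_succ, Nat.factorial])
  have a2 : exp (-(3 / 10 * (117 / 8) : ℝ)) ≤ 0.01245 :=
    exp_neg_le_of_sum (by norm_num) 18 (by norm_num)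
      (by norm_num [Finset.sum_range_succ, Nat.factorial])
  have a3 := exp_neg_quarter
  have a4 : exp (-(1 / 3 * (117 / 8) : ℝ)) ≤ 0.00765 :=
    exp_neg_le_of_sum (by norm_num) 20 (by norm_num)
      (by norm_num [Finset.sum_range_succ, Nat.factorial])
  have a5 : exp (-(2 / 5 * (117 / 8) : ℝ)) ≤ 0.0029 :=
    exp_neg_le_of_sum (by norm_num) 20 (by norm_num)
      (by norm_num [Finset.sum_range_succ, Nat.factorial])
  have h4 := log_four_le
  have h4' : 0 ≤ log 4 := log_nonneg (by norm_num)
  unfold powD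
  have : log 4 * (1 + exp (-(1 / 6 * (117 / 8) : ℝ)) + exp (-(3 / 10 * (117 / 8) : ℝ))) ≤
    1.386295 * (1 + 0.0874 + 0.01245) := by gcongr
  linarith

lemma delta_le {l₀ C t : ℝ} (h0 : 4 ≤ l₀) (hC : powD l₀ ≤ C) (ht : 1 ≤ t) (hl : l₀ ≤ log t) :
    Chebyshev.psi t - Chebyshev.theta t ≤ C * √t := by
  refine (psi_sub_theta_le_powD ht).trans ?_
  rw [mul_comm]
  exact mul_le_mul_of_nonneg_right ((powD_anti h0 hl).trans hC) (sqrt_nonneg t)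

lemma delta_integrable {c d : ℝ} (hcd : c ≤ d) {g : ℝ → ℝ} (hg : ContinuousOn g (Set.Icc c d)) :
    IntervalIntegrable (fun t => (Chebyshev.psi t - Chebyshev.theta t) * g t) volume c d := by
  simp only [sub_mul]
  exact (psi_mul_integrable hcd hg).sub (theta_mul_integrable hcd hg)

/-- The contribution of the prime powers beyond `x`. -/
lemma delta_part1 {x X : ℝ} (hl : 117 / 8 ≤ log x) (hx : 1 < x) (hX : x ≤ X) :
    ∫ t in x..X, (Chebyshev.psi t - Chebyshev.theta t) * (1 / t ^ 2 * (1 / log t + 1 / log t ^ 2))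
      ≤ 4 * (1 / log x + 1 / log x ^ 2) / √x := by
  have h1 : ∀ t ∈ Set.Icc x X, 1 < t := fun t ht => by linarith [ht.1]
  set c : ℝ := 1 / log x + 1 / log x ^ 2 with hc
  have hb : 0 < log x := by linarith
  have hc0 : 0 ≤ c := by positivity
  have h := integral_le_of_deriv hX (G := fun t => -4 * c * (√t)⁻¹)
    (G' := fun t => 2 * c / (√t * √t ^ 2))
    (f := fun t => (Chebyshev.psi t - Chebyshev.theta t) *
      (1 / t ^ 2 * (1 / log t + 1 / log t ^ 2))) ?_ ?_
    (delta_integrable hX fun t ht => (continuousAt_kernel (h1 t ht)).continuousWithinAt) ?_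
  · refine h.trans ?_
    have : 0 ≤ 4 * c * (√X)⁻¹ := by positivity
    have e : 4 * c / √x = 4 * c * (√x)⁻¹ := rfl
    linarith
  · intro t ht
    have t0 : 0 < t := by linarith [h1 t ht]
    have hs := (sqrt_pos.2 t0).ne'
    exact (((hasDerivAt_sqrt t0.ne').fun_inv hs).const_mul (-4 * c)).congr_deriv
      (by field_simp; ring)
  · intro t ht
    have t0 : 0 < t := by linarith [h1 t ht]
    have hs : √t * √t ^ 2 ≠ 0 := by positivity
    refine ContinuousAt.continuousWithinAt ?_
    fun_prop (disch := assumption)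
  · intro t ht
    have t0 : 0 < t := by linarith [h1 t ht]
    have hs := (sqrt_pos.2 t0)
    have hlt : log x ≤ log t := log_le_log (by linarith) ht.1
    have hd := delta_le (by norm_num) powD_threshold (h1 t ht).le (hl.trans hlt)
    have hk : 1 / t ^ 2 * (1 / log t + 1 / log t ^ 2) ≤ 1 / t ^ 2 * c := by
      rw [hc]; gcongr
    have hb' : 0 < log t := by linarith
    calc _ ≤ 2 * √t * (1 / t ^ 2 * (1 / log t + 1 / log t ^ 2)) := by gcongr
      _ ≤ 2 * √t * (1 / t ^ 2 * c) := by gcongr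
      _ = _ := by
        have e : t ^ 2 = √t ^ 4 := by
          rw [show (4 : ℕ) = 2 * 2 by norm_num, pow_mul, sq_sqrt t0.le]
        rw [e]; field_simp

/-- The contribution of the prime powers up to `x`. -/
lemma delta_part2 {x : ℝ} (hx : exp 8 ≤ x) :
    ∫ t in (exp 2)..x, (Chebyshev.psi t - Chebyshev.theta t) * (1 / (t * log t ^ 2))
      ≤ 14 * √x / log x ^ 2 + 110 := by
  have he8 : exp 2 ≤ exp 8 := exp_le_exp.2 (by norm_num)
  have he2 := exp_two_bounds
  have hcont : ∀ c d : ℝ, 1 < c →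
      ContinuousOn (fun t : ℝ => 1 / (t * log t ^ 2)) (Set.Icc c d) :=
    fun c d h t ht => (continuousAt_kernel2 (by linarith [ht.1])).continuousWithinAt
  rw [← intervalIntegral.integral_add_adjacent_intervals
    (delta_integrable he8 (hcont _ _ (by linarith)))
    (delta_integrable hx (hcont _ _ (by linarith)))]
  have hA := integral_le_of_deriv he8 (G := fun t => 2 * √t) (G' := fun t => 1 / √t)
    (f := fun t => (Chebyshev.psi t - Chebyshev.theta t) * (1 / (t * log t ^ 2)))
    (fun t ht => by
      have t0 : 0 < t := by linarith [ht.1]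
      exact ((hasDerivAt_sqrt t0.ne').const_mul 2).congr_deriv (by field_simp))
    (fun t ht => by
      have t0 : 0 < t := by linarith [ht.1]
      have hs := (sqrt_pos.2 t0).ne'
      refine ContinuousAt.continuousWithinAt ?_
      fun_prop (disch := assumption))
    (delta_integrable he8 (hcont _ _ (by linarith)))
    (fun t ht => by
      have t0 : 0 < t := by linarith [ht.1]
      have hs := (sqrt_pos.2 t0)
      have hl := two_le_log_of_exp_two_le ht.1
      have hb : 0 < log t := by linarith
      have hd := Chebyshev.psi_sub_theta_le (x := t) (by linarith [ht.1])
      calc _ ≤ 2 * √t * log t * (1 / (t * log t ^ 2)) := by gcongr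
        _ = 2 / log t * (1 / √t) := by
          have e : t = √t ^ 2 := (sq_sqrt t0.le).symm
          nth_rewrite 3 [e]
          field_simp
        _ ≤ 1 * (1 / √t) := by
          gcongr
          rwa [div_le_one hb]
        _ = _ := one_mul _)
  have hB := integral_le_of_deriv hx (G := fun t => 14 * (√t * (1 / log t ^ 2)))
    (G' := fun t => 14 * (1 / (2 * √t) * (1 / log t ^ 2) + √t * (-(2 / log t ^ 3) / t)))
    (f := fun t => (Chebyshev.psi t - Chebyshev.theta t) * (1 / (t * log t ^ 2)))
    (fun t ht => by
      have t0 : 0 < t := by linarith [ht.1]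
      have h := (((hasDerivAt_sqrt t0.ne').mul
        (hasDerivAt_inv_log_pow 2 (by linarith [ht.1] : 1 < t))).const_mul 14)
      exact h.congr_deriv (by push_cast; norm_num))
    (fun t ht => by
      have t0 : t ≠ 0 := by linarith [ht.1]
      have hs : 2 * √t ≠ 0 := by
        have : 0 < t := by linarith [ht.1]
        positivity
      have hb := (log_pos (by linarith [ht.1] : 1 < t)).ne'
      have h2 := pow_ne_zero 2 hb
      have h3 := pow_ne_zero 3 hb
      refine ContinuousAt.continuousWithinAt ?_
      fun_prop (disch := assumption))
    (delta_integrable hx (hcont _ _ (by linarith)))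
    (fun t ht => by
      have t0 : 0 < t := by linarith [ht.1]
      have hs := (sqrt_pos.2 t0)
      have hl : 8 ≤ log t := (le_log_iff_exp_le t0).2 ht.1
      have hb : 0 < log t := by linarith
      have hd := delta_le (by norm_num) powD_eight (by linarith [ht.1]) hl
      have e : t = √t ^ 2 := (sq_sqrt t0.le).symm
      calc _ ≤ 3.5 * √t * (1 / (t * log t ^ 2)) := by gcongr
        _ = 1 / √t * (1 / log t ^ 2) * 3.5 := by
          nth_rewrite 2 [e]
          field_simp
        _ ≤ 1 / √t * (1 / log t ^ 2) * (14 * (1 / 2 - 2 / log t)) := by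
          have : 2 / log t ≤ 1 / 4 := by rw [div_le_iff₀ hb]; linarith
          gcongr; linarith
        _ = _ := by
          have key : ∀ s L : ℝ, 0 < s → 0 < L → 1 / s * (1 / L ^ 2) * (14 * (1 / 2 - 2 / L)) =
              14 * (1 / (2 * s) * (1 / L ^ 2) + s * (-(2 / L ^ 3) / s ^ 2)) := by
            intro s L h1 h2
            field_simp
            ring
          rw [key _ _ hs hb, sq_sqrt t0.le])
  have e8 : √(exp 8) = exp 1 ^ 4 := by
    rw [sqrt_eq_iff_mul_self_eq (exp_pos _).le (by positivity), ← exp_nat_mul, ← exp_add]; norm_num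
  have h55 : exp 1 ^ 4 ≤ 55 := by
    have := exp_one_lt_d9
    calc exp 1 ^ 4 ≤ 2.7182818286 ^ 4 := by gcongr
      _ ≤ 55 := by norm_num
  have p1 : 0 ≤ 2 * √(exp 2) := by positivity
  have p2 : 0 ≤ 14 * (√(exp 8) * (1 / log (exp 8) ^ 2)) := by positivity
  have e9 : 14 * √x / log x ^ 2 = 14 * (√x * (1 / log x ^ 2)) := by ring
  rw [e8] at hA
  linarith

lemma log_le_div_five {l : ℝ} (hl : 117 / 8 ≤ l) : log l ≤ l / 5 := by
  have h15 : log 15 ≤ 2.75 := by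
    rw [log_le_iff_le_exp (by norm_num)]
    refine le_trans ?_ (sum_le_exp_of_nonneg (by norm_num) 12)
    norm_num [Finset.sum_range_succ, Nat.factorial]
  have h := log_le_sub_one_of_pos (x := l / 15) (by linarith)
  rw [log_div (by linarith) (by norm_num)] at h
  linarith

/-- The error terms, written with `t = 1 / log x` and `y = log x / √x`. -/
lemma error_poly {t y : ℝ} (ht0 : 0 ≤ t) (hy0 : 0 ≤ y) (ht : t ≤ 8 / 117) (hy : y ≤ 0.00977) :
    0.00373 * (1 + t) + t * y ^ 2 * (24.34 * (1 + 2 * t) + 27.04 * (t + 4 * t ^ 2 + 4 * t ^ 3) +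
      48.68 * t ^ 2 + 119.5) + 24.34 / 5 * y ^ 2 + 4 * (t + t ^ 2) * y + 14 * t ^ 2 * y ≤ 0.0095 := by
  refine le_trans (b := 0.00373 * (1 + 8 / 117) + 8 / 117 * 0.00977 ^ 2 * (24.34 * (1 + 2 * (8 / 117)) +
      27.04 * (8 / 117 + 4 * (8 / 117) ^ 2 + 4 * (8 / 117) ^ 3) +
      48.68 * (8 / 117) ^ 2 + 119.5) + 24.34 / 5 * 0.00977 ^ 2 +
      4 * (8 / 117 + (8 / 117) ^ 2) * 0.00977 + 14 * (8 / 117) ^ 2 * 0.00977) ?_ (by norm_num)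
  gcongr

/-- For `log x ≥ 117/8`, the sum `∑_{x < p ≤ X} 1/p + π(x)/x` is at least
`log log X - log log x + li(x)/x` up to a relative error of less than one percent in `li(x)/x`. -/
lemma prime_sum_lower {x X : ℝ} (hx : 50 ≤ x) (hl : 117 / 8 ≤ log x) (hX : x ≤ X) :
    log (log X) - log (log x) + 1 / log x + 1 / log x ^ 2 + 2 / log x ^ 3 + 6 / log x ^ 4
      - 0.0095 / log x - 100 / log X ≤
    ∑ p ∈ Finset.Ioc ⌊x⌋₊ ⌊X⌋₊ with p.Prime, 1 / (p : ℝ) + Nat.primeCounting ⌊x⌋₊ / x := by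
  have x0 : 0 < x := by linarith
  have l0 : 0 < log x := by linarith
  have he8 : exp 8 ≤ x := (le_log_iff_exp_le x0).1 (by linarith)
  have he2 : exp 2 ≤ x := le_trans (exp_le_exp.2 (by norm_num)) he8
  have hP := psi_total hx hX
  have hD1 := delta_part1 hl (by linarith) hX
  have hD2 := div_le_div_of_nonneg_right (delta_part2 he8) x0.le
  have hS := prime_sum_ge (a := exp 2) (by linarith [exp_two_bounds.1]) he2 hX
  have hc1 : ContinuousOn (fun t : ℝ => 1 / t ^ 2 * (1 / log t + 1 / log t ^ 2)) (Set.Icc x X) :=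
    fun t ht => (continuousAt_kernel (by linarith [ht.1])).continuousWithinAt
  have hc2 : ContinuousOn (fun t : ℝ => 1 / (t * log t ^ 2)) (Set.Icc (exp 2) x) :=
    fun t ht => (continuousAt_kernel2 (by linarith [ht.1, exp_two_bounds.1])).continuousWithinAt
  simp only [sub_mul] at hD1 hD2
  rw [intervalIntegral.integral_sub (psi_mul_integrable hX hc1) (theta_mul_integrable hX hc1)] at hD1
  rw [intervalIntegral.integral_sub (psi_mul_integrable he2 hc2) (theta_mul_integrable he2 hc2),
    sub_div] at hD2
  refine le_trans ?_ hS
  have s0 : 0 < √x := sqrt_pos.2 x0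
  -- the error terms
  set t : ℝ := 1 / log x with ht
  set y : ℝ := log x / √x with hy
  have ht0 : 0 < t := by positivity
  have hy0 : 0 < y := by positivity
  have ht1 : t ≤ 8 / 117 := by
    rw [ht, div_le_div_iff₀ l0 (by norm_num)]; linarith
  have hexp : √x = exp (1 / 2 * log x) := by
    rw [sqrt_eq_rpow, rpow_def_of_pos x0]; ring_nf
  have hy1 : y ≤ 0.00977 := by
    have h1 := mul_exp_neg_le (c := 1 / 2) (l₀ := 117 / 8) (by norm_num) (by norm_num) hl
    have h2 : exp (-(1 / 2 * (117 / 8)) : ℝ) = exp (-(1 / 4 * (117 / 8)) : ℝ) ^ 2 := by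
      rw [← exp_nat_mul]; norm_num
    have h3 : exp (-(1 / 4 * (117 / 8)) : ℝ) ^ 2 ≤ 0.025834 ^ 2 := by
      have := exp_neg_quarter
      gcongr
    have h4 : y = log x * exp (-(1 / 2 * log x)) := by
      rw [hy, hexp, exp_neg]; rfl
    rw [h4]
    refine h1.trans ?_
    rw [h2]; linarith
  have hE := mul_le_mul_of_nonneg_left (error_poly ht0.le hy0.le ht1 hy1) ht0.le
  have hll := log_le_div_five hl
  have hxs : x = √x ^ 2 := (sq_sqrt x0.le).symm
  have e1 : √x = 1 / (t * y) := by rw [ht, hy]; field_simp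
  have e2 : x = 1 / (t * y) ^ 2 := by
    have := hxs; rw [e1] at this; rw [this]; field_simp
  have e3 : log x = 1 / t := by rw [ht]; field_simp
  have hll' : 24.34 * (log (log x) + 2 / log x ^ 2) / x ≤ 24.34 * (log x / 5 + 2 / log x ^ 2) / x := by
    gcongr
  have k1 : (24.34 * (log x + 2) / log x + 27.04 * (1 / log x + 4 / log x ^ 2 + 4 / log x ^ 3)
        + 24.34 * (log (log x) + 2 / log x ^ 2) + 9.5) / x =
      (24.34 * (log x + 2) / log x + 27.04 * (1 / log x + 4 / log x ^ 2 + 4 / log x ^ 3)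
        + 9.5) / x + 24.34 * (log (log x) + 2 / log x ^ 2) / x := by ring
  have k2 : (24.34 * (log x + 2) / log x + 27.04 * (1 / log x + 4 / log x ^ 2 + 4 / log x ^ 3)
        + 9.5) / x + 24.34 * (log x / 5 + 2 / log x ^ 2) / x +
      0.00373 / log x + 0.00373 / log x ^ 2 +
      4 * (1 / log x + 1 / log x ^ 2) / √x + (14 * √x / log x ^ 2 + 110) / x =
      t * (0.00373 * (1 + t) + t * y ^ 2 * (24.34 * (1 + 2 * t) + 27.04 * (t + 4 * t ^ 2 + 4 * t ^ 3)
        + 48.68 * t ^ 2 + 119.5) + 24.34 / 5 * y ^ 2 + 4 * (t + t ^ 2) * y + 14 * t ^ 2 * y) := by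
    clear_value t y
    rw [e3, e1, e2]
    field_simp
    ring
  have k3 : t * 0.0095 = 0.0095 / log x := by rw [ht]; ring
  have k4 : ∀ c : ℝ, c / log x = c * t := fun c => by rw [ht]; ring
  have k5 : ∀ c : ℝ, c / log x ^ 2 = c * t ^ 2 := fun c => by rw [ht]; ring
  rw [k1] at hP
  rw [k3] at hE
  have k6 : (0.99627 : ℝ) / log x = t - 0.00373 / log x := by rw [ht]; ring
  have k7 : (0.99627 : ℝ) / log x ^ 2 = 1 / log x ^ 2 - 0.00373 / log x ^ 2 := by ring
  rw [k6, k7] at hP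
  linarith

/-! ### Mertens' product along a sequence -/

/-- The logarithm `-log (1 - 1/p)` of the Euler factor `p / (p - 1)`. -/
noncomputable def eulerLog (p : ℕ) : ℝ := -log (1 - 1 / (p : ℝ))

/-- The logarithm of Mertens' product `∏_{p ≤ X} p / (p - 1)`. -/
noncomputable def mertens (X : ℝ) : ℝ := ∑ p ∈ Finset.Ioc 0 ⌊X⌋₊ with p.Prime, eulerLog p

lemma eulerLog_nonneg {p : ℕ} (hp : p.Prime) : 0 ≤ eulerLog p := by
  have h2 : (2 : ℝ) ≤ p := by exact_mod_cast hp.two_le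
  have h1 : 1 / (p : ℝ) ≤ 1 / 2 := by gcongr
  have h0 : 0 ≤ 1 / (p : ℝ) := by positivity
  unfold eulerLog
  linarith [log_nonpos (x := 1 - 1 / (p : ℝ)) (by linarith) (by linarith)]

/-- The completely multiplicative function `n ↦ n ^ (-σ)`. -/
noncomputable def rpowHom (σ : ℝ) (hσ : σ ≠ 0) : ℕ →*₀ ℝ where
  toFun n := (n : ℝ) ^ (-σ)
  map_zero' := by simp [zero_rpow (neg_ne_zero.2 hσ)]
  map_one' := by simp
  map_mul' m n := by
    push_cast
    exact mul_rpow (Nat.cast_nonneg m) (Nat.cast_nonneg n)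

/-- A partial Euler product is at most `ζ(σ)`. -/
lemma sum_log_euler_le {σ : ℝ} (hσ : 1 < σ) (M : ℕ) :
    ∑ p ∈ Finset.Ioc 0 M with p.Prime, -log (1 - (p : ℝ) ^ (-σ)) ≤
      log (∑' n : ℕ, 1 / (n : ℝ) ^ σ) := by
  have hσ0 : σ ≠ 0 := by linarith
  have hs : Summable (fun n => rpowHom σ hσ0 n) :=
    Real.summable_nat_rpow.2 (by linarith : -σ < -1)
  have hT := EulerProduct.eulerProduct_completely_multiplicative (f := rpowHom σ hσ0) hs.norm
  have e1 : ∑' n : ℕ, rpowHom σ hσ0 n = ∑' n : ℕ, 1 / (n : ℝ) ^ σ := by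
    refine tsum_congr fun n => ?_
    change (n : ℝ) ^ (-σ) = _
    rw [rpow_neg (Nat.cast_nonneg n), one_div]
  have h1 : 1 ≤ ∑' n : ℕ, rpowHom σ hσ0 n := by
    have := hs.le_tsum 1 (fun n _ => rpow_nonneg (Nat.cast_nonneg n) _)
    simpa using this
  have hL := (continuousAt_log (by linarith : (∑' n : ℕ, rpowHom σ hσ0 n) ≠ 0)).tendsto.comp hT
  have hlt : ∀ p : ℕ, p.Prime → 0 < (p : ℝ) ^ (-σ) ∧ (p : ℝ) ^ (-σ) < 1 := fun p hp => by
    have : (1 : ℝ) < p := by exact_mod_cast hp.one_lt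
    exact ⟨rpow_pos_of_pos (by linarith) _, rpow_lt_one_of_one_lt_of_neg this (by linarith)⟩
  have e2 : ∀ n : ℕ, log (∏ p ∈ Nat.primesBelow n, (1 - rpowHom σ hσ0 p)⁻¹) =
      ∑ p ∈ Nat.primesBelow n, -log (1 - (p : ℝ) ^ (-σ)) := by
    intro n
    rw [log_prod]
    · exact Finset.sum_congr rfl fun p _ => log_inv _
    · intro p hp
      have := hlt p (Nat.prime_of_mem_primesBelow hp)
      exact inv_ne_zero (by change 1 - (p : ℝ) ^ (-σ) ≠ 0; linarith)
  have hmono : Monotone (fun n : ℕ => ∑ p ∈ Nat.primesBelow n, -log (1 - (p : ℝ) ^ (-σ))) := by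
    intro m n hmn
    refine Finset.sum_le_sum_of_subset_of_nonneg ?_ ?_
    · exact Finset.filter_subset_filter _ (Finset.range_mono hmn)
    · intro p hp _
      have := hlt p (Nat.prime_of_mem_primesBelow hp)
      linarith [log_nonpos (x := 1 - (p : ℝ) ^ (-σ)) (by linarith) (by linarith)]
  rw [← e1]
  have hL' : Filter.Tendsto (fun n : ℕ => ∑ p ∈ Nat.primesBelow n, -log (1 - (p : ℝ) ^ (-σ)))
      Filter.atTop (nhds (log (∑' n : ℕ, rpowHom σ hσ0 n))) := by
    refine hL.congr fun n => ?_
    exact e2 n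
  refine le_trans (le_of_eq ?_) (hmono.ge_of_tendsto hL' (M + 1))
  refine Finset.sum_congr ?_ fun _ _ => rfl
  ext p
  simp only [Finset.mem_filter, Finset.mem_Ioc, Nat.primesBelow, Finset.mem_range]
  constructor
  · rintro ⟨⟨_, h⟩, hp⟩; exact ⟨by omega, hp⟩
  · rintro ⟨h, hp⟩; exact ⟨⟨hp.pos, by omega⟩, hp⟩

/-- Replacing `q · (-log (1 - v))` by `-log (1 - v q)` costs at most `2 v² (1 - q)`; it is used with
`v = 1/p` and `q = p^{-s}`. -/
lemma eulerLog_twist {v q : ℝ} (hv0 : 0 < v) (hv : v ≤ 1 / 2) (hq : q ≤ 1) :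
    -log (1 - v) * q ≤ -log (1 - v * q) + (1 - q) * (2 * v ^ 2) := by
  have h1 : 0 < 1 - v := by linarith
  have hvq : v * q ≤ v := by nlinarith
  have h2 : 0 < 1 - v * q := by linarith
  have h3 := log_le_sub_one_of_pos (div_pos h2 h1)
  rw [log_div h2.ne' h1.ne'] at h3
  have h4 := log_le_sub_one_of_pos h1
  have h5 : (1 - v * q) / (1 - v) - 1 = (1 - q) * (v / (1 - v)) := by field_simp; ring
  have h6 : v / (1 - v) ≤ v + 2 * v ^ 2 := by
    rw [div_le_iff₀ h1]; nlinarith [mul_nonneg (sq_nonneg v) (by linarith : 0 ≤ 1 - 2 * v)]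
  have h7 : (1 - q) * (v / (1 - v)) ≤ (1 - q) * (v + 2 * v ^ 2) :=
    mul_le_mul_of_nonneg_left h6 (by linarith)
  have h8 := mul_le_mul_of_nonneg_left h4 (by linarith : 0 ≤ 1 - q)
  nlinarith

/-- The error constant `∑ 4 n^{-3/2}`, which dominates `∑_p 2 log p / p²`. -/
noncomputable def twistConst : ℝ := ∑' n : ℕ, 4 * (n : ℝ) ^ (-(3 / 2) : ℝ)

lemma sum_twist_le {s : ℝ} (hs : 0 < s) (M : ℕ) :
    ∑ p ∈ Finset.Ioc 0 M with p.Prime, eulerLog p * exp (-(s * log p)) ≤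
      log (∑' n : ℕ, 1 / (n : ℝ) ^ (1 + s)) + s * twistConst := by
  have hsum : Summable (fun n : ℕ => 4 * (n : ℝ) ^ (-(3 / 2) : ℝ)) :=
    (Real.summable_nat_rpow.2 (by norm_num)).mul_left 4
  have hC := hsum.sum_le_tsum (Finset.filter Nat.Prime (Finset.Ioc 0 M))
    (fun n _ => mul_nonneg (by norm_num) (rpow_nonneg (Nat.cast_nonneg n) _))
  have hE := sum_log_euler_le (by linarith : 1 < 1 + s) M
  have : ∑ p ∈ Finset.Ioc 0 M with p.Prime, eulerLog p * exp (-(s * log p)) ≤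
      ∑ p ∈ Finset.Ioc 0 M with p.Prime, (-log (1 - (p : ℝ) ^ (-(1 + s))) +
        s * (4 * (p : ℝ) ^ (-(3 / 2) : ℝ))) := by
    refine Finset.sum_le_sum fun p hp => ?_
    have hpp := (Finset.mem_filter.1 hp).2
    have h2 : (2 : ℝ) ≤ p := by exact_mod_cast hpp.two_le
    have hp0 : (0 : ℝ) < p := by linarith
    have hl : 0 ≤ log p := log_nonneg (by linarith)
    have hq : exp (-(s * log p)) ≤ 1 := exp_le_one_iff.2 (by nlinarith [mul_nonneg hs.le hl])
    have h := eulerLog_twist (v := 1 / p) (by positivity)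
      (by gcongr) hq
    have e : 1 / (p : ℝ) * exp (-(s * log p)) = (p : ℝ) ^ (-(1 + s)) := by
      rw [rpow_def_of_pos hp0, mul_neg, mul_add, mul_one, neg_add, exp_add, exp_neg (log _), exp_log hp0,
        one_div, mul_comm s]
    rw [e] at h
    unfold eulerLog
    refine h.trans (add_le_add le_rfl ?_)
    have h1 : 1 - exp (-(s * log p)) ≤ s * log p := by
      linarith [add_one_le_exp (-(s * log p))]
    have h3 : log p ≤ 2 * (p : ℝ) ^ (1 / 2 : ℝ) := by
      have := log_le_rpow_div hp0.le (by norm_num : (0 : ℝ) < 1 / 2)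
      linarith
    have e2 : (p : ℝ) ^ (1 / 2 : ℝ) * (1 / (p : ℝ)) ^ 2 = (p : ℝ) ^ (-(3 / 2) : ℝ) := by
      have : (1 / (p : ℝ)) ^ 2 = (p : ℝ) ^ (-2 : ℝ) := by
        rw [rpow_neg hp0.le, one_div, inv_pow]; norm_cast
      rw [this, ← rpow_add hp0]; norm_num
    calc _ ≤ s * log p * (2 * (1 / (p : ℝ)) ^ 2) := by gcongr
      _ ≤ s * (2 * (p : ℝ) ^ (1 / 2 : ℝ)) * (2 * (1 / (p : ℝ)) ^ 2) := by gcongr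
      _ = s * (4 * ((p : ℝ) ^ (1 / 2 : ℝ) * (1 / (p : ℝ)) ^ 2)) := by ring
      _ = _ := by rw [e2]
  rw [Finset.sum_add_distrib, ← Finset.mul_sum] at this
  have h2 := mul_le_mul_of_nonneg_left hC hs.le
  unfold twistConst
  linarith

/-- Abel summation turns the sum over primes into a power series in `e^{-s}` whose coefficients
are the values of `mertens` at powers of `e`. -/
lemma abel_mertens_le {s : ℝ} (hs : 0 < s) (M : ℕ) :
    (1 - exp (-s)) * ∑ N ∈ Finset.range (M + 1), mertens (exp N) * exp (-s) ^ N ≤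
      log (∑' n : ℕ, 1 / (n : ℝ) ^ (1 + s)) + s * twistConst := by
  refine le_trans ?_ (sum_twist_le hs ⌊exp M⌋₊)
  have hz : exp (-s) < 1 := exp_lt_one_iff.2 (by linarith)
  set P := Finset.filter Nat.Prime (Finset.Ioc 0 ⌊exp (M : ℝ)⌋₊) with hP
  have e : ∀ N ∈ Finset.range (M + 1), mertens (exp N) * exp (-s) ^ N =
      ∑ p ∈ P, if log p ≤ N then eulerLog p * exp (-s) ^ N else 0 := by
    intro N hN
    rw [mertens, Finset.sum_mul, ← Finset.sum_filter]
    refine Finset.sum_congr ?_ fun _ _ => rfl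
    ext p
    simp only [hP, Finset.mem_filter, Finset.mem_Ioc]
    have hNM : exp (N : ℝ) ≤ exp (M : ℝ) := by
      gcongr; exact_mod_cast Nat.lt_succ_iff.1 (Finset.mem_range.1 hN)
    constructor
    · rintro ⟨⟨h0, h1⟩, hp⟩
      refine ⟨⟨⟨h0, h1.trans (Nat.floor_mono hNM)⟩, hp⟩, ?_⟩
      rw [log_le_iff_le_exp (by exact_mod_cast h0)]
      exact (Nat.le_floor_iff (exp_pos _).le).1 h1
    · rintro ⟨⟨⟨h0, _⟩, hp⟩, h2⟩
      rw [log_le_iff_le_exp (by exact_mod_cast h0)] at h2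
      exact ⟨⟨h0, (Nat.le_floor_iff (exp_pos _).le).2 h2⟩, hp⟩
  rw [Finset.sum_congr rfl e, Finset.sum_comm, Finset.mul_sum]
  refine Finset.sum_le_sum fun p hp => ?_
  have hpp := (Finset.mem_filter.1 hp).2
  have hl : 0 ≤ log (p : ℝ) := log_natCast_nonneg p
  rw [← Finset.sum_filter, ← Finset.mul_sum, ← mul_assoc, mul_comm (1 - _), mul_assoc]
  refine mul_le_mul_of_nonneg_left ?_ (eulerLog_nonneg hpp)
  have hsub : ∑ N ∈ Finset.range (M + 1) with log (p : ℝ) ≤ (N : ℕ), exp (-s) ^ N ≤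
      ∑ N ∈ Finset.Ico ⌈log (p : ℝ)⌉₊ (M + 1), exp (-s) ^ N := by
    refine Finset.sum_le_sum_of_subset_of_nonneg ?_ fun _ _ _ => by positivity
    intro N hN
    simp only [Finset.mem_filter, Finset.mem_range, Finset.mem_Ico] at hN ⊢
    exact ⟨Nat.ceil_le.2 hN.2, hN.1⟩
  have hg := hsub.trans (geom_sum_Ico_le_of_lt_one (exp_pos (-s)).le hz)
  rw [le_div_iff₀ (by linarith)] at hg
  rw [mul_comm]
  refine hg.trans ?_
  rw [← exp_nat_mul]
  apply exp_le_exp.2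
  nlinarith [Nat.le_ceil (log (p : ℝ))]

/-- Abel summation for the harmonic numbers, the comparison series for `abel_mertens_le`. -/
lemma abel_Harm (z : ℝ) (M : ℕ) :
    (1 - z) * ∑ N ∈ Finset.range (M + 1), Harm N * z ^ N =
      ∑ n ∈ Finset.range M, z ^ (n + 1) / (n + 1) - Harm M * z ^ (M + 1) := by
  induction M with
  | zero => simp [Harm]
  | succ M ih =>
    rw [Finset.sum_range_succ, mul_add, ih, Finset.sum_range_succ _ M, Harm_succ]
    field_simp
    ring

lemma Harm_le_self (N : ℕ) : Harm N ≤ N := by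
  induction N with
  | zero => simp [Harm]
  | succ N ih =>
    rw [Harm_succ]
    have : 1 / ((N : ℝ) + 1) ≤ 1 := by
      rw [div_le_one (by positivity)]; linarith [Nat.cast_nonneg (α := ℝ) N]
    push_cast; linarith

lemma Harm_nonneg (N : ℕ) : 0 ≤ Harm N := Finset.sum_nonneg fun _ _ => by positivity

lemma mertens_nonneg (X : ℝ) : 0 ≤ mertens X :=
  Finset.sum_nonneg fun _ hp => eulerLog_nonneg (Finset.mem_filter.1 hp).2

/-- If `mertens (e^N)` exceeded the harmonic number by `δ` for all large `N`, then the power series of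
`abel_mertens_le` would exceed that of the harmonic numbers, which is `-log (1 - e^{-s}) ≈ -log s`. -/
lemma mertens_compare {δ : ℝ} {N₀ : ℕ} (h : ∀ N, N₀ ≤ N → Harm N + δ ≤ mertens (exp N)) {s : ℝ}
    (hs : 0 < s) :
    δ * exp (-s) ^ N₀ ≤
      log (s * ∑' n : ℕ, 1 / (n : ℝ) ^ (1 + s)) + s * twistConst + s * (N₀ * N₀) := by
  set z := exp (-s) with hz
  have hz0 : 0 < z := exp_pos _
  have hz1 : z < 1 := exp_lt_one_iff.2 (by linarith)
  set T := ∑' n : ℕ, 1 / (n : ℝ) ^ (1 + s) with hT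
  -- the inequality for finite sums
  have hfin : ∀ M, N₀ ≤ M → ∑ n ∈ Finset.range M, z ^ (n + 1) / (n + 1) - Harm M * z ^ (M + 1) +
      δ * (z ^ N₀ - z ^ (M + 1)) - (1 - z) * (N₀ * N₀) ≤ log T + s * twistConst := by
    intro M hM
    refine le_trans ?_ (abel_mertens_le hs M)
    rw [← abel_Harm]
    have hpt : ∀ N ∈ Finset.range (M + 1), Harm N * z ^ N + (if N₀ ≤ N then δ * z ^ N else 0) -
        (if N < N₀ then (N₀ : ℝ) else 0) ≤ mertens (exp N) * z ^ N := by
      intro N _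
      by_cases hN : N₀ ≤ N
      · simp only [hN, if_true, not_lt.2 hN, if_false, sub_zero]
        rw [← add_mul]
        exact mul_le_mul_of_nonneg_right (h N hN) (by positivity)
      · simp only [hN, if_false, not_le.1 hN, if_true, add_zero]
        have h1 : Harm N * z ^ N ≤ N * 1 :=
          mul_le_mul (Harm_le_self N) (pow_le_one₀ hz0.le hz1.le) (by positivity)
            (Nat.cast_nonneg _)
        have h2 : (N : ℝ) ≤ N₀ := by exact_mod_cast (not_le.1 hN).le
        have h3 := mul_nonneg (mertens_nonneg (exp N)) (pow_nonneg hz0.le N)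
        linarith
    have hsum := Finset.sum_le_sum hpt
    rw [Finset.sum_sub_distrib, Finset.sum_add_distrib] at hsum
    have e1 : ∑ N ∈ Finset.range (M + 1), (if N₀ ≤ N then δ * z ^ N else 0) * (1 - z) =
        δ * (z ^ N₀ - z ^ (M + 1)) := by
      rw [← Finset.sum_mul, ← Finset.sum_filter, ← Finset.mul_sum]
      have : Finset.filter (fun N => N₀ ≤ N) (Finset.range (M + 1)) = Finset.Ico N₀ (M + 1) := by
        ext N; simp only [Finset.mem_filter, Finset.mem_range, Finset.mem_Ico]; tauto
      rw [this, geom_sum_Ico' hz1.ne (by omega)]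
      have : 1 - z ≠ 0 := by linarith
      field_simp
    have e2 : ∑ N ∈ Finset.range (M + 1), (if N < N₀ then (N₀ : ℝ) else 0) ≤ N₀ * N₀ := by
      rw [← Finset.sum_filter, Finset.sum_const, nsmul_eq_mul]
      refine mul_le_mul_of_nonneg_right ?_ (Nat.cast_nonneg _)
      have : Finset.filter (fun N => N < N₀) (Finset.range (M + 1)) ⊆ Finset.range N₀ := by
        intro N; simp only [Finset.mem_filter, Finset.mem_range]; tauto
      have := Finset.card_le_card this
      rw [Finset.card_range] at this
      exact_mod_cast this
    rw [← Finset.sum_mul] at e1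
    have h5 := mul_le_mul_of_nonneg_left hsum (by linarith : 0 ≤ 1 - z)
    have h6 := mul_le_mul_of_nonneg_left e2 (by linarith : 0 ≤ 1 - z)
    rw [mul_sub, mul_add] at h5
    linarith
  -- let `M` tend to infinity
  have hpow : Filter.Tendsto (fun M : ℕ => z ^ (M + 1)) Filter.atTop (nhds 0) :=
    (tendsto_pow_atTop_nhds_zero_of_lt_one hz0.le hz1).comp (Filter.tendsto_add_atTop_nat 1)
  have hHz : Filter.Tendsto (fun M : ℕ => Harm M * z ^ (M + 1)) Filter.atTop (nhds 0) := by
    refine squeeze_zero (fun M => mul_nonneg (Harm_nonneg M) (by positivity)) (fun M => ?_)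
      (tendsto_self_mul_const_pow_of_lt_one hz0.le hz1)
    exact mul_le_mul (Harm_le_self M) (pow_le_pow_of_le_one hz0.le hz1.le (by omega))
      (by positivity) (Nat.cast_nonneg _)
  have hlog := (hasSum_pow_div_log_of_abs_lt_one (x := z) (by rw [abs_of_pos hz0]; exact hz1)).tendsto_sum_nat
  have hlim := ((hlog.sub hHz).add ((hpow.const_sub (z ^ N₀)).const_mul δ)).sub_const
    ((1 - z) * (N₀ * N₀ : ℝ))
  have hfinal := le_of_tendsto hlim (Filter.eventually_atTop.2 ⟨N₀, hfin⟩)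
  have hzs : 1 - z ≤ s := by linarith [add_one_le_exp (-s)]
  have hTpos : 0 < T := by
    have hsum : Summable (fun n : ℕ => 1 / (n : ℝ) ^ (1 + s)) :=
      Real.summable_one_div_nat_rpow.2 (by linarith)
    have := hsum.le_tsum 1 (fun n _ => by positivity)
    have h1 : (1 : ℝ) ≤ T := by simpa [hT] using this
    linarith
  rw [log_mul hs.ne' hTpos.ne']
  have h7 : log (1 - z) ≤ log s := log_le_log (by linarith) hzs
  have h8 : (1 - z) * (N₀ * N₀ : ℝ) ≤ s * (N₀ * N₀) := by gcongr
  linarith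

/-- One half of Mertens' third theorem, along a sequence: `mertens X ≤ log log X + γ + o(1)` for
arbitrarily large `X`. The residue of the zeta function at `1` supplies the constant `γ`. -/
lemma exists_mertens_le {δ : ℝ} (hδ : 0 < δ) (N₀ : ℕ) :
    ∃ N, N₀ ≤ N ∧ mertens (exp N) ≤ Harm N + δ := by
  by_contra! hcon
  have hc : ∀ s : ℝ, 0 < s → δ * exp (-s) ^ N₀ ≤
      log (s * ∑' n : ℕ, 1 / (n : ℝ) ^ (1 + s)) + s * twistConst + s * (N₀ * N₀) := fun s hs =>
    mertens_compare (fun N hN => (hcon N hN).le) hs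
  have h1 : Filter.Tendsto (fun s : ℝ => s * ∑' n : ℕ, 1 / (n : ℝ) ^ (1 + s)) (nhdsWithin 0 (Set.Ioi 0))
      (nhds 1) := by
    have hshift : Filter.Tendsto (fun s : ℝ => 1 + s) (nhdsWithin 0 (Set.Ioi 0))
        (nhdsWithin 1 (Set.Ioi 1)) := by
      refine tendsto_nhdsWithin_iff.2 ⟨?_, ?_⟩
      · have : Filter.Tendsto (fun s : ℝ => 1 + s) (nhds 0) (nhds (1 + 0)) :=
          (continuous_const.add continuous_id).tendsto 0
        rw [add_zero] at this
        exact this.mono_left nhdsWithin_le_nhds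
      · filter_upwards [self_mem_nhdsWithin] with s hs
        simpa using hs
    refine (tendsto_sub_mul_tsum_nat_rpow.comp hshift).congr fun s => ?_
    simp
  have h2 := (continuousAt_log (one_ne_zero)).tendsto.comp h1
  rw [log_one] at h2
  have hid : Filter.Tendsto (fun s : ℝ => s) (nhdsWithin 0 (Set.Ioi 0)) (nhds 0) :=
    Filter.tendsto_id.mono_left nhdsWithin_le_nhds
  have h3 := (h2.add (hid.mul_const twistConst)).add (hid.mul_const (N₀ * N₀ : ℝ))
  have h4 : Filter.Tendsto (fun s : ℝ => δ * exp (-s) ^ N₀) (nhdsWithin 0 (Set.Ioi 0)) (nhds δ) := by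
    have : Filter.Tendsto (fun s : ℝ => δ * exp (-s) ^ N₀) (nhds 0)
        (nhds (δ * exp (-0) ^ N₀)) := by
      apply Continuous.tendsto; fun_prop
    simp only [neg_zero, exp_zero, one_pow, mul_one] at this
    exact this.mono_left nhdsWithin_le_nhds
  have h5 := le_of_tendsto_of_tendsto h4 h3
    (by filter_upwards [self_mem_nhdsWithin] with s hs using hc s hs)
  simp only [zero_mul, add_zero] at h5
  linarith

/-! ### The sum over an arbitrary set of primes -/

lemma eulerLog_anti {p : ℕ} {x : ℝ} (hx : 1 < x) (hp : x < p) : eulerLog p ≤ -log (1 - 1 / x) := by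
  unfold eulerLog
  have h1 : 1 / (p : ℝ) ≤ 1 / x := by gcongr
  have h2 : 1 / x < 1 := by rw [div_lt_one (by linarith)]; exact hx
  exact neg_le_neg (log_le_log (by linarith) (by linarith))

lemma eulerLog_mono {p : ℕ} {x : ℝ} (hp : p.Prime) (hx : (p : ℝ) ≤ x) :
    -log (1 - 1 / x) ≤ eulerLog p := by
  unfold eulerLog
  have h2 : (2 : ℝ) ≤ p := by exact_mod_cast hp.two_le
  have h1 : 1 / x ≤ 1 / (p : ℝ) := by gcongr
  have h3 : 1 / (p : ℝ) < 1 := by rw [div_lt_one (by linarith)]; linarith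
  exact neg_le_neg (log_le_log (by linarith) (by linarith))

lemma le_neg_log_one_sub {v : ℝ} (hv : v < 1) : v ≤ -log (1 - v) := by
  linarith [log_le_sub_one_of_pos (by linarith : 0 < 1 - v)]

lemma neg_log_one_sub_le {v : ℝ} (hv : v ≤ 1 / 2) : -log (1 - v) ≤ v + 2 * v ^ 2 := by
  have h1 : 0 < 1 - v := by linarith
  have h := log_le_sub_one_of_pos (inv_pos.2 h1)
  rw [log_inv] at h
  refine h.trans ?_
  have : (1 - v)⁻¹ ≤ v + 2 * v ^ 2 + 1 := by
    rw [inv_le_iff_one_le_mul₀ h1]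
    nlinarith [mul_nonneg (sq_nonneg v) (by linarith : 0 ≤ 1 - 2 * v)]
  linarith

/-- Comparison of an arbitrary set of primes with the primes up to `x`: replacing a prime above
`x` by a missing one below `x` increases the sum. -/
lemma sum_eulerLog_le {S : Finset ℕ} (hS : ∀ p ∈ S, p.Prime) {x : ℝ} (hx : 2 ≤ x) :
    ∑ p ∈ S, eulerLog p ≤ mertens x - Nat.primeCounting ⌊x⌋₊ / x +
      S.card * (1 / x + 2 * (1 / x) ^ 2) := by
  have x0 : 0 < x := by linarith
  set φ := -log (1 - 1 / x) with hφ
  set P := Finset.filter Nat.Prime (Finset.Ioc 0 ⌊x⌋₊) with hP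
  have hxh : 1 / x ≤ 1 / 2 := by gcongr
  have hmem : ∀ p : ℕ, p.Prime → (p ∈ P ↔ (p : ℝ) ≤ x) := by
    intro p hp
    simp only [hP, Finset.mem_filter, Finset.mem_Ioc, Nat.le_floor_iff x0.le]
    exact ⟨fun h => h.1.2, fun h => ⟨⟨hp.pos, h⟩, hp⟩⟩
  -- `eulerLog p - φ` is nonnegative exactly for `p ≤ x`
  have h1 : ∑ p ∈ S, (eulerLog p - φ) ≤ ∑ p ∈ P, (eulerLog p - φ) := by
    have a : ∑ p ∈ S, (eulerLog p - φ) ≤ ∑ p ∈ S with p ∈ P, (eulerLog p - φ) := by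
      rw [← Finset.sum_filter_add_sum_filter_not S (· ∈ P)]
      have : ∑ p ∈ S with ¬ p ∈ P, (eulerLog p - φ) ≤ 0 := by
        refine Finset.sum_nonpos fun p hp => ?_
        obtain ⟨hpS, hpP⟩ := Finset.mem_filter.1 hp
        rw [hmem p (hS p hpS), not_le] at hpP
        linarith [eulerLog_anti (by linarith) hpP]
      linarith
    refine a.trans (Finset.sum_le_sum_of_subset_of_nonneg ?_ ?_)
    · intro p hp; exact (Finset.mem_filter.1 hp).2
    · intro p hp _
      have hpp := (Finset.mem_filter.1 hp).2
      linarith [eulerLog_mono hpp ((hmem p hpp).1 hp)]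
  have hcard : P.card = Nat.primeCounting ⌊x⌋₊ := by
    rw [Nat.primeCounting, Nat.primeCounting', Nat.count_eq_card_filter_range]
    congr 1
    ext p
    simp only [hP, Finset.mem_filter, Finset.mem_Ioc, Finset.mem_range]
    constructor
    · rintro ⟨⟨_, h⟩, hp⟩; exact ⟨by omega, hp⟩
    · rintro ⟨h, hp⟩; exact ⟨⟨hp.pos, by omega⟩, hp⟩
  rw [Finset.sum_sub_distrib, Finset.sum_sub_distrib, Finset.sum_const, Finset.sum_const, hcard,
    nsmul_eq_mul, nsmul_eq_mul] at h1
  have h2 : (S.card : ℝ) * φ ≤ S.card * (1 / x + 2 * (1 / x) ^ 2) := by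
    gcongr
    exact neg_log_one_sub_le hxh
  have h3 : (Nat.primeCounting ⌊x⌋₊ : ℝ) / x ≤ Nat.primeCounting ⌊x⌋₊ * φ := by
    rw [div_eq_mul_one_div]
    gcongr
    exact le_neg_log_one_sub (by linarith)
  have h4 : mertens x = ∑ p ∈ P, eulerLog p := rfl
  linarith

lemma mertens_split {x X : ℝ} (hX : x ≤ X) :
    mertens x + ∑ p ∈ Finset.Ioc ⌊x⌋₊ ⌊X⌋₊ with p.Prime, 1 / (p : ℝ) ≤ mertens X := by
  have e : mertens X = mertens x + ∑ p ∈ Finset.Ioc ⌊x⌋₊ ⌊X⌋₊ with p.Prime, eulerLog p := by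
    unfold mertens
    rw [Finset.sum_filter, Finset.sum_filter, Finset.sum_filter]
    exact (Finset.sum_Ioc_consecutive _ (Nat.zero_le _) (Nat.floor_mono hX)).symm
  rw [e]
  refine add_le_add le_rfl (Finset.sum_le_sum fun p hp => le_neg_log_one_sub ?_)
  have h2 : (1 : ℝ) < p := by exact_mod_cast (Finset.mem_filter.1 hp).2.one_lt
  rw [div_lt_one (by linarith)]; exact h2

/-- The main analytic bound: when `k` equals the (truncated) expansion of `li(x)`, every set of
`k` primes satisfies `∑ -log (1 - 1/p) ≤ γ + log log x + 0.0096 / log x`. -/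
lemma sum_eulerLog_bound {S : Finset ℕ} (hS : ∀ p ∈ S, p.Prime) {l : ℝ} (hl : 117 / 8 ≤ l)
    (hk : (S.card : ℝ) = exp l * (1 / l + 1 / l ^ 2 + 2 / l ^ 3 + 6 / l ^ 4)) :
    ∑ p ∈ S, eulerLog p ≤ eulerMascheroniConstant + log l + 0.0096 / l := by
  have l0 : 0 < l := by linarith
  set x := exp l with hx
  have hlx : log x = l := log_exp l
  have hx6 : (40000 : ℝ) ≤ x := by
    have h1 : exp 11 ≤ x := exp_le_exp.2 (by linarith)
    have h2 : exp (11 : ℝ) = exp 1 ^ 11 := by rw [← exp_nat_mul]; norm_num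
    have h3 : (2.7 : ℝ) ^ 11 ≤ exp 1 ^ 11 := by
      have := exp_one_gt_d9
      gcongr; linarith
    have h4 : (40000 : ℝ) ≤ 2.7 ^ 11 := by norm_num
    linarith
  have x0 : 0 < x := by linarith
  -- `N` is so large that the terms `100 / log X` and `Harm N - log N - γ` are at most `ε / 2`
  refine le_of_forall_pos_le_add fun ε hε => ?_
  obtain ⟨N₁, hN₁⟩ := exists_nat_gt (max x (202 / ε))
  obtain ⟨N, hN, hm⟩ := exists_mertens_le (half_pos hε) N₁
  have hN1 : (N₁ : ℝ) ≤ N := by exact_mod_cast hN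
  have hNx : x ≤ N := by linarith [le_max_left x (202 / ε)]
  have hNε : 202 / ε ≤ N := by linarith [le_max_right x (202 / ε)]
  have hN0 : (0 : ℝ) < N := by linarith
  have hNpos : 1 ≤ N := by exact_mod_cast hN0
  have hX : x ≤ exp N := by linarith [add_one_le_exp (N : ℝ)]
  have h1 := prime_sum_lower (x := x) (X := exp N) (by linarith) (by rw [hlx]; exact hl) hX
  rw [hlx, log_exp] at h1
  have h2 := mertens_split hX
  have h3 := Harm_upper hNpos
  have h4 := sum_eulerLog_le hS (x := x) (by linarith)
  have h5 : 101 / (N : ℝ) ≤ ε / 2 := by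
    rw [div_le_iff₀ hN0]
    rw [div_le_iff₀ hε] at hNε
    linarith
  have h6 : 1 / (2 * (N : ℝ)) ≤ 1 / N := by
    gcongr; linarith
  have e1 : (S.card : ℝ) * (1 / x + 2 * (1 / x) ^ 2) =
      (1 / l + 1 / l ^ 2 + 2 / l ^ 3 + 6 / l ^ 4) +
      2 / x * (1 / l + 1 / l ^ 2 + 2 / l ^ 3 + 6 / l ^ 4) := by
    rw [hk]; field_simp
  have h7 : 1 / l + 1 / l ^ 2 + 2 / l ^ 3 + 6 / l ^ 4 ≤ 2 / l := by
    have : 2 / l - (1 / l + 1 / l ^ 2 + 2 / l ^ 3 + 6 / l ^ 4) =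
      (l ^ 3 - l ^ 2 - 2 * l - 6) / l ^ 4 := by field_simp; ring
    have h8 : 0 ≤ (l ^ 3 - l ^ 2 - 2 * l - 6) / l ^ 4 := by
      apply div_nonneg _ (by positivity)
      nlinarith [mul_nonneg (sq_nonneg l) (by linarith : 0 ≤ l - 14)]
    linarith
  have h9 : 2 / x * (1 / l + 1 / l ^ 2 + 2 / l ^ 3 + 6 / l ^ 4) ≤ 0.00005 * (2 / l) := by
    have : 2 / x ≤ 0.00005 := by rw [div_le_iff₀ x0]; linarith
    gcongr
  have e2 : 0.00005 * (2 / l) = 0.0001 / l := by ring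
  have e3 : 0.0096 / l = 0.0095 / l + 0.0001 / l := by ring
  have e4 : 101 / (N : ℝ) = 100 / N + 1 / N := by ring
  rw [e1] at h4
  rw [e2] at h9
  rw [e3]
  rw [e4] at h5
  linarith

/-- The threshold `166000` is where the parameter reaches `117/8`. -/
lemma exists_log_param {k : ℕ} (hk : 166000 ≤ k) :
    ∃ l : ℝ, 117 / 8 ≤ l ∧ (k : ℝ) = exp l * (1 / l + 1 / l ^ 2 + 2 / l ^ 3 + 6 / l ^ 4) := by
  have hkr : (166000 : ℝ) ≤ k := by exact_mod_cast hk
  have hcont : ContinuousOn (fun l : ℝ => exp l * (1 / l + 1 / l ^ 2 + 2 / l ^ 3 + 6 / l ^ 4))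
      (Set.Icc (117 / 8) k) := by
    intro l hl
    have a1 : l ≠ 0 := by linarith [hl.1]
    have a2 := pow_ne_zero 2 a1
    have a3 := pow_ne_zero 3 a1
    have a4 := pow_ne_zero 4 a1
    refine ContinuousAt.continuousWithinAt ?_
    fun_prop (disch := assumption)
  -- an eighth power clears the denominator of `117 / 8`
  have hlo : exp (117 / 8 : ℝ) ≤ 2248000 := by
    have h8 : exp (117 / 8 : ℝ) ^ 8 ≤ 2248000 ^ 8 := by
      have e : exp (117 / 8 : ℝ) ^ 8 = exp 1 ^ 117 := by
        rw [← exp_nat_mul, ← exp_nat_mul]; norm_num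
      rw [e]
      calc exp 1 ^ 117 ≤ 2.7182818286 ^ 117 := by
            have := exp_one_lt_d9
            gcongr
        _ ≤ 2248000 ^ 8 := by norm_num
    exact le_of_pow_le_pow_left₀ (by norm_num) (by norm_num) h8
  have hhi : (k : ℝ) ≤ exp k * (1 / k + 1 / (k : ℝ) ^ 2 + 2 / (k : ℝ) ^ 3 + 6 / (k : ℝ) ^ 4) := by
    have k0 : (0 : ℝ) < k := by linarith
    have h2 : (k : ℝ) ^ 2 ≤ exp k := by
      have := pow_div_factorial_le_exp k (by linarith) 3
      norm_num [Nat.factorial] at this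
      nlinarith [mul_nonneg (sq_nonneg (k : ℝ)) (by linarith : (0 : ℝ) ≤ k - 6)]
    calc (k : ℝ) = (k : ℝ) ^ 2 * (1 / k) := by field_simp
      _ ≤ exp k * (1 / k) := by gcongr
      _ ≤ _ := by
        gcongr
        have : 0 ≤ 1 / (k : ℝ) ^ 2 + 2 / (k : ℝ) ^ 3 + 6 / (k : ℝ) ^ 4 := by positivity
        linarith
  obtain ⟨l, hl, he⟩ := intermediate_value_Icc (by linarith) hcont
    (show (k : ℝ) ∈ Set.Icc _ _ from ⟨by
      refine le_trans ?_ hkr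
      calc _ ≤ (2248000 : ℝ) * (1 / (117 / 8) + 1 / (117 / 8) ^ 2 + 2 / (117 / 8) ^ 3 +
            6 / (117 / 8) ^ 4) := by gcongr
        _ ≤ 166000 := by norm_num, hhi⟩)
  exact ⟨l, hl.1, he.symm⟩

/-! ### The final one-variable inequality -/

/-- The tangent to the logarithm at `117/8`, the smallest admissible value of `l`. -/
lemma log_le_tangent {l : ℝ} (hl : 0 < l) : log l ≤ 1.6828 + 8 / 117 * l := by
  have h15 : log (117 / 8) ≤ 2.6828 := by
    rw [log_le_iff_le_exp (by norm_num)]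
    refine le_trans ?_ (sum_le_exp_of_nonneg (by norm_num) 14)
    norm_num [Finset.sum_range_succ, Nat.factorial]
  have h := log_le_sub_one_of_pos (x := l / (117 / 8)) (by positivity)
  rw [log_div hl.ne' (by norm_num)] at h
  linarith

lemma log_log_two_ge : -0.36652 ≤ log (log 2) := by
  rw [le_log_iff_exp_le (by linarith [log_two_gt_d9])]
  have h := exp_neg_le_of_sum (q := 0.36652) (B := 0.693147) (by norm_num) 9 (by norm_num)
    (by norm_num [Finset.sum_range_succ, Nat.factorial])
  linarith [log_two_gt_d9]

lemma exp_neg_gamma_ge : 0.56141 ≤ exp (-eulerMascheroniConstant) := by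
  have h1 : exp (0.5773 : ℝ) ≤ 1 / 0.56141 := by
    refine (Real.exp_bound' (by norm_num) (by norm_num) (n := 10) (by norm_num)).trans ?_
    norm_num [Finset.sum_range_succ, Nat.factorial]
  have h2 : exp (-0.5773 : ℝ) ≤ exp (-eulerMascheroniConstant) :=
    exp_le_exp.2 (by linarith [gamma_lt])
  have h3 : exp (-0.5773 : ℝ) * exp 0.5773 = 1 := by rw [← exp_add]; norm_num
  nlinarith [exp_pos (-0.5773 : ℝ)]

lemma log_series_ge {t : ℝ} (h0 : 0 ≤ t) (h1 : t ≤ 8 / 117) :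
    t + 1.5 * t ^ 2 ≤ log (1 + t + 2 * t ^ 2 + 6 * t ^ 3) := by
  rw [le_log_iff_exp_le (by positivity)]
  refine (Real.exp_bound' (by positivity) (by nlinarith) (n := 3) (by norm_num)).trans ?_
  norm_num [Finset.sum_range_succ, Nat.factorial]
  have h2 : t ^ 2 * t ^ 2 ≤ (8 / 117) * t ^ 3 := by
    nlinarith [pow_nonneg h0 3]
  have hv : t + 3 / 2 * t ^ 2 ≤ 1.2 * t := by nlinarith
  have h3 : (t + 3 / 2 * t ^ 2) ^ 3 ≤ (1.2 * t) ^ 3 := by gcongr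
  nlinarith [pow_nonneg h0 3]

/-- The left factor is `l k / e^l`, the right factor a lower bound for `log (k log 2) / l`, both in terms
of `t = 1/l`. -/
lemma poly_ge {t : ℝ} (h0 : 0 ≤ t) (h1 : t ≤ 8 / 117) :
    0.8594 ≤ (1 + t + 2 * t ^ 2 + 6 * t ^ 3) *
      (0.931623 - 2.04932 * t + t ^ 2 + 1.5 * t ^ 3) := by
  have a : t ^ 2 * t ^ 2 ≤ (8 / 117) ^ 2 * t ^ 2 := by gcongr
  have b : t ^ 2 * t ^ 3 ≥ 0 := by positivity
  have c : t ^ 3 * t ^ 3 ≥ 0 := by positivity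
  have d : t ^ 3 ≥ 0 := by positivity
  nlinarith [sq_nonneg t]

/-- With `log k = l - log l + log (1 + 1/l + ⋯)`, the quantity `A = log (k log 2)` satisfies
`l e^{0.0096/l} ≤ A + log A + 0.94 e^{-γ}`. -/
lemma final_ineq {k l : ℝ} (hl : 117 / 8 ≤ l)
    (hk : k = exp l * (1 / l + 1 / l ^ 2 + 2 / l ^ 3 + 6 / l ^ 4)) :
    1 < k * log 2 ∧ l * exp (0.0096 / l) ≤
      log (k * log 2) + log (log (k * log 2)) + 0.94 * exp (-eulerMascheroniConstant) := by
  have l0 : 0 < l := by linarith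
  obtain ⟨t, ht⟩ : ∃ t, t = 1 / l := ⟨_, rfl⟩
  have hlt : l * t = 1 := by rw [ht]; field_simp
  have t0 : 0 < t := by rw [ht]; positivity
  have t1 : t ≤ 8 / 117 := by
    rw [ht, div_le_div_iff₀ l0 (by norm_num)]; linarith
  obtain ⟨P, hP⟩ : ∃ P, P = 1 + t + 2 * t ^ 2 + 6 * t ^ 3 := ⟨_, rfl⟩
  have P0 : 0 < P := by rw [hP]; positivity
  have hk' : k = exp l * (t * P) := by
    rw [hk, hP, ht]; field_simp
  have log2 : 0 < log 2 := log_pos (by norm_num)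
  have hA : log (k * log 2) = l - log l + log P + log (log 2) := by
    have htl : log t = -log l := by rw [ht, one_div, log_inv]
    rw [hk', log_mul (by positivity) (by positivity), log_mul (by positivity) (by positivity),
      log_mul (by positivity) (by positivity), log_exp, htl]
    ring
  have hm := log_series_ge t0.le t1
  rw [← hP] at hm
  obtain ⟨w, hw⟩ : ∃ w, w = 0.931623 - 2.04932 * t + t ^ 2 + 1.5 * t ^ 3 := ⟨_, rfl⟩
  have w0 : 0 < w := by rw [hw]; nlinarith [pow_pos t0 3, pow_pos t0 2]
  have hAge : l * w ≤ log (k * log 2) := by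
    have e : l * w = 0.931623 * l - 2.04932 + t + 1.5 * t ^ 2 := by
      rw [hw]; linear_combination (-2.04932 + t + 1.5 * t ^ 2) * hlt
    rw [hA, e]
    linarith [log_le_tangent l0, log_log_two_ge]
  have hA0 : 0 < log (k * log 2) := lt_of_lt_of_le (by positivity) hAge
  have hk0 : 0 < k * log 2 := by rw [hk']; positivity
  refine ⟨(log_pos_iff hk0.le).1 hA0, ?_⟩
  have hlogA : log l + log w ≤ log (log (k * log 2)) := by
    rw [← log_mul l0.ne' w0.ne']
    exact log_le_log (by positivity) hAge
  have hPw : -0.15159 ≤ log P + log w := by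
    rw [← log_mul P0.ne' w0.ne', le_log_iff_exp_le (by positivity)]
    refine le_trans (exp_neg_le_of_sum (q := 0.15159) (B := 0.8594) (by norm_num) 6 (by norm_num)
      (by norm_num [Finset.sum_range_succ, Nat.factorial])) ?_
    rw [hP, hw]
    exact poly_ge t0.le t1
  have hE : l * exp (0.0096 / l) ≤ l + 0.00961 := by
    have e : 0.0096 / l = 0.0096 * t := by rw [ht]; ring
    rw [e]
    have h1 : exp (0.0096 * t) ≤ 1 + 0.00961 * t := by
      refine (Real.exp_bound' (by positivity) (by linarith) (n := 2) (by norm_num)).trans ?_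
      norm_num [Finset.sum_range_succ, Nat.factorial]
      nlinarith
    nlinarith
  linarith [exp_neg_gamma_ge, log_log_two_ge]

/-! ### Divisor functions -/

lemma div_totient_eq {n : ℕ} (hn : n ≠ 0) :
    (n : ℝ) / (Nat.totient n : ℝ) = exp (∑ p ∈ n.primeFactors, eulerLog p) := by
  have h : (Nat.totient n : ℝ) = n * ∏ p ∈ n.primeFactors, (1 - (p : ℝ)⁻¹) := by
    have h := congrArg (fun q : ℚ => (q : ℝ)) (Nat.totient_eq_mul_prod_factors n)
    push_cast at h
    exact h
  have hpos : ∀ p ∈ n.primeFactors, 0 < 1 - (p : ℝ)⁻¹ := fun p hp => by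
    have : (1 : ℝ) < p := by exact_mod_cast (Nat.prime_of_mem_primeFactors hp).one_lt
    have := inv_lt_one_of_one_lt₀ this
    linarith
  have hP := Finset.prod_pos hpos
  have e : exp (∑ p ∈ n.primeFactors, eulerLog p) =
      (∏ p ∈ n.primeFactors, (1 - (p : ℝ)⁻¹))⁻¹ := by
    rw [exp_sum, ← Finset.prod_inv_distrib]
    refine Finset.prod_congr rfl fun p hp => ?_
    rw [eulerLog, exp_neg, one_div, exp_log (hpos p hp)]
  have hn' : (n : ℝ) ≠ 0 := by exact_mod_cast hn
  rw [e, h]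
  field_simp

lemma sum_divisors_mul_totient_le {n : ℕ} (hn : n ≠ 0) :
    (∑ d ∈ n.divisors, d) * Nat.totient n ≤ n * n := by
  have e : n * n = ∏ p ∈ n.primeFactors, p ^ n.factorization p * p ^ n.factorization p := by
    rw [Finset.prod_mul_distrib]
    have := Nat.prod_factorization_pow_eq_self hn
    rw [Finsupp.prod, Nat.support_factorization] at this
    rw [this]
  rw [Nat.sum_divisors hn, Nat.totient_eq_prod_factorization hn, Finsupp.prod,
    Nat.support_factorization, ← Finset.prod_mul_distrib, e]
  refine Finset.prod_le_prod' fun p hp => ?_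
  have hp2 := (Nat.prime_of_mem_primeFactors hp).two_le
  have ha : n.factorization p ≠ 0 := by
    rwa [← Finsupp.mem_support_iff, Nat.support_factorization]
  obtain ⟨a, ha⟩ := Nat.exists_eq_succ_of_ne_zero ha
  -- a geometric sum: `(1 + p + ⋯ + p^(a+1)) (p - 1) = p^(a+2) - 1`
  have g := Nat.geomSum_eq hp2 (a + 1 + 1)
  have g2 : (∑ k ∈ Finset.range (a + 1 + 1), p ^ k) * (p - 1) ≤ p ^ (a + 1 + 1) := by
    rw [g]
    exact (Nat.div_mul_le_self _ _).trans (Nat.sub_le _ _)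
  rw [ha]
  simp only [Nat.succ_eq_add_one, Nat.add_sub_cancel]
  calc (∑ k ∈ Finset.range (a + 1 + 1), p ^ k) * (p ^ a * (p - 1))
      = p ^ a * ((∑ k ∈ Finset.range (a + 1 + 1), p ^ k) * (p - 1)) := by ring
    _ ≤ p ^ a * p ^ (a + 1 + 1) := Nat.mul_le_mul_left _ g2
    _ = p ^ (a + 1) * p ^ (a + 1) := by ring

lemma two_pow_card_le_card_divisors {n : ℕ} (hn : n ≠ 0) :
    2 ^ n.primeFactors.card ≤ n.divisors.card := by
  rw [Nat.card_divisors hn]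
  refine Finset.pow_card_le_prod _ _ _ fun p hp => ?_
  have ha : n.factorization p ≠ 0 := by
    rwa [← Finsupp.mem_support_iff, Nat.support_factorization]
  omega

lemma div_totient_le {n : ℕ} (hn : 166000 ≤ n.primeFactors.card) :
    (n : ℝ) / (Nat.totient n : ℝ) ≤
      exp eulerMascheroniConstant * log (log n.divisors.card) +
        exp eulerMascheroniConstant * log (log (log n.divisors.card)) + 0.94 := by
  have hn0 : n ≠ 0 := by rintro rfl; simp at hn
  obtain ⟨l, hl, hk⟩ := exists_log_param hn
  have l0 : 0 < l := by linarith
  have hS := sum_eulerLog_bound (fun p hp => Nat.prime_of_mem_primeFactors hp) hl hk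
  obtain ⟨h1, h2⟩ := final_ineq hl hk
  have hτ : (n.primeFactors.card : ℝ) * log 2 ≤ log n.divisors.card := by
    rw [← log_pow]
    exact log_le_log (by positivity) (by exact_mod_cast two_pow_card_le_card_divisors hn0)
  have hA0 := log_pos h1
  have hA : log (n.primeFactors.card * log 2) ≤ log (log n.divisors.card) :=
    log_le_log (by linarith) hτ
  have hlA := log_le_log hA0 hA
  rw [div_totient_eq hn0]
  calc exp (∑ p ∈ n.primeFactors, eulerLog p)
      ≤ exp (eulerMascheroniConstant + log l + 0.0096 / l) := exp_le_exp.2 hS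
    _ = exp eulerMascheroniConstant * (l * exp (0.0096 / l)) := by
        rw [exp_add, exp_add, exp_log l0, mul_assoc]
    _ ≤ exp eulerMascheroniConstant * (log (log n.divisors.card) +
          log (log (log n.divisors.card)) + 0.94 * exp (-eulerMascheroniConstant)) := by
        gcongr
        linarith
    _ = _ := by
        have : exp eulerMascheroniConstant * exp (-eulerMascheroniConstant) = 1 := by
          rw [← exp_add]; simp
        linear_combination 0.94 * this

end TotientBound

/-- Let `n` satisfy `ω(n) ≥ 166000`. Then
`σ(n)/n ≤ n/φ(n) ≤ e^γ·log(log τ(n)) + e^γ·log(log(log τ(n))) + 0.94`. -/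
theorem stmt_19 (n : ℕ) (hn : 166000 ≤ n.primeFactors.card) :
    (sigmaFn n : ℝ) / (n : ℝ) ≤ (n : ℝ) / (Nat.totient n : ℝ) ∧
    (n : ℝ) / (Nat.totient n : ℝ) ≤
      Real.exp Real.eulerMascheroniConstant * Real.log (Real.log (tauFn n)) +
        Real.exp Real.eulerMascheroniConstant *
          Real.log (Real.log (Real.log (tauFn n))) + 0.94 := by
  have hn0 : n ≠ 0 := by rintro rfl; simp at hn
  refine ⟨?_, TotientBound.div_totient_le hn⟩
  rw [div_le_div_iff₀ (by positivity)
    (by exact_mod_cast Nat.totient_pos.2 (Nat.pos_of_ne_zero hn0))]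
  exact_mod_cast TotientBound.sum_divisors_mul_totient_le hn0
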